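/- arXiv:2405.05577 — 3 statements merged into one kernel-verified Lean document; each statement's English description precedes it below -/
import Mathlib

section
/- Let n ≥ 1 and 0 < α, s < 1. For any complex-valued Schwartz function φ on ℝⁿ×ℝ, the function (x,t) ↦ D_right^α φ(x,t) + (-Δ)^s φ(x,t) is integrable on ℝⁿ×ℝ, and for every (ξ,ρ) ∈ ℝⁿ×ℝ one has 𝓕[D_right^α φ + (-Δ)^s φ](ξ,ρ) = ((−iρ)^α + |ξ|^{2s})·𝓕φ(ξ,ρ), where (−iρ)^α denotes the principal branch of the complex power (interpreted as 0 when ρ = 0). -/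
open MeasureTheory Set

/-- The normalization constant `C_α = 1/|Γ(-α)|` for the Marchaud fractional derivative. -/
noncomputable def Calpha (α : ℝ) : ℝ := 1 / |Real.Gamma (-α)|

/-- The normalization constant `C_{n,s} = 4^s Γ(n/2+s)/(π^{n/2}|Γ(-s)|)` for the
fractional Laplacian. -/
noncomputable def Cns (n : ℕ) (s : ℝ) : ℝ :=
  (4 : ℝ) ^ s * Real.Gamma ((n : ℝ) / 2 + s) / (Real.pi ^ ((n : ℝ) / 2) * |Real.Gamma (-s)|)

/-- The right Marchaud fractional derivative of order `α` in the time variable, for a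
complex-valued function: `D_right^α φ(x,t) = C_α ∫_t^∞ (φ(x,t) - φ(x,τ))/(τ-t)^{1+α} dτ`. -/
noncomputable def marchaudRightC {n : ℕ} (α : ℝ) (φ : EuclideanSpace ℝ (Fin n) × ℝ → ℂ)
    (x : EuclideanSpace ℝ (Fin n)) (t : ℝ) : ℂ :=
  (Calpha α : ℂ) * ∫ τ in Ioi t, (φ (x, t) - φ (x, τ)) / (((τ - t) ^ (1 + α) : ℝ) : ℂ)

/-- The left Marchaud fractional derivative of order `α` in the time variable, for a
complex-valued function: `D_left^α φ(x,t) = C_α ∫_{-∞}^t (φ(x,t) - φ(x,τ))/(t-τ)^{1+α} dτ`. -/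
noncomputable def marchaudLeftC {n : ℕ} (α : ℝ) (φ : EuclideanSpace ℝ (Fin n) × ℝ → ℂ)
    (x : EuclideanSpace ℝ (Fin n)) (t : ℝ) : ℂ :=
  (Calpha α : ℂ) * ∫ τ in Iio t, (φ (x, t) - φ (x, τ)) / (((t - τ) ^ (1 + α) : ℝ) : ℂ)

/-- The fractional Laplacian `(-Δ)^s` acting in the space variable, for a complex-valued
function: `(-Δ)^s φ(x,t) = (C_{n,s}/2) ∫_{ℝⁿ} (2φ(x,t) - φ(x+y,t) - φ(x-y,t))/|y|^{n+2s} dy`. -/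
noncomputable def fracLapC {n : ℕ} (s : ℝ) (φ : EuclideanSpace ℝ (Fin n) × ℝ → ℂ)
    (x : EuclideanSpace ℝ (Fin n)) (t : ℝ) : ℂ :=
  ((Cns n s / 2 : ℝ) : ℂ) * ∫ y : EuclideanSpace ℝ (Fin n),
    (2 * φ (x, t) - φ (x + y, t) - φ (x - y, t)) / ((‖y‖ ^ ((n : ℝ) + 2 * s) : ℝ) : ℂ)

open RealInnerProductSpace in
/-- The Fourier transform
`𝓕f(ξ,ρ) = (2π)^{-(n+1)/2} ∫_ℝ ∫_{ℝⁿ} e^{-i(ξ·x + ρt)} f(x,t) dx dt`. -/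
noncomputable def fourierTrans {n : ℕ} (f : EuclideanSpace ℝ (Fin n) × ℝ → ℂ)
    (ξ : EuclideanSpace ℝ (Fin n)) (ρ : ℝ) : ℂ :=
  (((2 * Real.pi) ^ (-(((n : ℝ) + 1) / 2)) : ℝ) : ℂ) *
    ∫ p : EuclideanSpace ℝ (Fin n) × ℝ,
      Complex.exp (-Complex.I * ((⟪ξ, p.1⟫ : ℝ) + ρ * p.2)) * f p

open Filter Topology

theorem integrableOn_min_mul_rpow {k β : ℝ} (hβ : 0 < β) (hk : β < k) (A B : ℝ)
    (hA : 0 ≤ A) (hB : 0 ≤ B) :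
    IntegrableOn (fun r : ℝ => min A (B * r ^ k) * r ^ (-1 - β)) (Ioi 0) := by
  have hm : Measurable (fun r : ℝ => min A (B * r ^ k) * r ^ (-1 - β)) := by fun_prop
  rw [← Ioc_union_Ioi_eq_Ioi (zero_le_one' ℝ)]
  refine IntegrableOn.union ?_ ?_
  · have h : IntegrableOn (fun r : ℝ => B * r ^ (k - 1 - β)) (Ioc 0 1) :=
      (((intervalIntegral.intervalIntegrable_rpow' (a := 0) (b := 1)
        (by linarith : -1 < k - 1 - β)).1).const_mul B)
    refine h.mono' hm.aestronglyMeasurable ?_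
    filter_upwards [ae_restrict_mem measurableSet_Ioc] with r hr
    have hr0 : 0 < r := hr.1
    rw [Real.norm_of_nonneg (by positivity)]
    calc _ ≤ B * r ^ k * r ^ (-1 - β) := by gcongr; exact min_le_right _ _
      _ = _ := by rw [mul_assoc, ← Real.rpow_add hr0]; ring_nf
  · refine ((integrableOn_Ioi_rpow_of_lt (by linarith : -1 - β < -1) one_pos).const_mul A).mono'
      hm.aestronglyMeasurable ?_
    filter_upwards [ae_restrict_mem measurableSet_Ioi] with r hr
    have hr0 : 0 < r := zero_lt_one.trans hr
    rw [Real.norm_of_nonneg (by positivity)]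
    gcongr
    exact min_le_left _ _

theorem norm_one_sub_cexp_le {z : ℂ} (hz : z.re ≤ 0) : ‖1 - Complex.exp z‖ ≤ min 2 (2 * ‖z‖) := by
  have h2 : ‖1 - Complex.exp z‖ ≤ 2 := by
    refine (norm_sub_le _ _).trans ?_
    rw [norm_one, Complex.norm_exp]
    linarith [Real.exp_le_one_iff.2 hz]
  refine le_min h2 ?_
  rcases le_total ‖z‖ 1 with h | h
  · rw [norm_sub_rev]; exact Complex.norm_exp_sub_one_le h
  · linarith

theorem norm_one_sub_cexp_mul_rpow_le {α : ℝ} {z : ℂ} (hz : 0 ≤ z.re) {r : ℝ} (hr : 0 < r) :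
    ‖(1 - Complex.exp (-z * r)) * ((r ^ (-1 - α) : ℝ) : ℂ)‖ ≤
      min 2 (2 * ‖z‖ * r ^ (1 : ℝ)) * r ^ (-1 - α) := by
  rw [norm_mul, Complex.norm_real, Real.norm_of_nonneg (by positivity)]
  gcongr
  refine (norm_one_sub_cexp_le (z := -z * r) ?_).trans_eq ?_
  · simp; positivity
  · simp [abs_of_pos hr, mul_assoc]

theorem integrableOn_one_sub_cexp_mul_rpow {α : ℝ} (h0 : 0 < α) (h1 : α < 1) {z : ℂ}
    (hz : 0 ≤ z.re) :
    IntegrableOn (fun r : ℝ => (1 - Complex.exp (-z * r)) * ((r ^ (-1 - α) : ℝ) : ℂ)) (Ioi 0) := by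
  refine (integrableOn_min_mul_rpow h0 h1 2 (2 * ‖z‖) (by norm_num) (by positivity)).mono'
    (by fun_prop) ?_
  filter_upwards [ae_restrict_mem measurableSet_Ioi] with r hr
  exact norm_one_sub_cexp_mul_rpow_le hz hr

theorem integral_one_sub_cexp_mul_rpow_of_pos {α : ℝ} (h0 : 0 < α) (h1 : α < 1) {x : ℝ}
    (hx : 0 < x) :
    ∫ r in Ioi (0 : ℝ), (1 - Complex.exp (-(x : ℂ) * r)) * ((r ^ (-1 - α) : ℝ) : ℂ) =
      ((Real.Gamma (1 - α) / α : ℝ) : ℂ) * (x : ℂ) ^ (α : ℂ) := by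
  have hz : 0 < (x : ℂ).re := by simpa
  have hz0 : (x : ℂ) ≠ 0 := by exact_mod_cast hx.ne'
  have hα : (α : ℂ) ≠ 0 := by exact_mod_cast h0.ne'
  have hint := Complex.integral_cpow_mul_exp_neg_mul_Ioi (a := ((1 - α : ℝ) : ℂ)) (r := x)
    (by simp; linarith) hx
  have hne : (1 / (x : ℂ)) ^ ((1 - α : ℝ) : ℂ) * Complex.Gamma ((1 - α : ℝ) : ℂ) ≠ 0 := by
    refine mul_ne_zero ?_ (Complex.Gamma_ne_zero_of_re_pos (by simp; linarith))
    simp [Complex.cpow_eq_zero_iff, hz0]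
  have hInt := Integrable.of_integral_ne_zero (hint ▸ hne)
  have hcongr : ∀ r ∈ Ioi (0 : ℝ), (x : ℂ) * Complex.exp (-(x : ℂ) * r) * -(((r ^ (-α) / α : ℝ)) : ℂ) =
      (-(x : ℂ) / α) * ((r : ℂ) ^ (((1 - α : ℝ) : ℂ) - 1) * Complex.exp (-((x : ℂ) * r))) := by
    intro r hr
    have : ((r ^ (-α) : ℝ) : ℂ) = (r : ℂ) ^ (((1 - α : ℝ) : ℂ) - 1) := by
      rw [Complex.ofReal_cpow (le_of_lt hr)]; congr 1; push_cast; ring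
    rw [Complex.ofReal_div, this, neg_mul]
    field_simp
  have hsmall : Tendsto (fun r : ℝ => ‖(1 - Complex.exp (-(x : ℂ) * r)) * -((r ^ (-α) / α : ℝ) : ℂ)‖)
      (𝓝[>] 0) (𝓝 0) := by
    have hl : Tendsto (fun r : ℝ => 2 * ‖(x : ℂ)‖ / α * r ^ (1 - α)) (𝓝[>] 0) (𝓝 0) := by
      have := ((Real.continuousAt_rpow_const 0 (1 - α) (Or.inr (by linarith))).tendsto).const_mul
        (2 * ‖(x : ℂ)‖ / α)
      rw [Real.zero_rpow (by linarith), mul_zero] at this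
      exact this.mono_left nhdsWithin_le_nhds
    refine squeeze_zero' (Eventually.of_forall fun _ => norm_nonneg _) ?_ hl
    filter_upwards [self_mem_nhdsWithin] with r hr
    have hr : 0 < r := hr
    rw [norm_mul, norm_neg, Complex.norm_real, Real.norm_of_nonneg (by positivity)]
    have h := (norm_one_sub_cexp_le (z := -(x : ℂ) * r) (by simp; positivity)).trans (min_le_right _ _)
    calc _ ≤ (2 * ‖-(x : ℂ) * r‖) * (r ^ (-α) / α) := by gcongr
      _ = _ := by
        rw [sub_eq_add_neg, Real.rpow_add hr, Real.rpow_one]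
        simp [abs_of_pos hr]; ring
  have hlarge : Tendsto (fun r : ℝ => ‖(1 - Complex.exp (-(x : ℂ) * r)) * -((r ^ (-α) / α : ℝ) : ℂ)‖)
      atTop (𝓝 0) := by
    have hl : Tendsto (fun r : ℝ => 2 / α * r ^ (-α)) atTop (𝓝 0) := by
      simpa using (tendsto_rpow_neg_atTop h0).const_mul (2 / α)
    refine squeeze_zero' (Eventually.of_forall fun _ => norm_nonneg _) ?_ hl
    filter_upwards [Ioi_mem_atTop 0] with r hr
    have hr : 0 < r := hr
    rw [norm_mul, norm_neg, Complex.norm_real, Real.norm_of_nonneg (by positivity)]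
    have h := (norm_one_sub_cexp_le (z := -(x : ℂ) * r) (by simp; positivity)).trans (min_le_left _ _)
    calc _ ≤ 2 * (r ^ (-α) / α) := by gcongr
      _ = _ := by ring
  have key := integral_Ioi_mul_deriv_eq_deriv_mul (a := 0) (a' := 0) (b' := 0)
    (u := fun r : ℝ => 1 - Complex.exp (-(x : ℂ) * r)) (u' := fun r => (x : ℂ) * Complex.exp (-(x : ℂ) * r))
    (v := fun r => -((r ^ (-α) / α : ℝ) : ℂ)) (v' := fun r => ((r ^ (-1 - α) : ℝ) : ℂ))
    ?_ ?_ (integrableOn_one_sub_cexp_mul_rpow h0 h1 hz.le) ?_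
    (tendsto_zero_iff_norm_tendsto_zero.2 hsmall) (tendsto_zero_iff_norm_tendsto_zero.2 hlarge)
  · rw [key, setIntegral_congr_fun measurableSet_Ioi hcongr, integral_const_mul, hint,
      Complex.Gamma_ofReal, one_div, Complex.inv_cpow _ _ ?_, ← Complex.cpow_neg]
    · have : (x : ℂ) ^ (α : ℂ) = (x : ℂ) * (x : ℂ) ^ (-((1 - α : ℝ) : ℂ)) := by
        conv_lhs => rw [show (α : ℂ) = 1 + -((1 - α : ℝ) : ℂ) by push_cast; ring]
        rw [Complex.cpow_add _ _ hz0, Complex.cpow_one]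
      rw [this]
      push_cast
      field_simp
      ring
    · intro h
      have := Complex.abs_arg_lt_pi_div_two_iff.2 (Or.inl hz)
      rw [h, abs_of_pos Real.pi_pos] at this
      linarith [Real.pi_pos]
  · intro r _
    have h1 : HasDerivAt (fun r : ℝ => -(x : ℂ) * (r : ℂ)) (-(x : ℂ) * 1) r :=
      (Complex.ofRealCLM.hasDerivAt (x := r)).const_mul (-(x : ℂ))
    exact (h1.cexp.const_sub 1).congr_deriv (by ring)
  · intro r hr
    have h1 := ((Real.hasDerivAt_rpow_const (x := r) (p := -α) (Or.inl (ne_of_gt hr))).div_const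
      α).ofReal_comp.neg
    refine h1.congr_deriv ?_
    rw [show -α - 1 = -1 - α by ring]
    push_cast
    field_simp
  · exact (hInt.const_mul (-(x : ℂ) / α)).congr
      ((ae_restrict_mem measurableSet_Ioi).mono fun r hr => (hcongr r hr).symm)

theorem differentiableAt_integral_one_sub_cexp_mul_rpow {α : ℝ} (h0 : 0 < α) (h1 : α < 1) {z : ℂ}
    (hz : 0 < z.re) :
    DifferentiableAt ℂ (fun z : ℂ =>
      ∫ r in Ioi (0 : ℝ), (1 - Complex.exp (-z * r)) * ((r ^ (-1 - α) : ℝ) : ℂ)) z := by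
  have hs : {w : ℂ | z.re / 2 < w.re} ∈ 𝓝 z :=
    (isOpen_lt continuous_const Complex.continuous_re).mem_nhds (by simp [hz])
  refine (hasDerivAt_integral_of_dominated_loc_of_deriv_le
    (μ := volume.restrict (Ioi 0))
    (F := fun w r => (1 - Complex.exp (-w * r)) * ((r ^ (-1 - α) : ℝ) : ℂ))
    (F' := fun w r => (r : ℂ) * Complex.exp (-w * r) * ((r ^ (-1 - α) : ℝ) : ℂ))
    (bound := fun r => r ^ (-α) * Real.exp (-(z.re / 2) * r ^ (1 : ℝ))) hs
    (Eventually.of_forall fun w => by fun_prop)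
    (integrableOn_one_sub_cexp_mul_rpow h0 h1 hz.le) (by fun_prop) ?_
    (integrableOn_rpow_mul_exp_neg_mul_rpow (by linarith) one_pos (by linarith)) ?_).2.differentiableAt
  · filter_upwards [ae_restrict_mem measurableSet_Ioi] with r hr w hw
    have hr : 0 < r := hr
    have hw : z.re / 2 < w.re := hw
    rw [norm_mul, norm_mul, Complex.norm_real, Complex.norm_real, Complex.norm_exp,
      Real.norm_of_nonneg hr.le, Real.norm_of_nonneg (by positivity), Real.rpow_one]
    have hr' : r ^ (-α) = r * r ^ (-1 - α) := by
      rw [← Real.rpow_one_add' hr.le (by linarith)]; ring_nf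
    rw [hr', mul_right_comm]
    gcongr
    simp
    gcongr
  · refine Eventually.of_forall fun r w _ => ?_
    refine (((((hasDerivAt_id w).neg.mul_const (r : ℂ)).cexp).const_sub 1).mul_const
      ((r ^ (-1 - α) : ℝ) : ℂ)).congr_deriv ?_
    simp only [id, Pi.neg_apply]
    ring

theorem integral_one_sub_cexp_mul_rpow_of_re_pos {α : ℝ} (h0 : 0 < α) (h1 : α < 1) {z : ℂ}
    (hz : 0 < z.re) :
    ∫ r in Ioi (0 : ℝ), (1 - Complex.exp (-z * r)) * ((r ^ (-1 - α) : ℝ) : ℂ) =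
      ((Real.Gamma (1 - α) / α : ℝ) : ℂ) * z ^ (α : ℂ) := by
  have hopen : IsOpen {w : ℂ | 0 < w.re} := isOpen_lt continuous_const Complex.continuous_re
  refine AnalyticOnNhd.eqOn_of_preconnected_of_frequently_eq (𝕜 := ℂ) (U := {w : ℂ | 0 < w.re})
    (z₀ := 1) (f := fun z : ℂ =>
      ∫ r in Ioi (0 : ℝ), (1 - Complex.exp (-z * r)) * ((r ^ (-1 - α) : ℝ) : ℂ))
    (g := fun z : ℂ => ((Real.Gamma (1 - α) / α : ℝ) : ℂ) * z ^ (α : ℂ))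
    (DifferentiableOn.analyticOnNhd (fun w hw =>
      (differentiableAt_integral_one_sub_cexp_mul_rpow h0 h1 hw).differentiableWithinAt) hopen)
    (DifferentiableOn.analyticOnNhd (fun w hw => ?_) hopen)
    (convex_halfSpace_re_gt 0).isPreconnected (by simp) ?_ hz
  · exact ((differentiableAt_id.cpow_const (Or.inl hw)).const_mul _).differentiableWithinAt
  · have ht : Tendsto (fun x : ℝ => (x : ℂ)) (𝓝[>] 1) (𝓝[≠] 1) := by
      refine tendsto_nhdsWithin_iff.2 ⟨?_, ?_⟩
      · exact (Complex.continuous_ofReal.tendsto' 1 1 (by simp)).mono_left nhdsWithin_le_nhds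
      · filter_upwards [self_mem_nhdsWithin] with x hx
        simpa using (ne_of_gt hx : x ≠ 1)
    refine ht.frequently (Eventually.frequently ?_)
    filter_upwards [self_mem_nhdsWithin] with x hx
    exact integral_one_sub_cexp_mul_rpow_of_pos h0 h1 (zero_lt_one.trans hx)

theorem integral_one_sub_cexp_mul_rpow {α : ℝ} (h0 : 0 < α) (h1 : α < 1) {z : ℂ}
    (hz : 0 ≤ z.re) :
    ∫ r in Ioi (0 : ℝ), (1 - Complex.exp (-z * r)) * ((r ^ (-1 - α) : ℝ) : ℂ) =
      ((Real.Gamma (1 - α) / α : ℝ) : ℂ) * z ^ (α : ℂ) := by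
  rcases eq_or_ne z 0 with rfl | hz0
  · simp [h0.ne']
  have hw : Tendsto (fun ε : ℝ => z + ε) (𝓝[>] 0) (𝓝 z) := by
    have : Continuous fun ε : ℝ => z + ε := by fun_prop
    simpa using (this.tendsto 0).mono_left nhdsWithin_le_nhds
  have hL : Tendsto (fun ε : ℝ => ∫ r in Ioi (0 : ℝ),
      (1 - Complex.exp (-(z + ε) * r)) * ((r ^ (-1 - α) : ℝ) : ℂ)) (𝓝[>] 0)
      (𝓝 (∫ r in Ioi (0 : ℝ), (1 - Complex.exp (-z * r)) * ((r ^ (-1 - α) : ℝ) : ℂ))) := by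
    refine tendsto_integral_filter_of_dominated_convergence
      (fun r => min 2 (2 * (‖z‖ + 1) * r ^ (1 : ℝ)) * r ^ (-1 - α))
      (Eventually.of_forall fun ε => by fun_prop) ?_
      (integrableOn_min_mul_rpow h0 h1 2 (2 * (‖z‖ + 1)) (by norm_num) (by positivity)) ?_
    · filter_upwards [Ioo_mem_nhdsGT one_pos] with ε hε
      filter_upwards [ae_restrict_mem measurableSet_Ioi] with r hr
      have hr : 0 < r := hr
      refine (norm_one_sub_cexp_mul_rpow_le (by simp; linarith [hε.1]) hr).trans ?_
      gcongr
      refine (norm_add_le _ _).trans ?_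
      rw [Complex.norm_real, Real.norm_of_nonneg hε.1.le]
      linarith [hε.2]
    · refine Eventually.of_forall fun r => ?_
      have : Continuous fun w : ℂ => (1 - Complex.exp (-w * r)) * ((r ^ (-1 - α) : ℝ) : ℂ) := by
        fun_prop
      exact (this.tendsto z).comp hw
  have hs : z ∈ Complex.slitPlane := by
    rcases hz.lt_or_eq with h | h
    · exact Or.inl h
    · exact Or.inr fun h' => hz0 (Complex.ext h.symm h')
  have hR : Tendsto (fun ε : ℝ => ((Real.Gamma (1 - α) / α : ℝ) : ℂ) * (z + ε) ^ (α : ℂ)) (𝓝[>] 0)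
      (𝓝 (((Real.Gamma (1 - α) / α : ℝ) : ℂ) * z ^ (α : ℂ))) :=
    ((continuousAt_cpow_const hs).tendsto.comp hw).const_mul _
  refine tendsto_nhds_unique (hL.congr' ?_) hR
  filter_upwards [self_mem_nhdsWithin] with ε hε
  have hε : 0 < ε := hε
  exact integral_one_sub_cexp_mul_rpow_of_re_pos h0 h1 (by simp; linarith)

theorem abs_Gamma_neg {α : ℝ} (h0 : 0 < α) (h1 : α < 1) :
    |Real.Gamma (-α)| = Real.Gamma (1 - α) / α := by
  have h := Real.Gamma_add_one (s := -α) (by linarith)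
  have hp : 0 < Real.Gamma (1 - α) := Real.Gamma_pos_of_pos (by linarith)
  rw [show -α + 1 = 1 - α by ring] at h
  rw [show Real.Gamma (-α) = -(Real.Gamma (1 - α) / α) by rw [h]; field_simp, abs_neg,
    abs_of_pos (by positivity)]

theorem lintegral_enorm_sub_translate_le {V F : Type*} [NormedAddCommGroup V] [NormedSpace ℝ V]
    [MeasurableSpace V] [BorelSpace V] [SecondCountableTopology V] [NormedAddCommGroup F]
    [NormedSpace ℝ F] [CompleteSpace F] (μ : Measure V) [SFinite μ] [μ.IsAddRightInvariant]
    {f : V → F} (hf : ContDiff ℝ 1 f) (h : V) :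
    ∫⁻ p, ‖f (p + h) - f p‖ₑ ∂μ ≤ ‖h‖ₑ * ∫⁻ p, ‖fderiv ℝ f p‖ₑ ∂μ := by
  have hc : Continuous (fderiv ℝ f) := hf.continuous_fderiv one_ne_zero
  have hpt : ∀ p, ‖f (p + h) - f p‖ₑ ≤
      ∫⁻ θ in Ioc (0 : ℝ) 1, ‖h‖ₑ * ‖fderiv ℝ f (p + θ • h)‖ₑ := by
    intro p
    have hd : ∀ θ : ℝ, HasDerivAt (fun θ : ℝ => f (p + θ • h)) (fderiv ℝ f (p + θ • h) h) θ := by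
      intro θ
      have h1 : HasDerivAt (fun θ : ℝ => p + θ • h) h θ := by
        simpa using ((hasDerivAt_id θ).smul_const h).const_add p
      exact ((hf.differentiable one_ne_zero) (p + θ • h)).hasFDerivAt.comp_hasDerivAt θ h1
    have hint := intervalIntegral.integral_eq_sub_of_hasDerivAt (a := 0) (b := 1)
      (fun θ _ => hd θ) (Continuous.intervalIntegrable (by fun_prop) _ _)
    simp only [one_smul, zero_smul, add_zero] at hint
    rw [← hint, intervalIntegral.integral_of_le zero_le_one]
    refine (enorm_integral_le_lintegral_enorm _).trans (lintegral_mono fun θ => ?_)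
    rw [mul_comm]
    exact ContinuousLinearMap.le_opENorm _ _
  calc ∫⁻ p, ‖f (p + h) - f p‖ₑ ∂μ
      ≤ ∫⁻ p, (∫⁻ θ in Ioc (0 : ℝ) 1, ‖h‖ₑ * ‖fderiv ℝ f (p + θ • h)‖ₑ) ∂μ := lintegral_mono hpt
    _ = ∫⁻ θ in Ioc (0 : ℝ) 1, ∫⁻ p, ‖h‖ₑ * ‖fderiv ℝ f (p + θ • h)‖ₑ ∂μ := by
        refine lintegral_lintegral_swap (Measurable.aemeasurable ?_)
        have : Continuous fun q : V × ℝ => ‖fderiv ℝ f (q.1 + q.2 • h)‖ₑ := by fun_prop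
        exact this.measurable.const_mul _
    _ = ∫⁻ θ in Ioc (0 : ℝ) 1, ‖h‖ₑ * ∫⁻ p, ‖fderiv ℝ f p‖ₑ ∂μ := by
        refine lintegral_congr fun θ => ?_
        rw [lintegral_const_mul' _ _ enorm_ne_top,
          lintegral_add_right_eq_self (fun p => ‖fderiv ℝ f p‖ₑ) (θ • h)]
    _ = ‖h‖ₑ * ∫⁻ p, ‖fderiv ℝ f p‖ₑ ∂μ := by simp

theorem lintegral_enorm_second_difference_le {V F : Type*} [NormedAddCommGroup V]
    [NormedSpace ℝ V] [MeasurableSpace V] [BorelSpace V] [SecondCountableTopology V]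
    [NormedAddCommGroup F] [NormedSpace ℝ F] [CompleteSpace F] (μ : Measure V) [SFinite μ]
    [μ.IsAddRightInvariant] {f : V → F} (hf : ContDiff ℝ 2 f) (h : V) :
    ∫⁻ p, ‖(f (p + h + h) - f (p + h)) - (f (p + h) - f p)‖ₑ ∂μ ≤
      ‖h‖ₑ * (‖h‖ₑ * ∫⁻ p, ‖fderiv ℝ (fderiv ℝ f) p‖ₑ ∂μ) := by
  have hd : Differentiable ℝ f := hf.differentiable two_ne_zero
  have hg : ContDiff ℝ 1 fun p => f (p + h) - f p :=
    ((hf.of_le one_le_two).comp (contDiff_id.add contDiff_const)).sub (hf.of_le one_le_two)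
  refine (lintegral_enorm_sub_translate_le μ hg h).trans ?_
  gcongr
  have hfd : ContDiff ℝ 1 (fderiv ℝ f) := hf.fderiv_right (by norm_num)
  refine le_of_eq_of_le ?_ (lintegral_enorm_sub_translate_le μ hfd h)
  refine lintegral_congr fun p => ?_
  rw [fderiv_fun_sub (f := fun p => f (p + h)) (by fun_prop) (hd p), fderiv_comp_add_right]

theorem integrable_uncurry_of_lintegral_enorm_le {V Y : Type*} [MeasurableSpace V]
    [MeasurableSpace Y] {ν : Measure V} {μ : Measure Y} [SFinite ν] [SFinite μ] {G : V → Y → ℂ}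
    (hG : AEStronglyMeasurable (Function.uncurry G) (ν.prod μ)) {b : Y → ℝ} (hb : Integrable b μ)
    (hle : ∀ᵐ y ∂μ, ∫⁻ p, ‖G p y‖ₑ ∂ν ≤ ENNReal.ofReal (b y)) :
    Integrable (Function.uncurry G) (ν.prod μ) := by
  refine ⟨hG, ?_⟩
  rw [HasFiniteIntegral, lintegral_prod_symm _ hG.enorm]
  refine (lintegral_mono_ae hle).trans_lt ?_
  refine (lintegral_mono fun y => ?_).trans_lt hb.2
  exact Real.ofReal_le_enorm _

theorem integrableOn_one_sub_exp_mul_rpow {s : ℝ} (h0 : 0 < s) (h1 : s < 1) {c : ℝ} (hc : 0 ≤ c) :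
    IntegrableOn (fun r : ℝ => (1 - Real.exp (-c * r)) * r ^ (-1 - s)) (Ioi 0) := by
  have h := (integrableOn_one_sub_cexp_mul_rpow h0 h1 (z := c) (by simpa)).re
  refine h.congr (Eventually.of_forall fun r => ?_)
  simp only [RCLike.re_to_complex]
  rw [← Complex.ofReal_re ((1 - Real.exp (-c * r)) * r ^ (-1 - s))]
  push_cast
  rfl

theorem integral_one_sub_exp_mul_rpow {s : ℝ} (h0 : 0 < s) (h1 : s < 1) {c : ℝ} (hc : 0 ≤ c) :
    ∫ r in Ioi (0 : ℝ), (1 - Real.exp (-c * r)) * r ^ (-1 - s) =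
      Real.Gamma (1 - s) / s * c ^ s := by
  have h := integral_one_sub_cexp_mul_rpow h0 h1 (z := c) (by simpa)
  rw [← Complex.ofReal_cpow hc] at h
  apply Complex.ofReal_injective
  rw [Complex.ofReal_mul, ← h, ← integral_complex_ofReal]
  push_cast
  rfl

theorem rpow_neg_one_change_of_variables {s c r : ℝ} (hr : 0 < r) :
    (|(-1 : ℝ)| * r ^ ((-1 : ℝ) - 1)) • ((r ^ (-1 : ℝ)) ^ (s - 1) *
      (1 - Real.exp (-c / r ^ (-1 : ℝ)))) = (1 - Real.exp (-c * r)) * r ^ (-1 - s) := by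
  rw [← Real.rpow_mul hr.le, Real.rpow_neg_one, div_inv_eq_mul, smul_eq_mul, abs_neg, abs_one,
    one_mul, ← mul_assoc, ← Real.rpow_add hr, mul_comm]
  ring_nf

theorem integrableOn_rpow_mul_one_sub_exp_div {s : ℝ} (h0 : 0 < s) (h1 : s < 1) {c : ℝ}
    (hc : 0 ≤ c) :
    IntegrableOn (fun t : ℝ => t ^ (s - 1) * (1 - Real.exp (-c / t))) (Ioi 0) := by
  rw [← integrableOn_Ioi_comp_rpow_iff _ (neg_ne_zero.2 one_ne_zero : (-1 : ℝ) ≠ 0)]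
  exact (integrableOn_one_sub_exp_mul_rpow h0 h1 hc).congr_fun
    (fun r hr => (rpow_neg_one_change_of_variables hr).symm) measurableSet_Ioi

theorem integral_rpow_mul_one_sub_exp_div {s : ℝ} (h0 : 0 < s) (h1 : s < 1) {c : ℝ}
    (hc : 0 ≤ c) :
    ∫ t in Ioi (0 : ℝ), t ^ (s - 1) * (1 - Real.exp (-c / t)) =
      Real.Gamma (1 - s) / s * c ^ s := by
  rw [← integral_comp_rpow_Ioi _ (neg_ne_zero.2 one_ne_zero : (-1 : ℝ) ≠ 0),
    ← integral_one_sub_exp_mul_rpow h0 h1 hc]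
  exact setIntegral_congr_fun measurableSet_Ioi fun r hr => rpow_neg_one_change_of_variables hr

theorem one_sub_cos_mul_exp_eq_re {E : Type*} [NormedAddCommGroup E] [InnerProductSpace ℝ E] (ξ y : E) (t : ℝ) :
    (1 - Real.cos (inner ℝ ξ y)) * Real.exp (-t * ‖y‖ ^ 2) =
      (Complex.exp (-(t : ℂ) * ‖y‖ ^ 2 + 0 * (inner ℝ ξ y : ℝ)) -
        Complex.exp (-(t : ℂ) * ‖y‖ ^ 2 + Complex.I * (inner ℝ ξ y : ℝ))).re := by
  have h : -(t : ℂ) * ‖y‖ ^ 2 = ((-t * ‖y‖ ^ 2 : ℝ) : ℂ) := by push_cast; ring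
  rw [h]
  generalize -t * ‖y‖ ^ 2 = a
  simp [Complex.exp_re]
  ring

section Gaussian

variable {E : Type*} [NormedAddCommGroup E] [InnerProductSpace ℝ E] [FiniteDimensional ℝ E]
  [MeasurableSpace E] [BorelSpace E]

theorem integrable_one_sub_cos_mul_exp (ξ : E) {t : ℝ} (ht : 0 < t) :
    Integrable fun y : E => (1 - Real.cos (inner ℝ ξ y)) * Real.exp (-t * ‖y‖ ^ 2) := by
  have ht' : 0 < (t : ℂ).re := by simpa
  simp_rw [one_sub_cos_mul_exp_eq_re]
  exact ((GaussianFourier.integrable_cexp_neg_mul_sq_norm_add ht' 0 ξ).sub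
    (GaussianFourier.integrable_cexp_neg_mul_sq_norm_add ht' Complex.I ξ)).re

theorem integral_one_sub_cos_mul_exp (ξ : E) {t : ℝ} (ht : 0 < t) :
    ∫ y : E, (1 - Real.cos (inner ℝ ξ y)) * Real.exp (-t * ‖y‖ ^ 2) =
      (Real.pi / t) ^ ((Module.finrank ℝ E : ℝ) / 2) *
        (1 - Real.exp (-(‖ξ‖ ^ 2 / 4) / t)) := by
  have ht' : 0 < (t : ℂ).re := by simpa
  have hi0 := GaussianFourier.integrable_cexp_neg_mul_sq_norm_add ht' 0 ξ
  have hi1 := GaussianFourier.integrable_cexp_neg_mul_sq_norm_add ht' Complex.I ξ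
  simp_rw [one_sub_cos_mul_exp_eq_re]
  have := integral_re (hi0.sub hi1)
  simp only [RCLike.re_to_complex, Pi.sub_apply] at this
  rw [this, integral_sub hi0 hi1, GaussianFourier.integral_cexp_neg_mul_sq_norm_add ht',
    GaussianFourier.integral_cexp_neg_mul_sq_norm_add ht', ← mul_sub,
    ← Complex.ofReal_re ((Real.pi / t) ^ ((Module.finrank ℝ E : ℝ) / 2) * _)]
  congr 1
  push_cast [Complex.ofReal_cpow (show 0 ≤ Real.pi / t by positivity)]
  congr 3
  · simp
  · rw [Complex.I_sq]; field_simp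

theorem integral_one_sub_cos_mul_norm_rpow (ξ : E) {s : ℝ} (h0 : 0 < s) (h1 : s < 1) :
    ∫ y : E, (1 - Real.cos (inner ℝ ξ y)) * ‖y‖ ^ (-((Module.finrank ℝ E : ℝ) + 2 * s)) =
      Real.pi ^ ((Module.finrank ℝ E : ℝ) / 2) / Real.Gamma ((Module.finrank ℝ E : ℝ) / 2 + s) *
        (Real.Gamma (1 - s) / s * (‖ξ‖ ^ 2 / 4) ^ s) := by
  set d : ℝ := (Module.finrank ℝ E : ℝ) with hd
  have hd0 : 0 ≤ d := Nat.cast_nonneg _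
  have ha : 0 < d / 2 + s := by positivity
  have hG : 0 < Real.Gamma (d / 2 + s) := Real.Gamma_pos_of_pos ha
  let H : E → ℝ → ℝ := fun y t =>
    (1 - Real.cos (inner ℝ ξ y)) * (t ^ (d / 2 + s - 1) * Real.exp (-(‖y‖ ^ 2 * t)))
  have hHt : ∀ y, ∫ t in Ioi (0 : ℝ), H y t =
      Real.Gamma (d / 2 + s) * ((1 - Real.cos (inner ℝ ξ y)) * ‖y‖ ^ (-(d + 2 * s))) := by
    intro y
    rcases eq_or_ne y 0 with rfl | hy
    · simp [H]
    have hy' : 0 < ‖y‖ := norm_pos_iff.2 hy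
    rw [integral_const_mul, Real.integral_rpow_mul_exp_neg_mul_Ioi ha (by positivity)]
    have : (1 / ‖y‖ ^ 2) ^ (d / 2 + s) = ‖y‖ ^ (-(d + 2 * s)) := by
      rw [one_div, ← Real.rpow_natCast, ← Real.rpow_neg hy'.le, ← Real.rpow_mul hy'.le]
      congr 1
      push_cast
      ring
    rw [this]
    ring
  have hHeq : ∀ t y, H y t = t ^ (d / 2 + s - 1) *
      ((1 - Real.cos (inner ℝ ξ y)) * Real.exp (-t * ‖y‖ ^ 2)) := by
    intro t y
    simp only [H]
    rw [show -(‖y‖ ^ 2 * t) = -t * ‖y‖ ^ 2 by ring]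
    ring
  have hHy : ∀ t ∈ Ioi (0 : ℝ), ∫ y, H y t =
      Real.pi ^ (d / 2) * (t ^ (s - 1) * (1 - Real.exp (-(‖ξ‖ ^ 2 / 4) / t))) := by
    intro t ht
    have ht : 0 < t := ht
    simp_rw [hHeq]
    rw [integral_const_mul, integral_one_sub_cos_mul_exp ξ ht, ← hd,
      Real.div_rpow Real.pi_pos.le ht.le,
      show d / 2 + s - 1 = (s - 1) + d / 2 by ring, Real.rpow_add ht]
    field_simp
  have hcos : ∀ y : E, 0 ≤ 1 - Real.cos (inner ℝ ξ y) := fun y => by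
    linarith [Real.cos_le_one (inner ℝ ξ y)]
  have hint : Integrable (Function.uncurry H) (volume.prod (volume.restrict (Ioi 0))) := by
    have hm : Measurable (Function.uncurry H) := by
      simp only [H, Function.uncurry_def]
      fun_prop
    rw [integrable_prod_iff' hm.aestronglyMeasurable]
    refine ⟨?_, ?_⟩
    · filter_upwards [ae_restrict_mem measurableSet_Ioi] with t ht
      simp only [Function.uncurry_apply_pair, hHeq]
      exact (integrable_one_sub_cos_mul_exp ξ ht).const_mul _
    · refine ((integrableOn_rpow_mul_one_sub_exp_div h0 h1
        (c := ‖ξ‖ ^ 2 / 4) (by positivity)).const_mul (Real.pi ^ (d / 2))).congr ?_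
      filter_upwards [ae_restrict_mem measurableSet_Ioi] with t ht
      rw [← hHy t ht]
      refine integral_congr_ae (Eventually.of_forall fun y => ?_)
      have ht : 0 < t := ht
      have := hcos y
      exact (Real.norm_of_nonneg (by simp only [H]; positivity)).symm
  have hswap := integral_integral_swap hint
  simp_rw [hHt] at hswap
  rw [setIntegral_congr_fun measurableSet_Ioi hHy, integral_const_mul, integral_const_mul,
    integral_rpow_mul_one_sub_exp_div h0 h1 (by positivity)] at hswap
  rw [div_mul_eq_mul_div, eq_div_iff hG.ne', mul_comm, hswap]

end Gaussian

namespace SchwartzMap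

variable {V : Type*} [NormedAddCommGroup V] [NormedSpace ℝ V] [FiniteDimensional ℝ V]
  [MeasurableSpace V] [BorelSpace V] (μ : Measure V) [μ.IsAddHaarMeasure]

theorem exists_lintegral_enorm_sub_translate_le (φ : SchwartzMap V ℂ) :
    ∃ A B : ℝ, 0 ≤ A ∧ 0 ≤ B ∧ ∀ h : V,
      ∫⁻ p, ‖φ p - φ (p + h)‖ₑ ∂μ ≤ ENNReal.ofReal (min A (B * ‖h‖)) := by
  have hφ : Integrable φ μ := φ.integrable
  have hφ' : Integrable (fderiv ℝ φ) μ := (fderivCLM ℝ V ℂ φ).integrable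
  refine ⟨∫ p, ‖φ p‖ ∂μ + ∫ p, ‖φ p‖ ∂μ, ∫ p, ‖fderiv ℝ φ p‖ ∂μ, by positivity, by positivity,
    fun h => ?_⟩
  rw [ENNReal.ofReal_min]
  refine le_min ?_ ?_
  · rw [ENNReal.ofReal_add (by positivity) (by positivity),
      ofReal_integral_norm_eq_lintegral_enorm hφ]
    calc _ ≤ ∫⁻ p, (‖φ p‖ₑ + ‖φ (p + h)‖ₑ) ∂μ := lintegral_mono fun p => enorm_sub_le
      _ = _ := by
        rw [lintegral_add_left' hφ.1.enorm, lintegral_add_right_eq_self (fun p => ‖φ p‖ₑ) h]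
  · rw [mul_comm, ENNReal.ofReal_mul (norm_nonneg _), ofReal_norm,
      ofReal_integral_norm_eq_lintegral_enorm hφ']
    refine le_of_eq_of_le ?_ (lintegral_enorm_sub_translate_le μ (φ.smooth 1) h)
    exact lintegral_congr fun p => enorm_sub_rev _ _

theorem exists_lintegral_enorm_second_difference_le (φ : SchwartzMap V ℂ) :
    ∃ A B : ℝ, 0 ≤ A ∧ 0 ≤ B ∧ ∀ h : V,
      ∫⁻ p, ‖2 * φ p - φ (p + h) - φ (p - h)‖ₑ ∂μ ≤
        ENNReal.ofReal (min A (B * ‖h‖ ^ (2 : ℝ))) := by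
  let ψ := fderivCLM ℝ V (V →L[ℝ] ℂ) (fderivCLM ℝ V ℂ φ)
  obtain ⟨A, B, hA, -, hAB⟩ := φ.exists_lintegral_enorm_sub_translate_le μ
  refine ⟨A + A, ∫ p, ‖ψ p‖ ∂μ, by positivity, by positivity, fun h => ?_⟩
  rw [ENNReal.ofReal_min]
  refine le_min ?_ ?_
  · rw [ENNReal.ofReal_add hA hA]
    have hm : Measurable fun p => ‖φ p - φ (p + h)‖ₑ := by
      have : Continuous fun p => φ p - φ (p + h) := by fun_prop
      exact this.measurable.enorm
    calc _ ≤ ∫⁻ p, (‖φ p - φ (p + h)‖ₑ + ‖φ p - φ (p + -h)‖ₑ) ∂μ := by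
          refine lintegral_mono fun p => ?_
          refine le_of_eq_of_le ?_ (enorm_add_le _ _)
          congr 1
          rw [← sub_eq_add_neg p h]
          ring
      _ ≤ _ := by
        rw [lintegral_add_left hm]
        exact add_le_add ((hAB h).trans (ENNReal.ofReal_le_ofReal (min_le_left _ _)))
          ((hAB (-h)).trans (ENNReal.ofReal_le_ofReal (min_le_left _ _)))
  · rw [mul_comm, Real.rpow_two, pow_two, mul_assoc, ENNReal.ofReal_mul (norm_nonneg _),
      ENNReal.ofReal_mul (norm_nonneg _), ofReal_norm,
      ofReal_integral_norm_eq_lintegral_enorm ψ.integrable,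
      ← lintegral_add_right_eq_self (fun p => ‖2 * φ p - φ (p + h) - φ (p - h)‖ₑ) h]
    refine le_of_eq_of_le ?_ (lintegral_enorm_second_difference_le μ (φ.smooth 2) h)
    refine lintegral_congr fun p => ?_
    rw [← enorm_neg, add_sub_cancel_right]
    congr 1
    ring

end SchwartzMap

section Multiplier

variable {n : ℕ}

local notation "𝔼" => EuclideanSpace ℝ (Fin n)

instance isAddHaarMeasure_volume_euclideanSpace_prod_real :
    (volume : Measure (𝔼 × ℝ)).IsAddHaarMeasure :=
  inferInstanceAs ((volume : Measure 𝔼).prod (volume : Measure ℝ)).IsAddHaarMeasure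

/-- The Fourier character `(x, t) ↦ exp (-i (ξ · x + ρ t))`. -/
noncomputable def fourierCharacter (ξ : 𝔼) (ρ : ℝ) (p : 𝔼 × ℝ) : ℂ :=
  Complex.exp (-Complex.I * ((inner ℝ ξ p.1 : ℝ) + ρ * p.2))

theorem continuous_fourierCharacter (ξ : 𝔼) (ρ : ℝ) : Continuous (fourierCharacter ξ ρ) := by
  unfold fourierCharacter
  fun_prop

theorem norm_fourierCharacter (ξ : 𝔼) (ρ : ℝ) (p : 𝔼 × ℝ) : ‖fourierCharacter ξ ρ p‖ = 1 := by
  simp [fourierCharacter, Complex.norm_exp]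

theorem fourierCharacter_add (ξ : 𝔼) (ρ : ℝ) (p q : 𝔼 × ℝ) :
    fourierCharacter ξ ρ (p + q) = fourierCharacter ξ ρ p * fourierCharacter ξ ρ q := by
  simp only [fourierCharacter, ← Complex.exp_add, Prod.fst_add, Prod.snd_add, inner_add_right]
  push_cast
  ring_nf

theorem integrable_fourierCharacter_mul (ξ : 𝔼) (ρ : ℝ) {f : 𝔼 × ℝ → ℂ} (hf : Integrable f) :
    Integrable fun p => fourierCharacter ξ ρ p * f p :=
  hf.bdd_mul (c := 1) (continuous_fourierCharacter ξ ρ).aestronglyMeasurable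
    (Eventually.of_forall fun p => (norm_fourierCharacter ξ ρ p).le)

theorem integral_fourierCharacter_mul_translate (ξ : 𝔼) (ρ : ℝ) (f : 𝔼 × ℝ → ℂ) (h : 𝔼 × ℝ) :
    ∫ p, fourierCharacter ξ ρ p * f (p + h) =
      fourierCharacter ξ ρ (-h) * ∫ p, fourierCharacter ξ ρ p * f p := by
  rw [← integral_add_right_eq_self (fun p => fourierCharacter ξ ρ p * f p) h, ← integral_const_mul]
  refine integral_congr_ae (Eventually.of_forall fun p => ?_)
  simp only
  rw [← mul_assoc, ← fourierCharacter_add, neg_add_cancel_comm_assoc]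

theorem integral_fourierCharacter_mul_integral {Y : Type*} [MeasurableSpace Y] {μ : Measure Y}
    [SFinite μ] (ξ : 𝔼) (ρ : ℝ) {G : 𝔼 × ℝ → Y → ℂ}
    (hG : Integrable (Function.uncurry G) (volume.prod μ)) {m : Y → ℂ} {I : ℂ}
    (hm : ∀ y, ∫ p, fourierCharacter ξ ρ p * G p y = m y * I) :
    ∫ p, fourierCharacter ξ ρ p * ∫ y, G p y ∂μ = (∫ y, m y ∂μ) * I := by
  have hint : Integrable (Function.uncurry fun p y => fourierCharacter ξ ρ p * G p y)
      (volume.prod μ) :=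
    hG.bdd_mul (c := 1)
      ((continuous_fourierCharacter ξ ρ).comp_aestronglyMeasurable
        measurable_fst.aestronglyMeasurable)
      (Eventually.of_forall fun p => (norm_fourierCharacter ξ ρ p.1).le)
  simp_rw [← integral_const_mul]
  rw [integral_integral_swap hint]
  simp_rw [hm, integral_mul_const]

/-! ### The Marchaud derivative -/

theorem marchaudRightC_eq_integral (α : ℝ) (f : 𝔼 × ℝ → ℂ) (p : 𝔼 × ℝ) :
    marchaudRightC α f p.1 p.2 = Calpha α * ∫ r in Ioi (0 : ℝ),
      (f p - f (p + (0, r))) * ((r ^ (-1 - α) : ℝ) : ℂ) := by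
  obtain ⟨x, t⟩ := p
  have h := (measurePreserving_add_left (volume : Measure ℝ) t).setIntegral_preimage_emb
    (measurableEmbedding_addLeft t)
    (fun τ => (f (x, t) - f (x, τ)) / (((τ - t) ^ (1 + α) : ℝ) : ℂ)) (Ioi t)
  rw [marchaudRightC, ← h, preimage_const_add_Ioi, sub_self]
  congr 1
  refine setIntegral_congr_fun measurableSet_Ioi fun r hr => ?_
  have hr : 0 < r := hr
  simp only [add_sub_cancel_left, Prod.mk_add_mk, add_zero]
  rw [show -1 - α = -(1 + α) by ring, Real.rpow_neg hr.le, Complex.ofReal_inv, div_eq_mul_inv]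

theorem integrable_uncurry_marchaud {α : ℝ} (h0 : 0 < α) (h1 : α < 1) (φ : SchwartzMap (𝔼 × ℝ) ℂ) :
    Integrable (Function.uncurry fun (p : 𝔼 × ℝ) (r : ℝ) =>
      (φ p - φ (p + (0, r))) * ((r ^ (-1 - α) : ℝ) : ℂ))
      (volume.prod (volume.restrict (Ioi 0))) := by
  obtain ⟨A, B, hA, hB, hAB⟩ := φ.exists_lintegral_enorm_sub_translate_le volume
  refine integrable_uncurry_of_lintegral_enorm_le ?_ (integrableOn_min_mul_rpow h0 h1 A B hA hB) ?_
  · have hc : Continuous fun q : (𝔼 × ℝ) × ℝ => φ q.1 - φ (q.1 + (0, q.2)) := by fun_prop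
    have hr : Measurable fun q : (𝔼 × ℝ) × ℝ => ((q.2 ^ (-1 - α) : ℝ) : ℂ) := by fun_prop
    exact (hc.measurable.mul hr).aestronglyMeasurable
  · filter_upwards [ae_restrict_mem measurableSet_Ioi] with r hr
    have hr : 0 < r := hr
    simp_rw [enorm_mul]
    rw [lintegral_mul_const' _ _ enorm_ne_top, ENNReal.ofReal_mul (by positivity),
      ← ofReal_norm ((r ^ (-1 - α) : ℝ) : ℂ), Complex.norm_real,
      Real.norm_of_nonneg (by positivity)]
    gcongr
    simpa [abs_of_pos hr, hr.le, -ENNReal.ofReal_min] using hAB (0, r)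

theorem integrable_marchaudRightC {α : ℝ} (h0 : 0 < α) (h1 : α < 1) (φ : SchwartzMap (𝔼 × ℝ) ℂ) :
    Integrable fun p : 𝔼 × ℝ => marchaudRightC α φ p.1 p.2 := by
  simp_rw [marchaudRightC_eq_integral]
  exact (integrable_uncurry_marchaud h0 h1 φ).integral_prod_left.const_mul _

theorem integral_fourierCharacter_mul_marchaudRightC {α : ℝ} (h0 : 0 < α) (h1 : α < 1)
    (φ : SchwartzMap (𝔼 × ℝ) ℂ) (ξ : 𝔼) (ρ : ℝ) :
    ∫ p, fourierCharacter ξ ρ p * marchaudRightC α φ p.1 p.2 =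
      (-(Complex.I * (ρ : ℂ))) ^ (α : ℂ) * ∫ p, fourierCharacter ξ ρ p * φ p := by
  have hφ : Integrable φ := φ.integrable
  simp_rw [marchaudRightC_eq_integral, mul_left_comm _ (Calpha α : ℂ)]
  rw [integral_const_mul, integral_fourierCharacter_mul_integral ξ ρ
    (integrable_uncurry_marchaud h0 h1 φ)
    (m := fun r => (1 - Complex.exp (-(-(Complex.I * (ρ : ℂ))) * r)) * ((r ^ (-1 - α) : ℝ) : ℂ))
    (I := ∫ p, fourierCharacter ξ ρ p * φ p), integral_one_sub_cexp_mul_rpow h0 h1 (by simp),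
    ← abs_Gamma_neg h0 h1, ← mul_assoc, ← mul_assoc, ← Complex.ofReal_mul]
  · have hG : |Real.Gamma (-α)| ≠ 0 := by
      rw [abs_Gamma_neg h0 h1]
      have : 0 < Real.Gamma (1 - α) := Real.Gamma_pos_of_pos (by linarith)
      positivity
    rw [Calpha, one_div, inv_mul_cancel₀ hG, Complex.ofReal_one, one_mul]
  · intro r
    simp_rw [← mul_assoc, mul_sub]
    rw [integral_mul_const, integral_sub (integrable_fourierCharacter_mul ξ ρ hφ)
      (integrable_fourierCharacter_mul ξ ρ (hφ.comp_add_right _)),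
      integral_fourierCharacter_mul_translate]
    have : fourierCharacter ξ ρ (-(0, r)) = Complex.exp (-(-(Complex.I * (ρ : ℂ))) * r) := by
      simp [fourierCharacter, mul_assoc]
    rw [this]
    ring

/-! ### The fractional Laplacian -/

theorem fracLapC_eq_integral (s : ℝ) (f : 𝔼 × ℝ → ℂ) (p : 𝔼 × ℝ) :
    fracLapC s f p.1 p.2 = ((Cns n s / 2 : ℝ) : ℂ) * ∫ y : 𝔼,
      (2 * f p - f (p + (y, 0)) - f (p - (y, 0))) *
        ((‖y‖ ^ (-((n : ℝ) + 2 * s)) : ℝ) : ℂ) := by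
  obtain ⟨x, t⟩ := p
  simp only [fracLapC, div_eq_mul_inv, Real.rpow_neg (norm_nonneg _), Complex.ofReal_inv,
    Prod.mk_add_mk, Prod.mk_sub_mk, add_zero, sub_zero]

theorem integrable_uncurry_fracLap (hn : 1 ≤ n) {s : ℝ} (h0 : 0 < s) (h1 : s < 1)
    (φ : SchwartzMap (𝔼 × ℝ) ℂ) :
    Integrable (Function.uncurry fun (p : 𝔼 × ℝ) (y : 𝔼) =>
      (2 * φ p - φ (p + (y, 0)) - φ (p - (y, 0))) *
        ((‖y‖ ^ (-((n : ℝ) + 2 * s)) : ℝ) : ℂ)) (volume.prod volume) := by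
  obtain ⟨A, B, hA, hB, hAB⟩ := φ.exists_lintegral_enorm_second_difference_le volume
  have : Nonempty (Fin n) := ⟨⟨0, hn⟩⟩
  have hb : Integrable fun y : 𝔼 =>
      min A (B * ‖y‖ ^ (2 : ℝ)) * ‖y‖ ^ (-((n : ℝ) + 2 * s)) := by
    rw [integrable_fun_norm_addHaar volume
      (f := fun r : ℝ => min A (B * r ^ (2 : ℝ)) * r ^ (-((n : ℝ) + 2 * s)))]
    refine (integrableOn_min_mul_rpow (k := 2) (β := 2 * s) (by linarith) (by linarith)
      A B hA hB).congr_fun (fun r hr => ?_) measurableSet_Ioi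
    have hr : 0 < r := hr
    have hpow : r ^ (n - 1) * r ^ (-((n : ℝ) + 2 * s)) = r ^ (-1 - 2 * s) := by
      rw [← Real.rpow_natCast, ← Real.rpow_add hr, Nat.cast_sub hn]
      congr 1
      push_cast
      ring
    simp only [finrank_euclideanSpace, Fintype.card_fin, smul_eq_mul]
    rw [mul_left_comm, hpow]
  refine integrable_uncurry_of_lintegral_enorm_le ?_ hb ?_
  · have hc : Continuous fun q : (𝔼 × ℝ) × 𝔼 =>
        2 * φ q.1 - φ (q.1 + (q.2, 0)) - φ (q.1 - (q.2, 0)) := by fun_prop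
    have hr : Measurable fun q : (𝔼 × ℝ) × 𝔼 =>
        ((‖q.2‖ ^ (-((n : ℝ) + 2 * s)) : ℝ) : ℂ) := by fun_prop
    exact (hc.measurable.mul hr).aestronglyMeasurable
  · refine Eventually.of_forall fun y => ?_
    simp_rw [enorm_mul]
    rw [lintegral_mul_const' _ _ enorm_ne_top, ENNReal.ofReal_mul (by positivity),
      ← ofReal_norm ((‖y‖ ^ (-((n : ℝ) + 2 * s)) : ℝ) : ℂ), Complex.norm_real,
      Real.norm_of_nonneg (by positivity)]
    gcongr
    simpa [-ENNReal.ofReal_min] using hAB (y, 0)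

theorem integrable_fracLapC (hn : 1 ≤ n) {s : ℝ} (h0 : 0 < s) (h1 : s < 1)
    (φ : SchwartzMap (𝔼 × ℝ) ℂ) : Integrable fun p : 𝔼 × ℝ => fracLapC s φ p.1 p.2 := by
  simp_rw [fracLapC_eq_integral]
  exact (integrable_uncurry_fracLap hn h0 h1 φ).integral_prod_left.const_mul _

theorem Cns_mul_integral_one_sub_cos {s : ℝ} (h0 : 0 < s) (h1 : s < 1) (ξ : 𝔼) :
    Cns n s * ∫ y : 𝔼, (1 - Real.cos (inner ℝ ξ y)) * ‖y‖ ^ (-((n : ℝ) + 2 * s)) =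
      ‖ξ‖ ^ (2 * s) := by
  have h := integral_one_sub_cos_mul_norm_rpow ξ h0 h1
  simp only [finrank_euclideanSpace, Fintype.card_fin] at h
  have hG1 : 0 < Real.Gamma (1 - s) := Real.Gamma_pos_of_pos (by linarith)
  have hG2 : 0 < Real.Gamma ((n : ℝ) / 2 + s) := Real.Gamma_pos_of_pos (by positivity)
  rw [h, Cns, abs_Gamma_neg h0 h1, Real.div_rpow (by positivity) (by norm_num),
    Real.rpow_mul (norm_nonneg _), Real.rpow_two]
  have : 0 < Real.pi ^ ((n : ℝ) / 2) := by positivity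
  field_simp

theorem integral_fourierCharacter_mul_fracLapC (hn : 1 ≤ n) {s : ℝ} (h0 : 0 < s) (h1 : s < 1)
    (φ : SchwartzMap (𝔼 × ℝ) ℂ) (ξ : 𝔼) (ρ : ℝ) :
    ∫ p, fourierCharacter ξ ρ p * fracLapC s φ p.1 p.2 =
      ((‖ξ‖ ^ (2 * s) : ℝ) : ℂ) * ∫ p, fourierCharacter ξ ρ p * φ p := by
  have hφ : Integrable φ := φ.integrable
  simp_rw [fracLapC_eq_integral, mul_left_comm _ ((Cns n s / 2 : ℝ) : ℂ)]
  rw [integral_const_mul, integral_fourierCharacter_mul_integral ξ ρ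
    (integrable_uncurry_fracLap hn h0 h1 φ)
    (m := fun y => 2 * (((1 - Real.cos (inner ℝ ξ y)) * ‖y‖ ^ (-((n : ℝ) + 2 * s)) : ℝ) : ℂ))
    (I := ∫ p, fourierCharacter ξ ρ p * φ p), integral_const_mul, integral_complex_ofReal,
    ← Cns_mul_integral_one_sub_cos h0 h1 ξ]
  · push_cast
    ring
  · intro y
    simp_rw [← mul_assoc, mul_sub, mul_left_comm _ (2 : ℂ), sub_eq_add_neg (_ : 𝔼 × ℝ) (y, 0)]
    have hi : ∀ h, Integrable fun p => fourierCharacter ξ ρ p * φ (p + h) := fun h =>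
      integrable_fourierCharacter_mul ξ ρ (hφ.comp_add_right h)
    have hi0 := (integrable_fourierCharacter_mul ξ ρ hφ).const_mul 2
    rw [integral_mul_const, integral_sub (by exact hi0.sub (hi _)) (hi _), integral_sub hi0 (hi _),
      integral_const_mul, integral_fourierCharacter_mul_translate,
      integral_fourierCharacter_mul_translate]
    have hcos : fourierCharacter ξ ρ (-(y, 0)) + fourierCharacter ξ ρ (- -(y, 0)) =
        2 * Complex.cos (inner ℝ ξ y : ℝ) := by
      rw [Complex.two_cos]
      simp [fourierCharacter, mul_comm]
    push_cast
    linear_combination (-(((‖y‖ ^ (-((n : ℝ) + 2 * s)) : ℝ) : ℂ)) *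
      ∫ p, fourierCharacter ξ ρ p * φ p) * hcos

end Multiplier

/-- for a complex-valued Schwartz function `φ` on `ℝⁿ × ℝ`, the function
`D_right^α φ + (-Δ)^s φ` is integrable and
`𝓕[D_right^α φ + (-Δ)^s φ](ξ,ρ) = ((-iρ)^α + |ξ|^{2s})·𝓕φ(ξ,ρ)`. -/
theorem fourier_transform_right_marchaud_plus_fracLap
    (n : ℕ) (hn : 1 ≤ n) (α s : ℝ) (hα0 : 0 < α) (hα1 : α < 1)
    (hs0 : 0 < s) (hs1 : s < 1)
    (φ : SchwartzMap (EuclideanSpace ℝ (Fin n) × ℝ) ℂ) :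
    Integrable (fun p : EuclideanSpace ℝ (Fin n) × ℝ =>
      marchaudRightC α (⇑φ) p.1 p.2 + fracLapC s (⇑φ) p.1 p.2) ∧
    ∀ (ξ : EuclideanSpace ℝ (Fin n)) (ρ : ℝ),
      fourierTrans (fun p => marchaudRightC α (⇑φ) p.1 p.2 + fracLapC s (⇑φ) p.1 p.2) ξ ρ =
        ((-(Complex.I * (ρ : ℂ))) ^ (α : ℂ) + ((‖ξ‖ ^ (2 * s) : ℝ) : ℂ)) *
          fourierTrans (⇑φ) ξ ρ := by
  have hM := integrable_marchaudRightC hα0 hα1 φ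
  have hL := integrable_fracLapC hn hs0 hs1 φ
  refine ⟨hM.add hL, fun ξ ρ => ?_⟩
  have h : ∫ p, fourierCharacter ξ ρ p *
      (marchaudRightC α φ p.1 p.2 + fracLapC s φ p.1 p.2) =
      ((-(Complex.I * (ρ : ℂ))) ^ (α : ℂ) + ((‖ξ‖ ^ (2 * s) : ℝ) : ℂ)) *
        ∫ p, fourierCharacter ξ ρ p * φ p := by
    simp_rw [mul_add]
    rw [integral_add (integrable_fourierCharacter_mul ξ ρ hM)
      (integrable_fourierCharacter_mul ξ ρ hL),
      integral_fourierCharacter_mul_marchaudRightC hα0 hα1,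
      integral_fourierCharacter_mul_fracLapC hn hs0 hs1, add_mul]
  unfold fourierCharacter at h
  rw [fourierTrans, fourierTrans, h, mul_left_comm]
end

section
/- Let n ≥ 2 and 0 < α, s < 1. Suppose u ∈ 𝓛_{2s,α}(ℝⁿ×ℝ) is a distributional solution of ∂_t^α u + (-Δ)^s u = 0 in ℝⁿ×ℝ, i.e. ∫_ℝ ∫_{ℝⁿ} u(x,t)·[D_right^α φ(x,t) + (-Δ)^s φ(x,t)] dx dt = 0 for every real-valued Schwartz function φ on ℝⁿ×ℝ. Then the Fourier transform of u (as a tempered distribution) is supported at the origin; concretely, for every smooth compactly supported function ψ : ℝⁿ×ℝ → ℂ whose support does not contain the point (0,0), one has ∫_ℝ ∫_{ℝⁿ} u(x,t)·conj(𝓕⁻¹ψ(x,t)) dx dt = 0, where 𝓕⁻¹ψ(x,t) = (2π)^{−(n+1)/2} ∫_ℝ ∫_{ℝⁿ} e^{i(ξ·x + ρt)} ψ(ξ,ρ) dξ dρ and conj denotes complex conjugation. -/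
open MeasureTheory Set

/-- The right Marchaud fractional derivative of order `α` in the time variable:
`D_right^α φ(x,t) = C_α ∫_t^∞ (φ(x,t) - φ(x,τ))/(τ-t)^{1+α} dτ`. -/
noncomputable def marchaudRight {n : ℕ} (α : ℝ) (φ : EuclideanSpace ℝ (Fin n) × ℝ → ℝ)
    (x : EuclideanSpace ℝ (Fin n)) (t : ℝ) : ℝ :=
  Calpha α * ∫ τ in Ioi t, (φ (x, t) - φ (x, τ)) / (τ - t) ^ (1 + α)

/-- The fractional Laplacian `(-Δ)^s` acting in the space variable:
`(-Δ)^s φ(x,t) = (C_{n,s}/2) ∫_{ℝⁿ} (2φ(x,t) - φ(x+y,t) - φ(x-y,t))/|y|^{n+2s} dy`. -/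
noncomputable def fracLap {n : ℕ} (s : ℝ) (φ : EuclideanSpace ℝ (Fin n) × ℝ → ℝ)
    (x : EuclideanSpace ℝ (Fin n)) (t : ℝ) : ℝ :=
  Cns n s / 2 * ∫ y : EuclideanSpace ℝ (Fin n),
    (2 * φ (x, t) - φ (x + y, t) - φ (x - y, t)) / ‖y‖ ^ ((n : ℝ) + 2 * s)

open RealInnerProductSpace in
/-- The inverse Fourier transform
`𝓕⁻¹ψ(x,t) = (2π)^{-(n+1)/2} ∫_ℝ ∫_{ℝⁿ} e^{i(ξ·x + ρt)} ψ(ξ,ρ) dξ dρ`. -/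
noncomputable def fourierInv {n : ℕ} (ψ : EuclideanSpace ℝ (Fin n) × ℝ → ℂ)
    (x : EuclideanSpace ℝ (Fin n)) (t : ℝ) : ℂ :=
  (((2 * Real.pi) ^ (-(((n : ℝ) + 1) / 2)) : ℝ) : ℂ) *
    ∫ q : EuclideanSpace ℝ (Fin n) × ℝ,
      Complex.exp (Complex.I * ((⟪q.1, x⟫ : ℝ) + q.2 * t)) * ψ q

section Weights

/-- The polynomial weight `(1 + ‖x‖)^{-a}`. -/
noncomputable def decayWeight {E : Type*} [NormedAddCommGroup E] (a : ℝ) (x : E) : ℝ :=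
  (1 + ‖x‖) ^ (-a)

variable {E : Type*} [NormedAddCommGroup E]

lemma decayWeight_pos (a : ℝ) (x : E) : 0 < decayWeight a x := by
  unfold decayWeight; positivity

lemma decayWeight_le_one {a : ℝ} (ha : 0 ≤ a) (x : E) : decayWeight a x ≤ 1 :=
  Real.rpow_le_one_of_one_le_of_nonpos (by linarith [norm_nonneg x]) (by linarith)

lemma continuous_decayWeight (a : ℝ) : Continuous (decayWeight a : E → ℝ) := by
  unfold decayWeight
  refine Continuous.rpow_const (by fun_prop) fun x => Or.inl ?_
  positivity

lemma decayWeight_neg (a : ℝ) (x : E) : decayWeight a (-x) = decayWeight a x := by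
  simp [decayWeight]

lemma decayWeight_le_of_norm_le {a c : ℝ} (ha : 0 ≤ a) (hc : 0 < c) {x z : E}
    (h : 1 + ‖x‖ ≤ c * (1 + ‖z‖)) : decayWeight a z ≤ c ^ a * decayWeight a x := by
  unfold decayWeight
  have h1 : (c * (1 + ‖z‖)) ^ (-a) ≤ (1 + ‖x‖) ^ (-a) :=
    Real.rpow_le_rpow_of_nonpos (by positivity) h (by linarith)
  rw [Real.mul_rpow hc.le (by positivity), Real.rpow_neg hc.le] at h1
  have hca : 0 < c ^ a := by positivity
  rwa [inv_mul_le_iff₀ hca] at h1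

lemma decayWeight_add_le {a : ℝ} (ha : 0 ≤ a) {x y : E} (hy : ‖y‖ ≤ 1) :
    decayWeight a (x + y) ≤ 2 ^ a * decayWeight a x := by
  refine decayWeight_le_of_norm_le ha two_pos ?_
  have : ‖x‖ ≤ ‖x + y‖ + ‖y‖ := by simpa using norm_sub_le (x + y) y
  linarith [norm_nonneg (x + y)]

lemma decayWeight_mul_le {a : ℝ} (ha : 0 ≤ a) (p q : E) :
    decayWeight a q * decayWeight a (p - q)
      ≤ 2 ^ a * decayWeight a p * (decayWeight a q + decayWeight a (p - q)) := by
  have hp : ‖p‖ ≤ ‖q‖ + ‖p - q‖ := by simpa using norm_add_le q (p - q)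
  have h1 := decayWeight_pos a q
  have h2 := decayWeight_pos a (p - q)
  have h3 := decayWeight_pos a p
  have h4 : (0 : ℝ) < 2 ^ a := by positivity
  rcases le_total ‖q‖ ‖p - q‖ with h | h
  · have := decayWeight_le_of_norm_le (x := p) (z := p - q) ha two_pos (by linarith)
    calc decayWeight a q * decayWeight a (p - q)
        ≤ decayWeight a q * (2 ^ a * decayWeight a p) := by gcongr
      _ = 2 ^ a * decayWeight a p * decayWeight a q := by ring
      _ ≤ _ := by gcongr; linarith
  · have := decayWeight_le_of_norm_le (x := p) (z := q) ha two_pos (by linarith)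
    calc decayWeight a q * decayWeight a (p - q)
        ≤ (2 ^ a * decayWeight a p) * decayWeight a (p - q) := by gcongr
      _ ≤ _ := by gcongr; linarith

variable [NormedSpace ℝ E] [FiniteDimensional ℝ E] [MeasureSpace E] [BorelSpace E]
  [(volume : Measure E).IsAddHaarMeasure]

local notation "dim" => Module.finrank ℝ

lemma integrable_decayWeight {a : ℝ} (ha : (dim E : ℝ) < a) :
    Integrable (decayWeight a : E → ℝ) := integrable_one_add_norm ha

lemma integrable_decayWeight_mul {a : ℝ} (ha : (dim E : ℝ) < a) (p : E) :
    Integrable fun q : E => decayWeight a q * decayWeight a (p - q) := by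
  have ha0 : 0 ≤ a := (Nat.cast_nonneg _).trans ha.le
  refine (integrable_decayWeight ha).mono' ?_ (.of_forall fun q => ?_)
  · exact ((continuous_decayWeight a).mul
      ((continuous_decayWeight a).comp (by fun_prop))).aestronglyMeasurable
  · rw [Real.norm_of_nonneg (mul_pos (decayWeight_pos _ _) (decayWeight_pos _ _)).le]
    exact mul_le_of_le_one_right (decayWeight_pos _ _).le (decayWeight_le_one ha0 _)

lemma integral_decayWeight_mul_le {a : ℝ} (ha : (dim E : ℝ) < a) (p : E) :
    ∫ q : E, decayWeight a q * decayWeight a (p - q)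
      ≤ 2 ^ (a + 1) * (∫ q : E, decayWeight a q) * decayWeight a p := by
  have ha0 : 0 ≤ a := (Nat.cast_nonneg _).trans ha.le
  have hi := integrable_decayWeight (E := E) ha
  have hi' : Integrable fun q : E => decayWeight a (p - q) := hi.comp_sub_left p
  calc ∫ q : E, decayWeight a q * decayWeight a (p - q)
      ≤ ∫ q : E, 2 ^ a * decayWeight a p * (decayWeight a q + decayWeight a (p - q)) :=
        integral_mono (integrable_decayWeight_mul ha p) ((hi.add hi').const_mul _)
          fun q => decayWeight_mul_le ha0 p q
    _ = _ := by
        rw [integral_const_mul, integral_add hi hi',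
          integral_sub_left_eq_self (decayWeight a : E → ℝ) volume p,
          Real.rpow_add_one two_ne_zero]
        ring

lemma integrable_min_one_div [Nontrivial E] {a γ : ℝ} (ha : (dim E : ℝ) < a)
    (hγ : a < dim E + γ) :
    Integrable fun y : E => min 1 (‖y‖ ^ γ) / ‖y‖ ^ a := by
  have hd : 0 < dim E := Module.finrank_pos
  rw [integrable_fun_norm_addHaar (E := E) (μ := volume) (f := fun r : ℝ => min 1 (r ^ γ) / r ^ a)]
  have hγ0 : 0 < γ := by linarith
  have hmeas : Measurable (fun r : ℝ => r ^ (dim E - 1) • (min 1 (r ^ γ) / r ^ a)) := by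
    simp only [smul_eq_mul]; fun_prop
  rw [← Ioc_union_Ioi_eq_Ioi (zero_le_one' ℝ), integrableOn_union]
  constructor
  · have h1 : IntegrableOn (fun r : ℝ => r ^ ((dim E : ℝ) - 1 + γ - a)) (Ioc 0 1) := by
      rw [← intervalIntegrable_iff_integrableOn_Ioc_of_le zero_le_one]
      exact intervalIntegral.intervalIntegrable_rpow' (by linarith)
    refine h1.mono' hmeas.aestronglyMeasurable ?_
    filter_upwards [ae_restrict_mem measurableSet_Ioc] with r hr
    rw [smul_eq_mul, Real.norm_of_nonneg (by have := hr.1; positivity),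
      Real.rpow_sub hr.1, Real.rpow_add hr.1,
      show (dim E : ℝ) - 1 = ((dim E - 1 : ℕ) : ℝ) by push_cast [Nat.cast_sub hd]; ring,
      Real.rpow_natCast, mul_div_assoc]
    have := hr.1
    gcongr
    exact min_le_right _ _
  · have h1 : IntegrableOn (fun r : ℝ => r ^ ((dim E : ℝ) - 1 - a)) (Ioi 1) :=
      integrableOn_Ioi_rpow_of_lt (by linarith) one_pos
    refine h1.mono' hmeas.aestronglyMeasurable ?_
    filter_upwards [ae_restrict_mem measurableSet_Ioi] with r hr
    have hr0 : 0 < r := one_pos.trans hr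
    rw [smul_eq_mul, Real.norm_of_nonneg (by positivity), Real.rpow_sub hr0,
      show (dim E : ℝ) - 1 = ((dim E - 1 : ℕ) : ℝ) by push_cast [Nat.cast_sub hd]; ring,
      Real.rpow_natCast, div_eq_mul_inv (r ^ (dim E - 1)), ← one_div]
    gcongr
    exact min_le_left _ _

/-- A difference-type kernel that vanishes to order `γ` on the diagonal and has tails of
size `(1 + ‖x‖)^{-a}` keeps this decay after integration against `‖y‖^{-a}`. -/
theorem exists_singular_integral_le [Nontrivial E] {a γ C : ℝ} (ha : (dim E : ℝ) < a)
    (hγ : a < dim E + γ) (hC : 0 ≤ C) :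
    ∃ C' : ℝ, 0 ≤ C' ∧ ∀ Φ : E → E → ℝ, (∀ x, Measurable (Φ x)) → (∀ x y, 0 ≤ Φ x y) →
      (∀ x y, ‖y‖ ≤ 1 → Φ x y ≤ C * ‖y‖ ^ γ * decayWeight a x) →
      (∀ x y, 1 ≤ ‖y‖ →
        Φ x y ≤ C * (decayWeight a x + decayWeight a (x + y) + decayWeight a (x - y))) →
      ∀ x, Integrable (fun y => Φ x y / ‖y‖ ^ a) ∧
        ∫ y, Φ x y / ‖y‖ ^ a ≤ C' * decayWeight a x := by
  have ha0 : 0 ≤ a := (Nat.cast_nonneg _).trans ha.le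
  have hγ0 : 0 < γ := by linarith
  set I₁ := ∫ y : E, min 1 (‖y‖ ^ γ) / ‖y‖ ^ a with hI₁
  set K := 2 ^ (a + 1) * ∫ q : E, decayWeight a q with hK
  have hI₁0 : 0 ≤ I₁ := integral_nonneg fun y => by positivity
  have hK0 : 0 ≤ K := mul_nonneg (by positivity) (integral_nonneg fun y => (decayWeight_pos _ _).le)
  refine ⟨C * I₁ + C * 2 ^ a * (K + K), by positivity, fun Φ hm h0 hnear hfar x => ?_⟩
  have hi₁ := integrable_min_one_div (E := E) ha hγ
  have hi₂ : Integrable fun y : E => decayWeight a y * decayWeight a (x - y) :=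
    integrable_decayWeight_mul ha x
  have hi₃ : Integrable fun y : E => decayWeight a y * decayWeight a (x + y) := by
    simpa [decayWeight_neg] using (integrable_decayWeight_mul ha x).comp_neg
  have h_int₃ : ∫ y : E, decayWeight a y * decayWeight a (x + y)
      = ∫ y : E, decayWeight a y * decayWeight a (x - y) := by
    rw [← integral_neg_eq_self]
    simp [decayWeight_neg, sub_eq_add_neg]
  have hi₄ : Integrable fun y : E => C * 2 ^ a * (decayWeight a y * decayWeight a (x + y)
        + decayWeight a y * decayWeight a (x - y)) := (hi₃.add hi₂).const_mul _
  have hB : Integrable fun y : E => C * decayWeight a x * (min 1 (‖y‖ ^ γ) / ‖y‖ ^ a) +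
      C * 2 ^ a * (decayWeight a y * decayWeight a (x + y)
        + decayWeight a y * decayWeight a (x - y)) :=
    (hi₁.const_mul _).add hi₄
  have hle : ∀ y : E, Φ x y / ‖y‖ ^ a ≤ C * decayWeight a x * (min 1 (‖y‖ ^ γ) / ‖y‖ ^ a) +
      C * 2 ^ a * (decayWeight a y * decayWeight a (x + y)
        + decayWeight a y * decayWeight a (x - y)) := fun y => by
    have p0 := decayWeight_pos a x
    have p1 := decayWeight_pos a (x + y)
    have p2 := decayWeight_pos a (x - y)
    have p3 := decayWeight_pos a y
    rcases le_total ‖y‖ 1 with hy | hy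
    · have hmin : min 1 (‖y‖ ^ γ) = ‖y‖ ^ γ :=
        min_eq_right (Real.rpow_le_one (norm_nonneg _) hy hγ0.le)
      rw [hmin]
      have : Φ x y / ‖y‖ ^ a ≤ C * ‖y‖ ^ γ * decayWeight a x / ‖y‖ ^ a := by
        gcongr; exact hnear x y hy
      have h2 : 0 ≤ C * 2 ^ a * (decayWeight a y * decayWeight a (x + y)
        + decayWeight a y * decayWeight a (x - y)) := by positivity
      calc Φ x y / ‖y‖ ^ a ≤ C * ‖y‖ ^ γ * decayWeight a x / ‖y‖ ^ a := this
        _ = C * decayWeight a x * (‖y‖ ^ γ / ‖y‖ ^ a) := by ring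
        _ ≤ _ := le_add_of_nonneg_right h2
    · have hmin : min 1 (‖y‖ ^ γ) = 1 := min_eq_left (Real.one_le_rpow hy hγ0.le)
      rw [hmin]
      have hy0 : 0 < ‖y‖ := one_pos.trans_le hy
      have hw : 1 / ‖y‖ ^ a ≤ 2 ^ a * decayWeight a y := by
        have h1 : (1 + ‖y‖) ^ a ≤ (2 * ‖y‖) ^ a := by gcongr; linarith
        rw [Real.mul_rpow zero_le_two hy0.le] at h1
        unfold decayWeight
        rw [Real.rpow_neg (by positivity), ← div_eq_mul_inv, div_le_div_iff₀ (by positivity)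
          (by positivity)]
        linarith
      calc Φ x y / ‖y‖ ^ a
          ≤ C * (decayWeight a x + decayWeight a (x + y) + decayWeight a (x - y)) / ‖y‖ ^ a := by
            gcongr; exact hfar x y hy
        _ = C * decayWeight a x * (1 / ‖y‖ ^ a)
            + C * (decayWeight a (x + y) + decayWeight a (x - y)) * (1 / ‖y‖ ^ a) := by ring
        _ ≤ C * decayWeight a x * (1 / ‖y‖ ^ a)
            + C * (decayWeight a (x + y) + decayWeight a (x - y)) * (2 ^ a * decayWeight a y) := by
            gcongr
        _ = _ := by ring
  have hI : Integrable fun y => Φ x y / ‖y‖ ^ a := by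
    refine hB.mono' (((hm x).div (by fun_prop)).aestronglyMeasurable) (.of_forall fun y => ?_)
    rw [Real.norm_of_nonneg (div_nonneg (h0 x y) (by positivity))]
    exact hle y
  refine ⟨hI, (integral_mono hI hB hle).trans ?_⟩
  rw [integral_add (hi₁.const_mul _) hi₄, integral_const_mul,
    integral_const_mul, integral_add hi₃ hi₂, h_int₃, ← hI₁]
  have := integral_decayWeight_mul_le (E := E) ha x
  rw [← hK] at this
  have hCa : 0 ≤ C * 2 ^ a := by positivity
  nlinarith [mul_le_mul_of_nonneg_left this hCa]

end Weights

section Schwartz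

variable {E F : Type*} [NormedAddCommGroup E] [NormedSpace ℝ E] [NormedAddCommGroup F]
  [NormedSpace ℝ F]

open SchwartzMap

lemma SchwartzMap.exists_norm_le_decayWeight (f : 𝓢(E, F)) (a : ℝ) :
    ∃ C : ℝ, 0 ≤ C ∧ ∀ x, ‖f x‖ ≤ C * decayWeight a x := by
  obtain ⟨k, hk⟩ := exists_nat_ge a
  obtain ⟨M, h⟩ : ∃ M : ℝ, ∀ x, (1 + ‖x‖) ^ k * ‖f x‖ ≤ M := ⟨_, fun x => by
    simpa only [norm_iteratedFDeriv_zero] using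
      f.one_add_le_sup_seminorm_apply (𝕜 := ℝ) (m := (k, 0)) (k := k) (n := 0) le_rfl le_rfl x⟩
  refine ⟨M, le_trans (by positivity) (h 0), fun x => ?_⟩
  unfold decayWeight
  rw [Real.rpow_neg (by positivity), ← div_eq_mul_inv, le_div_iff₀ (by positivity), mul_comm]
  refine le_trans ?_ (h x)
  gcongr
  rw [← Real.rpow_natCast]
  exact Real.rpow_le_rpow_of_exponent_le (by linarith [norm_nonneg x]) hk

lemma SchwartzMap.exists_norm_sub_le (f : 𝓢(E, F)) {a : ℝ} (ha : 0 ≤ a) :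
    ∃ C : ℝ, 0 ≤ C ∧ ∀ x y, ‖y‖ ≤ 1 → ‖f (x + y) - f x‖ ≤ C * ‖y‖ * decayWeight a x := by
  obtain ⟨C, hC, h⟩ := (fderivCLM ℝ E F f).exists_norm_le_decayWeight a
  refine ⟨C * 2 ^ a, by positivity, fun x y hy => ?_⟩
  have hx : x ∈ Metric.closedBall x ‖y‖ := by simp
  have hxy : x + y ∈ Metric.closedBall x ‖y‖ := by simp
  have := (convex_closedBall x ‖y‖).norm_image_sub_le_of_norm_fderiv_le (𝕜 := ℝ) (f := f)
    (C := C * (2 ^ a * decayWeight a x)) (fun z _ => f.differentiableAt) (fun z hz => ?_) hx hxy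
  · calc _ ≤ _ := this
      _ = _ := by simp; ring
  · have hz' : ‖z - x‖ ≤ 1 := by
      rw [Metric.mem_closedBall, dist_eq_norm] at hz; exact hz.trans hy
    refine (h z).trans ?_
    gcongr
    simpa using decayWeight_add_le (x := x) ha hz'

lemma SchwartzMap.exists_norm_second_sub_le (f : 𝓢(E, F)) {a : ℝ} (ha : 0 ≤ a) :
    ∃ C : ℝ, 0 ≤ C ∧ ∀ x y, ‖y‖ ≤ 1 →
      ‖2 • f x - f (x + y) - f (x - y)‖ ≤ C * ‖y‖ ^ 2 * decayWeight a x := by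
  obtain ⟨C, hC, h⟩ := (fderivCLM ℝ E F f).exists_norm_sub_le ha
  refine ⟨C * 2 ^ a, by positivity, fun x y hy => ?_⟩
  have hx : x ∈ Metric.closedBall x ‖y‖ := by simp
  have hxy : x - y ∈ Metric.closedBall x ‖y‖ := by simp
  have hd : ∀ z, HasFDerivAt (fun z => f (z + y) - f z) (fderiv ℝ f (z + y) - fderiv ℝ f z) z :=
    fun z => ((hasFDerivAt_comp_add_right y).2 f.differentiableAt.hasFDerivAt).sub
      f.differentiableAt.hasFDerivAt
  have := (convex_closedBall x ‖y‖).norm_image_sub_le_of_norm_hasFDerivWithin_le (𝕜 := ℝ)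
    (f := fun z => f (z + y) - f z)
    (C := C * ‖y‖ * (2 ^ a * decayWeight a x)) (fun z _ => (hd z).hasFDerivWithinAt)
    (fun z hz => ?_) hx hxy
  · calc _ = ‖(f (x - y + y) - f (x - y)) - (f (x + y) - f x)‖ := by
          rw [sub_add_cancel, two_smul]; congr 1; abel
      _ ≤ _ := this
      _ = _ := by simp; ring
  · have hz' : ‖z - x‖ ≤ 1 := by
      rw [Metric.mem_closedBall, dist_eq_norm] at hz; exact hz.trans hy
    refine (h z y hy).trans ?_
    gcongr
    simpa using decayWeight_add_le (x := x) ha hz'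

end Schwartz

section Modulated

open Complex SchwartzMap
open scoped RealInnerProductSpace

local notation "dim" => Module.finrank ℝ

variable {E : Type*} [NormedAddCommGroup E] [InnerProductSpace ℝ E]

/-- The function `g` dilated by `δ` (with `L¹` normalization) and modulated to the frequency `-ξ`. -/
noncomputable def modulatedDilation (g : E → ℂ) (ξ : E) (δ : ℝ) (x : E) : ℂ :=
  cexp (-(I * (⟪ξ, x⟫ : ℝ))) * ((δ ^ dim E : ℝ) * g (δ • x))

lemma norm_cexp_neg_I_mul (r : ℝ) : ‖cexp (-(I * (r : ℂ)))‖ = 1 := by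
  rw [show -(I * (r : ℂ)) = ((-r : ℝ) : ℂ) * I by push_cast; ring, norm_exp_ofReal_mul_I]

lemma norm_modulatedDilation (g : E → ℂ) (ξ : E) {δ : ℝ} (hδ : 0 < δ) (x : E) :
    ‖modulatedDilation g ξ δ x‖ = δ ^ dim E * ‖g (δ • x)‖ := by
  have : 0 < δ ^ dim E := by positivity
  simp [modulatedDilation, norm_cexp_neg_I_mul, abs_of_pos hδ]

lemma continuous_modulatedDilation {g : E → ℂ} (hg : Continuous g) (ξ : E) (δ : ℝ) :
    Continuous (modulatedDilation g ξ δ) := by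
  unfold modulatedDilation; fun_prop

lemma modulatedDilation_second_difference (g : E → ℂ) (ξ : E) (δ : ℝ) (x y : E) :
    2 * modulatedDilation g ξ δ x - modulatedDilation g ξ δ (x + y)
        - modulatedDilation g ξ δ (x - y)
      = ((2 - 2 * Real.cos ⟪ξ, y⟫ : ℝ) : ℂ) * modulatedDilation g ξ δ x
        + cexp (-(I * (⟪ξ, x⟫ : ℝ))) * (δ ^ dim E : ℝ) *
          ((Real.cos ⟪ξ, y⟫ : ℝ) * (2 * g (δ • x) - g (δ • x + δ • y) - g (δ • x - δ • y))
            + I * (Real.sin ⟪ξ, y⟫ : ℝ) * (g (δ • x + δ • y) - g (δ • x - δ • y))) := by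
  have e1 : cexp (-(I * ((⟪ξ, x⟫ + ⟪ξ, y⟫ : ℝ) : ℂ)))
      = cexp (-(I * (⟪ξ, x⟫ : ℝ))) * (Real.cos ⟪ξ, y⟫ - Real.sin ⟪ξ, y⟫ * I) := by
    rw [show -(I * ((⟪ξ, x⟫ + ⟪ξ, y⟫ : ℝ) : ℂ))
      = -(I * (⟪ξ, x⟫ : ℝ)) + (-(⟪ξ, y⟫ : ℝ) : ℂ) * I by push_cast; ring, Complex.exp_add,
      Complex.exp_mul_I]
    simp [sub_eq_add_neg]
  have e2 : cexp (-(I * ((⟪ξ, x⟫ - ⟪ξ, y⟫ : ℝ) : ℂ)))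
      = cexp (-(I * (⟪ξ, x⟫ : ℝ))) * (Real.cos ⟪ξ, y⟫ + Real.sin ⟪ξ, y⟫ * I) := by
    rw [show -(I * ((⟪ξ, x⟫ - ⟪ξ, y⟫ : ℝ) : ℂ))
      = -(I * (⟪ξ, x⟫ : ℝ)) + ((⟪ξ, y⟫ : ℝ) : ℂ) * I by push_cast; ring, Complex.exp_add,
      Complex.exp_mul_I]
    simp
  unfold modulatedDilation
  rw [inner_add_right, inner_sub_right, e1, e2, smul_add, smul_sub]
  push_cast
  ring

lemma modulatedDilation_difference (h : ℝ → ℂ) (ρ : ℝ) (δ : ℝ) (t τ : ℝ) :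
    modulatedDilation h ρ δ t - modulatedDilation h ρ δ (t + τ)
      = (1 - cexp (-(I * (ρ * τ : ℝ)))) * modulatedDilation h ρ δ t
        + cexp (-(I * (ρ * τ : ℝ))) * cexp (-(I * (⟪ρ, t⟫ : ℝ))) * (δ : ℂ) *
          (h (δ * t) - h (δ * t + δ * τ)) := by
  have e1 : cexp (-(I * (⟪ρ, t + τ⟫ : ℝ)))
      = cexp (-(I * (⟪ρ, t⟫ : ℝ))) * cexp (-(I * (ρ * τ : ℝ))) := by
    rw [← Complex.exp_add, inner_add_right]
    congr 1
    simp only [RCLike.inner_apply, conj_trivial]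
    push_cast; ring
  unfold modulatedDilation
  rw [e1]
  simp only [Module.finrank_self, pow_one, smul_eq_mul, mul_add]
  ring

variable [FiniteDimensional ℝ E] [MeasurableSpace E] [BorelSpace E]

lemma integral_comp_smul_div_rpow {a δ : ℝ} (hδ : 0 < δ) (Φ : E → ℝ) :
    ∫ y : E, Φ (δ • y) / ‖y‖ ^ a = δ ^ (a - dim E) * ∫ y : E, Φ y / ‖y‖ ^ a := by
  have h1 : ∀ y : E, Φ (δ • y) / ‖y‖ ^ a = δ ^ a * (Φ (δ • y) / ‖δ • y‖ ^ a) := fun y => by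
    rw [norm_smul, Real.norm_of_nonneg hδ.le, Real.mul_rpow hδ.le (norm_nonneg _)]
    have : δ ^ a ≠ 0 := by positivity
    field_simp
  simp_rw [h1]
  rw [integral_const_mul, Measure.integral_comp_smul volume (fun y : E => Φ y / ‖y‖ ^ a) δ,
    abs_of_pos (by positivity), smul_eq_mul, Real.rpow_sub hδ, Real.rpow_natCast]
  ring

lemma integrable_comp_smul_div_rpow {a δ : ℝ} (hδ : 0 < δ) {Φ : E → ℝ}
    (h : Integrable fun y : E => Φ y / ‖y‖ ^ a) :
    Integrable fun y : E => Φ (δ • y) / ‖y‖ ^ a := by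
  have h1 : ∀ y : E, Φ (δ • y) / ‖y‖ ^ a = δ ^ a * (Φ (δ • y) / ‖δ • y‖ ^ a) := fun y => by
    rw [norm_smul, Real.norm_of_nonneg hδ.le, Real.mul_rpow hδ.le (norm_nonneg _)]
    have : δ ^ a ≠ 0 := by positivity
    field_simp
  simp_rw [h1]
  exact (h.comp_smul hδ.ne').const_mul _

/-- The (unnormalized) symbol of the fractional Laplacian. -/
noncomputable def spaceSymbol (a : ℝ) (ξ : E) : ℝ :=
  ∫ y : E, (2 - 2 * Real.cos ⟪ξ, y⟫) / ‖y‖ ^ a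

lemma integrable_spaceSymbol [Nontrivial E] {a : ℝ} (ha : (dim E : ℝ) < a) (ha' : a < dim E + 2)
    (ξ : E) : Integrable fun y : E => (2 - 2 * Real.cos ⟪ξ, y⟫) / ‖y‖ ^ a := by
  refine ((integrable_min_one_div (E := E) ha ha').const_mul (4 + ‖ξ‖ ^ 2)).mono'
    (Measurable.aestronglyMeasurable (by fun_prop)) (.of_forall fun y => ?_)
  have hc := Real.cos_le_one ⟪ξ, y⟫
  have hc' := Real.neg_one_le_cos ⟪ξ, y⟫
  rw [Real.norm_of_nonneg (div_nonneg (by linarith) (by positivity)), mul_div_assoc']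
  gcongr
  have h2 := Real.one_sub_sq_div_two_le_cos (x := ⟪ξ, y⟫)
  have h3 : ⟪ξ, y⟫ ^ 2 ≤ ‖ξ‖ ^ 2 * ‖y‖ ^ 2 := by
    rw [← mul_pow, ← sq_abs]
    exact pow_le_pow_left₀ (abs_nonneg _) (abs_real_inner_le_norm ξ y) 2
  rw [Real.rpow_two]
  rcases min_cases 1 (‖y‖ ^ 2) with ⟨h, _⟩ | ⟨h, _⟩ <;> rw [h]
  · nlinarith [sq_nonneg ‖ξ‖]
  · nlinarith [sq_nonneg ‖y‖]

lemma spaceSymbol_nonneg (a : ℝ) (ξ : E) : 0 ≤ spaceSymbol a ξ :=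
  integral_nonneg fun y => div_nonneg (by linarith [Real.cos_le_one ⟪ξ, y⟫]) (by positivity)

lemma spaceSymbol_pos [Nontrivial E] {a : ℝ} (ha : (dim E : ℝ) < a) (ha' : a < dim E + 2)
    {ξ : E} (hξ : ξ ≠ 0) : 0 < spaceSymbol a ξ := by
  unfold spaceSymbol
  rw [integral_pos_iff_support_of_nonneg (fun y => div_nonneg
    (by linarith [Real.cos_le_one ⟪ξ, y⟫]) (by positivity)) (integrable_spaceSymbol ha ha' ξ)]
  have hopen : IsOpen {y : E | Real.cos ⟪ξ, y⟫ ≠ 1} :=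
    isOpen_ne_fun (by fun_prop) continuous_const
  refine (hopen.measure_pos volume ⟨(Real.pi / ‖ξ‖ ^ 2) • ξ, ?_⟩).trans_le
    (measure_mono fun y hy => ?_)
  · have : ‖ξ‖ ≠ 0 := norm_ne_zero_iff.2 hξ
    simp only [mem_ofPred_eq, inner_smul_right, real_inner_self_eq_norm_sq]
    rw [div_mul_cancel₀ _ (by positivity), Real.cos_pi]
    norm_num
  · simp only [mem_ofPred_eq] at hy
    have hy0 : y ≠ 0 := by rintro rfl; simp at hy
    have : 0 < ‖y‖ := norm_pos_iff.2 hy0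
    rw [Function.mem_support]
    refine div_ne_zero (fun h => hy (by linarith)) (by positivity)

/-- On a function concentrated near the frequency `-ξ` at scale `δ`, the fractional Laplacian is
close to multiplication by its symbol. -/
theorem exists_space_remainder_le [Nontrivial E] (g : 𝓢(E, ℂ)) {a s : ℝ} (hs0 : 0 < s)
    (hs1 : s < 1) (ha : a = dim E + 2 * s) :
    ∃ C : ℝ, 0 ≤ C ∧ ∀ (ξ : E) (δ : ℝ), 0 < δ → δ ≤ 1 → ∀ x : E,
      Integrable (fun y => (2 * modulatedDilation g ξ δ x - modulatedDilation g ξ δ (x + y)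
        - modulatedDilation g ξ δ (x - y)) / ((‖y‖ ^ a : ℝ) : ℂ)) ∧
      ‖spaceSymbol a ξ * modulatedDilation g ξ δ x - ∫ y, (2 * modulatedDilation g ξ δ x
          - modulatedDilation g ξ δ (x + y) - modulatedDilation g ξ δ (x - y)) /
            ((‖y‖ ^ a : ℝ) : ℂ)‖
        ≤ C * (1 + ‖ξ‖) * δ ^ dim E * δ ^ s * decayWeight a (δ • x) ∧
      ∫ y, ‖(2 * modulatedDilation g ξ δ x
          - modulatedDilation g ξ δ (x + y) - modulatedDilation g ξ δ (x - y)) /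
            ((‖y‖ ^ a : ℝ) : ℂ)‖
        ≤ C * (1 + ‖ξ‖ + spaceSymbol a ξ) := by
  have hda : (dim E : ℝ) < a := by linarith
  have ha0 : 0 ≤ a := (Nat.cast_nonneg _).trans hda.le
  obtain ⟨C₀, hC₀, h₀⟩ := g.exists_norm_le_decayWeight a
  obtain ⟨C₁, hC₁, h₁⟩ := g.exists_norm_sub_le ha0
  obtain ⟨C₂, hC₂, h₂⟩ := g.exists_norm_second_sub_le ha0
  obtain ⟨C', hC', hsing⟩ := exists_singular_integral_le (E := E) (γ := 1 + s)
    (C := 4 * C₀ + 2 * C₁ + C₂) hda (by linarith) (by positivity)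
  let Φ : E → E → ℝ := fun x y => ‖2 * g x - g (x + y) - g (x - y)‖
    + min 1 (‖y‖ ^ s) * ‖g (x + y) - g (x - y)‖
  have hΦ0 : ∀ x y, 0 ≤ Φ x y := fun x y => by positivity
  have hgc : Continuous g := g.continuous
  specialize hsing Φ (fun x => by fun_prop) hΦ0 (fun x y hy => ?_) (fun x y hy => ?_)
  · have i2 := h₂ x y hy
    have i1 := h₁ x y hy
    have i1' := h₁ x (-y) (by simpa using hy)
    rw [← sub_eq_add_neg, norm_neg] at i1'
    have i3 : ‖g (x + y) - g (x - y)‖ ≤ 2 * C₁ * ‖y‖ * decayWeight a x := by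
      calc ‖g (x + y) - g (x - y)‖ = ‖(g (x + y) - g x) - (g (x - y) - g x)‖ := by
            congr 1; ring
        _ ≤ _ := norm_sub_le _ _
        _ ≤ _ := by linarith
    have hw := decayWeight_pos a x
    rcases eq_or_ne y 0 with rfl | hy0
    · have : (0 : ℝ) ^ (1 + s) = 0 := Real.zero_rpow (by linarith)
      simp [Φ, this, two_mul]
    have hyp : 0 < ‖y‖ := norm_pos_iff.2 hy0
    have e1 : ‖y‖ ^ 2 ≤ ‖y‖ ^ (1 + s) := by
      rw [← Real.rpow_two]
      exact Real.rpow_le_rpow_of_exponent_ge hyp hy (by linarith)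
    have e2 : ‖y‖ ^ s * ‖y‖ = ‖y‖ ^ (1 + s) := by
      rw [Real.rpow_add hyp, Real.rpow_one, mul_comm]
    have i2' : ‖2 * g x - g (x + y) - g (x - y)‖ ≤ C₂ * ‖y‖ ^ 2 * decayWeight a x := by
      rwa [nsmul_eq_mul, Nat.cast_ofNat] at i2
    calc Φ x y ≤ C₂ * ‖y‖ ^ (1 + s) * decayWeight a x
          + ‖y‖ ^ s * (2 * C₁ * ‖y‖ * decayWeight a x) := by
          refine add_le_add (i2'.trans ?_) ?_
          · gcongr
          · gcongr; exact min_le_right _ _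
      _ = (2 * C₁ + C₂) * ‖y‖ ^ (1 + s) * decayWeight a x := by rw [← e2]; ring
      _ ≤ _ := by gcongr; linarith
  · have j0 := h₀ x
    have j1 := h₀ (x + y)
    have j2 := h₀ (x - y)
    have w0 := decayWeight_pos a x
    have w1 := decayWeight_pos a (x + y)
    have w2 := decayWeight_pos a (x - y)
    have k1 : ‖2 * g x - g (x + y) - g (x - y)‖ ≤ 2 * ‖g x‖ + ‖g (x + y)‖ + ‖g (x - y)‖ := by
      refine (norm_sub_le _ _).trans (add_le_add ((norm_sub_le _ _).trans ?_) le_rfl)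
      simp
    have k2 : min 1 (‖y‖ ^ s) * ‖g (x + y) - g (x - y)‖ ≤ ‖g (x + y)‖ + ‖g (x - y)‖ :=
      (mul_le_of_le_one_left (norm_nonneg _) (min_le_left _ _)).trans (norm_sub_le _ _)
    have : Φ x y ≤ 2 * C₀ * (decayWeight a x + decayWeight a (x + y) + decayWeight a (x - y)) := by
      simp only [Φ]
      linarith
    refine this.trans ?_
    gcongr
    linarith
  refine ⟨C' + C₀, by positivity, fun ξ δ hδ hδ1 x => ?_⟩
  obtain ⟨h_int, hbd⟩ := hsing (δ • x)
  have hsym := integrable_spaceSymbol hda (by linarith) ξ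
  let S : E → ℂ := fun y => (((2 - 2 * Real.cos ⟪ξ, y⟫) / ‖y‖ ^ a : ℝ) : ℂ)
    * modulatedDilation g ξ δ x
  let R : E → ℂ := fun y => cexp (-(I * (⟪ξ, x⟫ : ℝ))) * (δ ^ dim E : ℝ) *
          ((Real.cos ⟪ξ, y⟫ : ℝ) * (2 * g (δ • x) - g (δ • x + δ • y) - g (δ • x - δ • y))
            + I * (Real.sin ⟪ξ, y⟫ : ℝ) * (g (δ • x + δ • y) - g (δ • x - δ • y)))
            / ((‖y‖ ^ a : ℝ) : ℂ)
  have hsplit : ∀ y, (2 * modulatedDilation g ξ δ x - modulatedDilation g ξ δ (x + y)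
        - modulatedDilation g ξ δ (x - y)) / ((‖y‖ ^ a : ℝ) : ℂ) = S y + R y := by
    intro y
    rw [modulatedDilation_second_difference]
    simp only [S, R]
    push_cast
    ring
  have hS : Integrable S := hsym.ofReal.mul_const _
  let c : ℝ := δ ^ dim E * ((1 + ‖ξ‖) * δ ^ (-s))
  have hRle : ∀ y, ‖R y‖ ≤ c * (Φ (δ • x) (δ • y) / ‖y‖ ^ a) := fun y => by
    have hδs : 1 ≤ (1 + ‖ξ‖) * δ ^ (-s) := by
      have : 1 ≤ δ ^ (-s) := Real.one_le_rpow_of_pos_of_le_one_of_nonpos hδ hδ1 (by linarith)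
      nlinarith [norm_nonneg ξ]
    have hcos : |Real.cos ⟪ξ, y⟫| ≤ (1 + ‖ξ‖) * δ ^ (-s) := (Real.abs_cos_le_one _).trans hδs
    have hsin : |Real.sin ⟪ξ, y⟫| ≤ (1 + ‖ξ‖) * δ ^ (-s) * min 1 (‖δ • y‖ ^ s) := by
      rcases min_cases 1 (‖δ • y‖ ^ s) with ⟨h, _⟩ | ⟨h, _⟩ <;> rw [h]
      · rw [mul_one]; exact (Real.abs_sin_le_one _).trans hδs
      · have q1 : |Real.sin ⟪ξ, y⟫| ≤ |Real.sin ⟪ξ, y⟫| ^ s := by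
          conv_lhs => rw [← Real.rpow_one |Real.sin ⟪ξ, y⟫|]
          rcases eq_or_lt_of_le (abs_nonneg (Real.sin ⟪ξ, y⟫)) with h0 | h0
          · rw [← h0, Real.zero_rpow hs0.ne', Real.rpow_one]
          · exact Real.rpow_le_rpow_of_exponent_ge h0 (Real.abs_sin_le_one _) hs1.le
        have q2 : |Real.sin ⟪ξ, y⟫| ≤ ‖ξ‖ * ‖y‖ :=
          (Real.abs_sin_le_abs).trans (abs_real_inner_le_norm ξ y)
        have q3 : ‖ξ‖ ^ s ≤ 1 + ‖ξ‖ := by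
          calc ‖ξ‖ ^ s ≤ (1 + ‖ξ‖) ^ s := by gcongr; linarith
            _ ≤ (1 + ‖ξ‖) ^ (1 : ℝ) :=
              Real.rpow_le_rpow_of_exponent_le (by linarith [norm_nonneg ξ]) hs1.le
            _ = _ := Real.rpow_one _
        calc |Real.sin ⟪ξ, y⟫| ≤ |Real.sin ⟪ξ, y⟫| ^ s := q1
          _ ≤ (‖ξ‖ * ‖y‖) ^ s := by gcongr
          _ = ‖ξ‖ ^ s * ‖y‖ ^ s := Real.mul_rpow (norm_nonneg _) (norm_nonneg _)
          _ ≤ (1 + ‖ξ‖) * ‖y‖ ^ s := by gcongr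
          _ = _ := by
            rw [norm_smul, Real.norm_of_nonneg hδ.le, Real.mul_rpow hδ.le (norm_nonneg _),
              Real.rpow_neg hδ.le]
            have : δ ^ s ≠ 0 := by positivity
            field_simp
    simp only [R, norm_div, norm_mul, norm_cexp_neg_I_mul, one_mul, Complex.norm_real]
    rw [Real.norm_of_nonneg (by positivity : 0 ≤ δ ^ dim E),
      Real.norm_of_nonneg (by positivity : 0 ≤ ‖y‖ ^ a), mul_div_assoc']
    refine div_le_div_of_nonneg_right ?_ (by positivity)
    simp only [c]
    rw [mul_assoc (δ ^ dim E)]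
    refine mul_le_mul_of_nonneg_left ?_ (by positivity)
    refine (norm_add_le _ _).trans ?_
    simp only [norm_mul, Complex.norm_I, one_mul, Complex.norm_real, Real.norm_eq_abs, Φ, mul_add]
    rw [← mul_assoc ((1 + ‖ξ‖) * δ ^ (-s)) (min _ _)]
    gcongr
  have hΦi : Integrable fun y => Φ (δ • x) (δ • y) / ‖y‖ ^ a :=
    integrable_comp_smul_div_rpow hδ h_int
  have hR : Integrable R := (hΦi.const_mul c).mono'
    (Measurable.aestronglyMeasurable (by fun_prop)) (.of_forall hRle)
  have hRint : ∫ y, ‖R y‖ ≤ C' * (1 + ‖ξ‖) * δ ^ dim E * δ ^ s * decayWeight a (δ • x) := by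
    calc ∫ y, ‖R y‖ ≤ ∫ y, c * (Φ (δ • x) (δ • y) / ‖y‖ ^ a) :=
          integral_mono hR.norm (hΦi.const_mul c) hRle
      _ = c * (δ ^ (a - dim E) * ∫ y, Φ (δ • x) y / ‖y‖ ^ a) := by
          rw [integral_const_mul, integral_comp_smul_div_rpow hδ (Φ (δ • x))]
      _ ≤ c * (δ ^ (a - dim E) * (C' * decayWeight a (δ • x))) := by gcongr
      _ = _ := by
          rw [show a - dim E = s + s by rw [ha]; ring, Real.rpow_add hδ]
          simp only [c, Real.rpow_neg hδ.le]
          have : δ ^ s ≠ 0 := by positivity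
          field_simp
  have hw := decayWeight_pos a (δ • x)
  have hw1 := decayWeight_le_one ha0 (δ • x)
  have hδd : δ ^ dim E ≤ 1 := pow_le_one₀ hδ.le hδ1
  have hδs : δ ^ s ≤ 1 := Real.rpow_le_one hδ.le hδ1 hs0.le
  have hδd0 : 0 < δ ^ dim E := by positivity
  have hδs0 : 0 < δ ^ s := by positivity
  simp_rw [hsplit]
  refine ⟨hS.add hR, ?_, ?_⟩
  · have hSi : ∫ y, S y = spaceSymbol a ξ * modulatedDilation g ξ δ x := by
      simp only [S]
      rw [integral_mul_const, integral_complex_ofReal, spaceSymbol]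
    rw [integral_add hS hR, hSi, sub_add_cancel_left, norm_neg]
    refine (norm_integral_le_integral_norm _).trans (hRint.trans ?_)
    gcongr
    linarith
  · have hSn : ∫ y, ‖S y‖ = spaceSymbol a ξ * ‖modulatedDilation g ξ δ x‖ := by
      simp only [S, norm_mul, Complex.norm_real]
      rw [integral_mul_const, spaceSymbol]
      congr 2
      funext y
      exact Real.norm_of_nonneg
        (div_nonneg (by linarith [Real.cos_le_one ⟪ξ, y⟫]) (by positivity))
    have hA : ‖modulatedDilation g ξ δ x‖ ≤ C₀ := by
      rw [norm_modulatedDilation _ _ hδ]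
      calc δ ^ dim E * ‖g (δ • x)‖ ≤ 1 * (C₀ * decayWeight a (δ • x)) := by
            gcongr; exact h₀ _
        _ ≤ 1 * (C₀ * 1) := by gcongr
        _ = C₀ := by ring
    have hsp := spaceSymbol_nonneg a ξ
    calc ∫ y, ‖S y + R y‖ ≤ ∫ y, (‖S y‖ + ‖R y‖) :=
          integral_mono (hS.add hR).norm (hS.norm.add hR.norm) fun y => norm_add_le _ _
      _ = spaceSymbol a ξ * ‖modulatedDilation g ξ δ x‖ + ∫ y, ‖R y‖ := by
          rw [integral_add hS.norm hR.norm, hSn]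
      _ ≤ spaceSymbol a ξ * C₀ + C' * (1 + ‖ξ‖) * 1 * 1 * 1 := by
          gcongr
          refine hRint.trans ?_
          gcongr
      _ ≤ _ := by nlinarith [norm_nonneg ξ, mul_nonneg hC' hsp, mul_nonneg hC₀ (norm_nonneg ξ)]

/-- The (unnormalized) symbol of the right Marchaud derivative. -/
noncomputable def timeSymbol (b : ℝ) (ρ : ℝ) : ℂ :=
  ∫ τ in Ioi (0 : ℝ), (1 - cexp (-(I * (ρ * τ : ℝ)))) / ((τ ^ b : ℝ) : ℂ)

lemma integrableOn_timeSymbol {b : ℝ} (hb : 1 < b) (hb' : b < 2) (ρ : ℝ) :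
    IntegrableOn (fun τ : ℝ => (1 - cexp (-(I * (ρ * τ : ℝ)))) / ((τ ^ b : ℝ) : ℂ)) (Ioi 0) := by
  have h := (integrable_min_one_div (E := ℝ) (a := b) (γ := 1) (by simpa using hb)
    (by norm_num; linarith)).const_mul (2 + |ρ|)
  refine h.integrableOn.mono' (Measurable.aestronglyMeasurable (by fun_prop)) ?_
  filter_upwards [ae_restrict_mem measurableSet_Ioi] with τ hτ
  have hτ0 : 0 < τ := hτ
  rw [norm_div, Complex.norm_real, mul_div_assoc', Real.norm_of_nonneg (by positivity),
    Real.norm_of_nonneg hτ0.le, Real.rpow_one]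
  refine div_le_div_of_nonneg_right ?_ (by positivity)
  have h1 : ‖1 - cexp (-(I * (ρ * τ : ℝ)))‖ ≤ 2 := by
    refine (norm_sub_le _ _).trans ?_
    rw [norm_cexp_neg_I_mul, norm_one]; norm_num
  have h2 : ‖1 - cexp (-(I * (ρ * τ : ℝ)))‖ ≤ |ρ| * τ := by
    rw [norm_sub_rev, show -(I * ((ρ * τ : ℝ) : ℂ)) = I * ((-(ρ * τ) : ℝ) : ℂ) by push_cast; ring]
    refine (Real.norm_exp_I_mul_ofReal_sub_one_le).trans ?_
    rw [norm_neg, norm_mul, Real.norm_eq_abs, Real.norm_of_nonneg hτ0.le]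
  rcases min_cases 1 τ with ⟨h, _⟩ | ⟨h, _⟩ <;> rw [h]
  · linarith [abs_nonneg ρ]
  · linarith

lemma re_timeSymbol {b : ℝ} (hb : 1 < b) (hb' : b < 2) (ρ : ℝ) :
    (timeSymbol b ρ).re = ∫ τ in Ioi (0 : ℝ), (1 - Real.cos (ρ * τ)) / τ ^ b := by
  have h := reCLM.integral_comp_comm (integrableOn_timeSymbol hb hb' ρ)
  simp only [reCLM_apply] at h
  rw [timeSymbol, ← h]
  congr 1
  funext τ
  rw [Complex.div_ofReal_re, show -(I * ((ρ * τ : ℝ) : ℂ)) = ((-(ρ * τ) : ℝ) : ℂ) * I by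
    push_cast; ring, Complex.sub_re, Complex.exp_ofReal_mul_I_re, Real.cos_neg, Complex.one_re]

lemma re_timeSymbol_nonneg {b : ℝ} (hb : 1 < b) (hb' : b < 2) (ρ : ℝ) :
    0 ≤ (timeSymbol b ρ).re := by
  rw [re_timeSymbol hb hb']
  refine setIntegral_nonneg measurableSet_Ioi fun τ hτ => ?_
  have hτ0 : 0 < τ := hτ
  exact div_nonneg (by linarith [Real.cos_le_one (ρ * τ)]) (by positivity)

lemma re_timeSymbol_pos {b : ℝ} (hb : 1 < b) (hb' : b < 2) {ρ : ℝ} (hρ : ρ ≠ 0) :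
    0 < (timeSymbol b ρ).re := by
  have h_int : IntegrableOn (fun τ : ℝ => (1 - Real.cos (ρ * τ)) / τ ^ b) (Ioi 0) := by
    have h := (integrableOn_timeSymbol hb hb' ρ).re
    refine h.congr (.of_forall fun τ => ?_)
    change ((1 - cexp (-(I * (ρ * τ : ℝ)))) / ((τ ^ b : ℝ) : ℂ)).re = _
    rw [Complex.div_ofReal_re, show -(I * ((ρ * τ : ℝ) : ℂ)) = ((-(ρ * τ) : ℝ) : ℂ) * I by
      push_cast; ring, Complex.sub_re, Complex.exp_ofReal_mul_I_re, Real.cos_neg, Complex.one_re]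
  rw [re_timeSymbol hb hb', setIntegral_pos_iff_support_of_nonneg_ae ?_ h_int]
  · have hopen : IsOpen ({τ : ℝ | Real.cos (ρ * τ) ≠ 1} ∩ Ioi 0) :=
      (isOpen_ne_fun (by fun_prop) continuous_const).inter isOpen_Ioi
    refine (hopen.measure_pos volume ⟨Real.pi / |ρ|, ?_, ?_⟩).trans_le
      (measure_mono fun τ hτ => ⟨?_, hτ.2⟩)
    · have : |ρ| ≠ 0 := abs_ne_zero.2 hρ
      rw [mem_ofPred_eq, ← Real.cos_abs, abs_mul, abs_div, abs_abs, abs_of_pos Real.pi_pos,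
        mul_div_cancel₀ _ this, Real.cos_pi]
      norm_num
    · have : 0 < |ρ| := abs_pos.2 hρ
      exact div_pos Real.pi_pos this
    · have hτ0 : 0 < τ := hτ.2
      exact div_ne_zero (fun h => hτ.1 (by linarith)) (by positivity)
  · filter_upwards [ae_restrict_mem measurableSet_Ioi] with τ hτ
    have hτ0 : 0 < τ := hτ
    exact div_nonneg (by linarith [Real.cos_le_one (ρ * τ)]) (by positivity)

/-- On a function concentrated near the frequency `-ρ` at scale `δ`, the right Marchaud derivative
is close to multiplication by its symbol. -/
theorem exists_time_remainder_le (h : 𝓢(ℝ, ℂ)) {b α : ℝ} (hα0 : 0 < α)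
    (hα1 : α < 1) (hb : b = 1 + α) :
    ∃ C : ℝ, 0 ≤ C ∧ ∀ (ρ : ℝ) (δ : ℝ), 0 < δ → δ ≤ 1 → ∀ t : ℝ,
      IntegrableOn (fun τ => (modulatedDilation h ρ δ t - modulatedDilation h ρ δ (t + τ))
        / ((τ ^ b : ℝ) : ℂ)) (Ioi 0) ∧
      ‖timeSymbol b ρ * modulatedDilation h ρ δ t - ∫ τ in Ioi (0 : ℝ),
          (modulatedDilation h ρ δ t - modulatedDilation h ρ δ (t + τ)) / ((τ ^ b : ℝ) : ℂ)‖
        ≤ C * δ * δ ^ α * decayWeight b (δ * t) ∧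
      ∫ τ in Ioi (0 : ℝ), ‖(modulatedDilation h ρ δ t - modulatedDilation h ρ δ (t + τ))
          / ((τ ^ b : ℝ) : ℂ)‖
        ≤ C * (1 + ∫ τ in Ioi (0 : ℝ), ‖(1 - cexp (-(I * (ρ * τ : ℝ)))) / ((τ ^ b : ℝ) : ℂ)‖) := by
  have hb1 : ((dim ℝ : ℕ) : ℝ) < b := by simp; linarith
  have hb0 : 0 ≤ b := by linarith
  obtain ⟨C₀, hC₀, h₀⟩ := h.exists_norm_le_decayWeight b
  obtain ⟨C₁, hC₁, h₁⟩ := h.exists_norm_sub_le hb0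
  obtain ⟨C', hC', hsing⟩ := exists_singular_integral_le (E := ℝ) (γ := 1)
    (C := C₀ + C₁) hb1 (by simp; linarith) (by positivity)
  let Φ : ℝ → ℝ → ℝ := fun t τ => ‖h t - h (t + τ)‖
  have hΦ0 : ∀ t τ, 0 ≤ Φ t τ := fun t τ => norm_nonneg _
  have hgc : Continuous h := h.continuous
  specialize hsing Φ (fun x => by fun_prop) hΦ0 (fun t τ hτ => ?_) (fun t τ hτ => ?_)
  · have hw := decayWeight_pos b t
    calc Φ t τ = ‖h (t + τ) - h t‖ := norm_sub_rev _ _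
      _ ≤ C₁ * ‖τ‖ * decayWeight b t := h₁ t τ hτ
      _ ≤ _ := by rw [Real.rpow_one]; gcongr; linarith
  · have w0 := decayWeight_pos b t
    have w1 := decayWeight_pos b (t + τ)
    have w2 := decayWeight_pos b (t - τ)
    calc Φ t τ ≤ ‖h t‖ + ‖h (t + τ)‖ := norm_sub_le _ _
      _ ≤ C₀ * decayWeight b t + C₀ * decayWeight b (t + τ) := add_le_add (h₀ _) (h₀ _)
      _ = C₀ * (decayWeight b t + decayWeight b (t + τ)) := by ring
      _ ≤ _ := mul_le_mul (by linarith) (by linarith) (by positivity) (by positivity)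
  refine ⟨C' + C₀, by positivity, fun ρ δ hδ hδ1 t => ?_⟩
  obtain ⟨h_int, hbd⟩ := hsing (δ * t)
  have hsym := integrableOn_timeSymbol (b := b) (by linarith) (by linarith) ρ
  let S : ℝ → ℂ := fun τ => (1 - cexp (-(I * (ρ * τ : ℝ)))) / ((τ ^ b : ℝ) : ℂ)
    * modulatedDilation h ρ δ t
  let R : ℝ → ℂ := fun τ => cexp (-(I * (ρ * τ : ℝ))) * cexp (-(I * (⟪ρ, t⟫ : ℝ))) * (δ : ℂ) *
          (h (δ * t) - h (δ * t + δ * τ)) / ((τ ^ b : ℝ) : ℂ)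
  have hsplit : ∀ τ, (modulatedDilation h ρ δ t - modulatedDilation h ρ δ (t + τ))
        / ((τ ^ b : ℝ) : ℂ) = S τ + R τ := by
    intro τ
    rw [modulatedDilation_difference]
    simp only [S, R]
    ring
  have hS : IntegrableOn S (Ioi 0) := hsym.mul_const _
  have hRle : ∀ᵐ τ ∂(volume.restrict (Ioi (0 : ℝ))),
      ‖R τ‖ ≤ δ * (Φ (δ * t) (δ • τ) / ‖τ‖ ^ b) := by
    filter_upwards [ae_restrict_mem measurableSet_Ioi] with τ hτ
    have hτ0 : 0 < τ := hτ
    simp only [R, norm_div, norm_mul, norm_cexp_neg_I_mul, one_mul, Complex.norm_real]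
    rw [Real.norm_of_nonneg hδ.le, Real.norm_of_nonneg (by positivity : 0 ≤ τ ^ b),
      Real.norm_of_nonneg hτ0.le, mul_div_assoc]
    rfl
  have hΦi : Integrable fun τ : ℝ => Φ (δ * t) (δ • τ) / ‖τ‖ ^ b :=
    integrable_comp_smul_div_rpow hδ h_int
  have hR : IntegrableOn R (Ioi 0) := (hΦi.integrableOn.const_mul δ).mono'
    (Measurable.aestronglyMeasurable (by fun_prop)) hRle
  have hRint : ∫ τ in Ioi (0 : ℝ), ‖R τ‖ ≤ C' * δ * δ ^ α * decayWeight b (δ * t) := by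
    calc ∫ τ in Ioi (0 : ℝ), ‖R τ‖
        ≤ ∫ τ in Ioi (0 : ℝ), δ * (Φ (δ * t) (δ • τ) / ‖τ‖ ^ b) :=
          integral_mono_ae hR.norm (hΦi.integrableOn.const_mul δ) hRle
      _ ≤ ∫ τ : ℝ, δ * (Φ (δ * t) (δ • τ) / ‖τ‖ ^ b) :=
          setIntegral_le_integral (hΦi.const_mul δ) (.of_forall fun τ =>
            mul_nonneg hδ.le (div_nonneg (hΦ0 _ _) (by positivity)))
      _ = δ * (δ ^ (b - dim ℝ) * ∫ τ, Φ (δ * t) τ / ‖τ‖ ^ b) := by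
          rw [integral_const_mul, integral_comp_smul_div_rpow hδ (Φ (δ * t))]
      _ ≤ δ * (δ ^ (b - dim ℝ) * (C' * decayWeight b (δ * t))) := by gcongr
      _ = _ := by
          rw [show b - dim ℝ = α by rw [hb]; simp]
          ring
  have hw := decayWeight_pos b (δ * t)
  have hw1 := decayWeight_le_one hb0 (δ * t)
  have hδs : δ ^ α ≤ 1 := Real.rpow_le_one hδ.le hδ1 hα0.le
  have hδs0 : 0 < δ ^ α := by positivity
  simp_rw [hsplit]
  refine ⟨hS.add hR, ?_, ?_⟩
  · have hSi : ∫ τ in Ioi (0 : ℝ), S τ = timeSymbol b ρ * modulatedDilation h ρ δ t := by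
      simp only [S]
      rw [integral_mul_const, timeSymbol]
    rw [integral_add hS hR, hSi, sub_add_cancel_left, norm_neg]
    refine (norm_integral_le_integral_norm _).trans (hRint.trans ?_)
    gcongr
    linarith
  · have hA : ‖modulatedDilation h ρ δ t‖ ≤ C₀ := by
      rw [norm_modulatedDilation _ _ hδ, Module.finrank_self, pow_one, smul_eq_mul]
      calc δ * ‖h (δ * t)‖ ≤ 1 * (C₀ * decayWeight b (δ * t)) := by
            gcongr; exact h₀ _
        _ ≤ 1 * (C₀ * 1) := by gcongr
        _ = C₀ := by ring
    set M := ∫ τ in Ioi (0 : ℝ), ‖(1 - cexp (-(I * (ρ * τ : ℝ)))) / ((τ ^ b : ℝ) : ℂ)‖ with hM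
    have hM0 : 0 ≤ M := integral_nonneg fun τ => norm_nonneg _
    have hSn : ∫ τ in Ioi (0 : ℝ), ‖S τ‖ = M * ‖modulatedDilation h ρ δ t‖ := by
      simp only [S, norm_mul]
      rw [integral_mul_const]
    calc ∫ τ in Ioi (0 : ℝ), ‖S τ + R τ‖ ≤ ∫ τ in Ioi (0 : ℝ), (‖S τ‖ + ‖R τ‖) :=
          integral_mono (hS.add hR).norm (hS.norm.add hR.norm) fun y => norm_add_le _ _
      _ = M * ‖modulatedDilation h ρ δ t‖ + ∫ τ in Ioi (0 : ℝ), ‖R τ‖ := by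
          rw [integral_add hS.norm hR.norm, hSn]
      _ ≤ M * C₀ + C' * 1 * 1 * 1 := by
          gcongr
          refine hRint.trans ?_
          gcongr
      _ ≤ _ := by nlinarith [mul_nonneg hC' hM0]

end Modulated

section Convolution

variable {V : Type*} [AddCommGroup V] [MeasurableSpace V] [MeasurableAdd₂ V] [MeasurableNeg V]
  {ν : Measure V} [SFinite ν]

lemma integral_kernel_mul_comm {Ω : Type*} [MeasurableSpace Ω] {μ : Measure Ω} [SFinite μ]
    {K : V → Ω → ℂ} (hK : Measurable (Function.uncurry K)) {M : ℝ}
    (hKi : ∀ z, Integrable (K z) μ) (hKM : ∀ z, ∫ ω, ‖K z ω‖ ∂μ ≤ M)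
    {f : V → ℂ} (hf : Integrable f ν) (z : V) :
    Integrable (fun ω => ∫ q, K (z - q) ω * f q ∂ν) μ ∧
      Integrable (fun q => (∫ ω, K (z - q) ω ∂μ) * f q) ν ∧
      ∫ ω, ∫ q, K (z - q) ω * f q ∂ν ∂μ = ∫ q, (∫ ω, K (z - q) ω ∂μ) * f q ∂ν := by
  have hmeas : AEStronglyMeasurable
      (Function.uncurry fun q ω => K (z - q) ω * f q) (ν.prod μ) := by
    refine AEStronglyMeasurable.mul ?_ hf.1.comp_fst
    exact (hK.comp ((measurable_const.sub measurable_fst).prodMk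
      measurable_snd)).aestronglyMeasurable
  have h_int : Integrable (Function.uncurry fun q ω => K (z - q) ω * f q) (ν.prod μ) := by
    refine (integrable_prod_iff hmeas).2
      ⟨.of_forall fun q => (hKi (z - q)).mul_const (f q), ?_⟩
    refine (hf.norm.const_mul M).mono' hmeas.norm.integral_prod_right' (.of_forall fun q => ?_)
    simp only [Function.uncurry, norm_mul]
    rw [integral_mul_const, Real.norm_of_nonneg
      (mul_nonneg (integral_nonneg fun _ => norm_nonneg _) (norm_nonneg _))]
    exact mul_le_mul_of_nonneg_right (hKM _) (norm_nonneg _)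
  refine ⟨h_int.integral_prod_right, ?_, ?_⟩
  · have := h_int.integral_prod_left
    simp only [Function.uncurry] at this
    simpa only [integral_mul_const] using this
  rw [← integral_integral_swap h_int]
  simp_rw [integral_mul_const]

open scoped ENNReal

/-- A contraction argument in a weighted `L¹` space: if all translates of `m • f - k ⋆ f` are
annihilated by `u`, and `k` is small compared with `m`, then `u` annihilates `f`. -/
theorem integral_mul_eq_zero_of_convolution_small [ν.IsAddLeftInvariant]
    {u v : V → ℝ} {f k : V → ℂ} {m : ℂ} {κ K C : ℝ} (hC : 0 ≤ C) (hκ : 0 ≤ κ) (hK : 0 ≤ K)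
    (hu : AEStronglyMeasurable u ν) (hv : Measurable v) (hv0 : ∀ z, 0 < v z)
    (huv : ∀ z, Integrable (fun y => u y * v (y - z)) ν)
    (hvi : ∀ p, Integrable (fun q => v q * v (p - q)) ν)
    (hvv : ∀ p, ∫ q, v q * v (p - q) ∂ν ≤ K * v p)
    (hf : Measurable f) (hfv : ∀ z, ‖f z‖ ≤ C * v z)
    (hk : Measurable k) (hkv : ∀ z, ‖k z‖ ≤ κ * v z) (hm : κ * K < ‖m‖)
    (h : ∀ z, ∫ y, u y * (m * f (y - z) - ∫ q, k q * f (y - z - q) ∂ν) ∂ν = 0) :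
    ∫ y, u y * f y ∂ν = 0 := by
  let J : V → ℂ := fun z => ∫ y, u y * f (y - z) ∂ν
  have hJm : Measurable J := by
    obtain ⟨u', hu', huu'⟩ := hu
    have h1 : Measurable u' := hu'.measurable
    have : J = fun z => ∫ y, (u' y : ℂ) * f (y - z) ∂ν := by
      funext z
      refine integral_congr_ae ?_
      filter_upwards [huu'] with y hy
      rw [← hy]
    rw [this]
    refine StronglyMeasurable.measurable (StronglyMeasurable.integral_prod_right
      (f := fun z y => (u' y : ℂ) * f (y - z)) ?_)
    refine Measurable.stronglyMeasurable ?_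
    simp only [Function.uncurry_def]
    fun_prop
  have huf : ∀ z, Integrable (fun y => u y * f (y - z)) ν := fun z => by
    refine ((huv z).norm.const_mul C).mono' (Complex.continuous_ofReal.comp_aestronglyMeasurable hu
      |>.mul (hf.comp (measurable_id.sub_const z)).aestronglyMeasurable) (.of_forall fun y => ?_)
    rw [norm_mul, norm_mul, Complex.norm_real, Real.norm_of_nonneg (hv0 _).le]
    have := hfv (y - z)
    nlinarith [norm_nonneg (u y)]
  have hprod : ∀ z, Integrable (Function.uncurry fun y q => (u y : ℂ) * (k q * f (y - z - q)))
      (ν.prod ν) := fun z => by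
    have hmeas : AEStronglyMeasurable
        (Function.uncurry fun y q => (u y : ℂ) * (k q * f (y - z - q))) (ν.prod ν) := by
      refine AEStronglyMeasurable.mul
        (Complex.continuous_ofReal.comp_aestronglyMeasurable hu).comp_fst ?_
      refine Measurable.aestronglyMeasurable ?_
      fun_prop
    have hb : ∀ y q, ‖k q * f (y - z - q)‖ ≤ κ * C * (v q * v (y - z - q)) := fun y q => by
      rw [norm_mul]
      calc ‖k q‖ * ‖f (y - z - q)‖ ≤ (κ * v q) * (C * v (y - z - q)) :=
            mul_le_mul (hkv _) (hfv _) (norm_nonneg _) (mul_nonneg hκ (hv0 _).le)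
        _ = _ := by ring
    have hi : ∀ y, Integrable (fun q => k q * f (y - z - q)) ν := fun y =>
      ((hvi (y - z)).const_mul (κ * C)).mono' (Measurable.aestronglyMeasurable (by fun_prop))
        (.of_forall (hb y))
    refine (integrable_prod_iff hmeas).2 ⟨.of_forall fun y => (hi y).const_mul (u y : ℂ), ?_⟩
    refine ((huv z).norm.const_mul (κ * C * K)).mono' hmeas.norm.integral_prod_right'
      (.of_forall fun y => ?_)
    rw [Real.norm_of_nonneg (integral_nonneg fun _ => norm_nonneg _)]
    simp only [Function.uncurry]
    simp_rw [norm_mul (u y : ℂ)]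
    rw [integral_const_mul, Complex.norm_real, norm_mul, Real.norm_of_nonneg (hv0 _).le]
    have : ∫ q, ‖k q * f (y - z - q)‖ ∂ν ≤ κ * C * (K * v (y - z)) := by
      calc _ ≤ ∫ q, κ * C * (v q * v (y - z - q)) ∂ν :=
            integral_mono (hi y).norm ((hvi (y - z)).const_mul (κ * C)) (hb y)
        _ = κ * C * ∫ q, v q * v (y - z - q) ∂ν := integral_const_mul _ _
        _ ≤ _ := mul_le_mul_of_nonneg_left (hvv _) (mul_nonneg hκ hC)
    nlinarith [norm_nonneg (u y)]
  have hJ : ∀ z, m * J z = ∫ q, k q * J (z + q) ∂ν := fun z => by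
    have h1 : ∫ y, (u y : ℂ) * ∫ q, k q * f (y - z - q) ∂ν ∂ν = ∫ q, k q * J (z + q) ∂ν := by
      simp_rw [← integral_const_mul]
      rw [integral_integral_swap (hprod z)]
      refine integral_congr_ae (.of_forall fun q => ?_)
      simp only [J]
      rw [← integral_const_mul]
      refine integral_congr_ae (.of_forall fun y => ?_)
      simp only [sub_sub]
      ring
    rw [← h1]
    have h2 : Integrable (fun y => (u y : ℂ) * ∫ q, k q * f (y - z - q) ∂ν) ν := by
      have := (hprod z).integral_prod_left
      simp only [Function.uncurry] at this
      simpa only [integral_const_mul] using this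
    have h3 := h z
    have h4 : ∀ y, (u y : ℂ) * (m * f (y - z) - ∫ q, k q * f (y - z - q) ∂ν)
        = m * (u y * f (y - z)) - u y * ∫ q, k q * f (y - z - q) ∂ν := fun y => by ring
    simp_rw [h4] at h3
    rw [integral_sub ((huf z).const_mul m) h2, integral_const_mul, sub_eq_zero] at h3
    exact h3
  let w : V → ℝ≥0∞ := fun z => ENNReal.ofReal (v z)
  have hw : Measurable w := hv.ennreal_ofReal
  have hww : ∀ p, ∫⁻ q, w q * w (p - q) ∂ν ≤ ENNReal.ofReal K * w p := fun p => by
    simp only [w]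
    rw [← ENNReal.ofReal_mul hK]
    simp_rw [← ENNReal.ofReal_mul (hv0 _).le]
    rw [← ofReal_integral_eq_lintegral_ofReal (hvi p)
      (.of_forall fun q => mul_nonneg (hv0 _).le (hv0 _).le)]
    exact ENNReal.ofReal_le_ofReal (hvv p)
  let N : ℝ≥0∞ := ∫⁻ z, w z * ‖J z‖ₑ ∂ν
  have hfw : ∀ z, ‖f z‖ₑ ≤ ENNReal.ofReal C * w z := fun z => by
    rw [← ofReal_norm, ← ENNReal.ofReal_mul hC]
    exact ENNReal.ofReal_le_ofReal (hfv z)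
  have hkw : ∀ z, ‖k z‖ₑ ≤ ENNReal.ofReal κ * w z := fun z => by
    rw [← ofReal_norm, ← ENNReal.ofReal_mul hκ]
    exact ENNReal.ofReal_le_ofReal (hkv z)
  have hN : N ≠ ∞ := by
    have h1 : N ≤ ∫⁻ z, ∫⁻ y, ENNReal.ofReal C * (‖u y‖ₑ * (w z * w (y - z))) ∂ν ∂ν := by
      refine lintegral_mono fun z => ?_
      calc w z * ‖J z‖ₑ ≤ w z * ∫⁻ y, ‖(u y : ℂ) * f (y - z)‖ₑ ∂ν := by
            gcongr; exact enorm_integral_le_lintegral_enorm _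
        _ = ∫⁻ y, w z * ‖(u y : ℂ) * f (y - z)‖ₑ ∂ν :=
            (lintegral_const_mul' _ _ ENNReal.ofReal_ne_top).symm
        _ ≤ _ := by
            refine lintegral_mono fun y => ?_
            simp only [enorm_mul]
            calc w z * (‖(u y : ℂ)‖ₑ * ‖f (y - z)‖ₑ)
                ≤ w z * (‖(u y : ℂ)‖ₑ * (ENNReal.ofReal C * w (y - z))) := by
                  gcongr; exact hfw _
              _ = _ := by
                  rw [show ‖(u y : ℂ)‖ₑ = ‖u y‖ₑ by
                    rw [← ofReal_norm, Complex.norm_real, ofReal_norm]]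
                  ring
    have h2 : ∫⁻ z, ∫⁻ y, ENNReal.ofReal C * (‖u y‖ₑ * (w z * w (y - z))) ∂ν ∂ν
        ≤ ∫⁻ y, ENNReal.ofReal C * ENNReal.ofReal K * ‖u y * v (y - 0)‖ₑ ∂ν := by
      rw [lintegral_lintegral_swap]
      · refine lintegral_mono fun y => ?_
        rw [lintegral_const_mul' _ _ ENNReal.ofReal_ne_top, lintegral_const_mul' _ _ enorm_ne_top]
        calc _ ≤ ENNReal.ofReal C * (‖u y‖ₑ * (ENNReal.ofReal K * w y)) := by
              gcongr; exact hww y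
          _ = _ := by
              rw [enorm_mul, sub_zero, Real.enorm_of_nonneg (hv0 y).le]
              ring
      · simp only [Function.uncurry_def]
        refine AEMeasurable.const_mul (AEMeasurable.mul (f := fun p : V × V => ‖u p.2‖ₑ)
          (g := fun p : V × V => w p.1 * w (p.2 - p.1)) ?_ ?_) _
        · exact (hu.comp_snd).enorm
        · refine Measurable.aemeasurable ?_
          fun_prop
    refine ne_top_of_le_ne_top ?_ (h1.trans h2)
    rw [lintegral_const_mul' _ _ (by finiteness)]
    exact ENNReal.mul_ne_top (by finiteness) (huv 0).2.ne
  have hNle : ‖m‖ₑ * N ≤ ENNReal.ofReal (κ * K) * N := by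
    calc ‖m‖ₑ * N = ∫⁻ z, w z * ‖m * J z‖ₑ ∂ν := by
          simp only [N]
          rw [← lintegral_const_mul' _ _ enorm_ne_top]
          refine lintegral_congr fun z => ?_
          rw [enorm_mul]; ring
      _ ≤ ∫⁻ z, ∫⁻ q, ENNReal.ofReal κ * (w z * (w (q - z) * ‖J q‖ₑ)) ∂ν ∂ν := by
          refine lintegral_mono fun z => ?_
          rw [hJ z]
          calc w z * ‖∫ q, k q * J (z + q) ∂ν‖ₑ ≤ w z * ∫⁻ q, ‖k q * J (z + q)‖ₑ ∂ν := by
                gcongr; exact enorm_integral_le_lintegral_enorm _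
            _ = w z * ∫⁻ q, ‖k (q - z) * J q‖ₑ ∂ν := by
                rw [← lintegral_add_left_eq_self (fun q => ‖k (q - z) * J q‖ₑ) z]
                simp only [add_sub_cancel_left]
            _ = ∫⁻ q, w z * ‖k (q - z) * J q‖ₑ ∂ν :=
                (lintegral_const_mul' _ _ ENNReal.ofReal_ne_top).symm
            _ ≤ _ := by
                refine lintegral_mono fun q => ?_
                simp only [enorm_mul]
                calc _ ≤ w z * ((ENNReal.ofReal κ * w (q - z)) * ‖J q‖ₑ) := by
                      gcongr; exact hkw _
                  _ = _ := by ring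
      _ = ∫⁻ q, ∫⁻ z, ENNReal.ofReal κ * ‖J q‖ₑ * (w z * w (q - z)) ∂ν ∂ν := by
          rw [lintegral_lintegral_swap]
          · refine lintegral_congr fun q => lintegral_congr fun z => ?_
            ring
          · refine Measurable.aemeasurable ?_
            fun_prop
      _ ≤ ∫⁻ q, ENNReal.ofReal κ * ‖J q‖ₑ * (ENNReal.ofReal K * w q) ∂ν := by
          refine lintegral_mono fun q => ?_
          rw [lintegral_const_mul' _ _ (by finiteness)]
          gcongr
          exact hww q
      _ = ∫⁻ q, ENNReal.ofReal (κ * K) * (w q * ‖J q‖ₑ) ∂ν := by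
          rw [ENNReal.ofReal_mul hκ]
          refine lintegral_congr fun q => ?_
          ring
      _ = _ := lintegral_const_mul' _ _ ENNReal.ofReal_ne_top
  have hN0 : N = 0 := by
    by_contra hne
    have := (ENNReal.mul_le_mul_iff_left hne hN).1 hNle
    rw [← ofReal_norm, ENNReal.ofReal_le_ofReal_iff (by positivity)] at this
    exact absurd hm (not_lt.2 this)
  have hJ0 : ∀ᵐ z ∂ν, J z = 0 := by
    have h1 := (lintegral_eq_zero_iff (hw.mul hJm.enorm)).1 hN0
    filter_upwards [h1] with z hz
    simpa [w, not_le.2 (hv0 z)] using hz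
  have h0 := hJ 0
  rw [integral_eq_zero_of_ae (by
    filter_upwards [hJ0] with q hq
    simp [hq])] at h0
  have hm0 : m ≠ 0 := norm_pos_iff.1 ((mul_nonneg hκ hK).trans_lt hm)
  have := (mul_eq_zero.1 h0).resolve_left hm0
  simpa [J] using this

end Convolution

section SpaceTime

open SchwartzMap

local notation "dim" => Module.finrank ℝ

variable {E : Type*} [NormedAddCommGroup E] [InnerProductSpace ℝ E]

/-- The weight `(1 + δ‖x‖)^{-a} (1 + δ|t|)^{-b}` on space-time. -/
noncomputable def spaceTimeWeight (a b δ : ℝ) (p : E × ℝ) : ℝ :=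
  decayWeight a (δ • p.1) * decayWeight b (δ * p.2)

lemma spaceTimeWeight_pos (a b δ : ℝ) (p : E × ℝ) : 0 < spaceTimeWeight a b δ p :=
  mul_pos (decayWeight_pos _ _) (decayWeight_pos _ _)

lemma continuous_spaceTimeWeight (a b δ : ℝ) :
    Continuous (spaceTimeWeight a b δ : E × ℝ → ℝ) :=
  ((continuous_decayWeight a).comp (by fun_prop)).mul
    ((continuous_decayWeight b).comp (by fun_prop))

lemma SchwartzMap.exists_norm_le_spaceTimeWeight (f : 𝓢(E × ℝ, ℂ)) {a b δ : ℝ} (ha : 0 ≤ a)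
    (hb : 0 ≤ b) (hδ : 0 < δ) (hδ1 : δ ≤ 1) :
    ∃ C : ℝ, 0 ≤ C ∧ ∀ p, ‖f p‖ ≤ C * spaceTimeWeight a b δ p := by
  obtain ⟨C, hC, h⟩ := f.exists_norm_le_decayWeight (a + b)
  refine ⟨C, hC, fun p => (h p).trans (mul_le_mul_of_nonneg_left ?_ hC)⟩
  unfold spaceTimeWeight decayWeight
  rw [neg_add, Real.rpow_add (by positivity)]
  have h1 : ‖δ • p.1‖ ≤ ‖p‖ := by
    rw [norm_smul, Real.norm_of_nonneg hδ.le]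
    exact (mul_le_of_le_one_left (norm_nonneg _) hδ1).trans (norm_fst_le p)
  have h2 : ‖δ * p.2‖ ≤ ‖p‖ := by
    rw [norm_mul, Real.norm_of_nonneg hδ.le]
    exact (mul_le_of_le_one_left (norm_nonneg _) hδ1).trans (norm_snd_le p)
  exact mul_le_mul (Real.rpow_le_rpow_of_nonpos (by positivity) (by linarith) (by linarith))
    (Real.rpow_le_rpow_of_nonpos (by positivity) (by linarith) (by linarith))
    (by positivity) (by positivity)

lemma exists_decayWeight_translate_le {F : Type*} [NormedAddCommGroup F] [NormedSpace ℝ F]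
    {a δ : ℝ} (ha : 0 ≤ a) (hδ : 0 < δ)
    (hδ1 : δ ≤ 1) (z : F) : ∃ C : ℝ, 0 ≤ C ∧ ∀ x : F,
      decayWeight a (δ • (x - z)) ≤ C / (1 + ‖x‖ ^ a) := by
  refine ⟨((1 + ‖z‖) / δ) ^ a * 2, by positivity, fun x => ?_⟩
  have h1 : 1 + ‖x‖ ≤ (1 + ‖z‖) / δ * (1 + ‖δ • (x - z)‖) := by
    rw [norm_smul, Real.norm_of_nonneg hδ.le, div_mul_eq_mul_div, le_div_iff₀ hδ]
    have : ‖x‖ ≤ ‖x - z‖ + ‖z‖ := by simpa using norm_add_le (x - z) z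
    have h2 := norm_nonneg z
    have h3 := norm_nonneg (x - z)
    nlinarith [mul_nonneg h2 h3, mul_nonneg hδ.le (mul_nonneg h2 h3),
      mul_le_mul_of_nonneg_left this hδ.le]
  refine (decayWeight_le_of_norm_le ha (by positivity) h1).trans ?_
  rw [mul_div_assoc]
  gcongr
  unfold decayWeight
  rw [Real.rpow_neg (by positivity), le_div_iff₀ (by positivity), inv_mul_le_iff₀ (by positivity)]
  have h2 : ‖x‖ ^ a ≤ (1 + ‖x‖) ^ a := by gcongr; linarith
  have h3 : 1 ≤ (1 + ‖x‖) ^ a := Real.one_le_rpow (by linarith [norm_nonneg x]) ha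
  linarith

variable [FiniteDimensional ℝ E] [MeasurableSpace E] [BorelSpace E]

instance isAddHaarMeasure_volume_prod_real : (volume : Measure (E × ℝ)).IsAddHaarMeasure :=
  inferInstanceAs ((volume : Measure E).prod (volume : Measure ℝ)).IsAddHaarMeasure

lemma integrable_mul_spaceTimeWeight {u : E × ℝ → ℝ} (hu : AEStronglyMeasurable u)
    {a b δ : ℝ} (ha : 0 ≤ a) (hb : 0 ≤ b) (hδ : 0 < δ) (hδ1 : δ ≤ 1)
    (hui : Integrable fun p : E × ℝ => |u p| / ((1 + ‖p.1‖ ^ a) * (1 + |p.2| ^ b))) (z : E × ℝ) :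
    Integrable fun y => u y * spaceTimeWeight a b δ (y - z) := by
  obtain ⟨C, hC, h⟩ := exists_decayWeight_translate_le ha hδ hδ1 z.1
  obtain ⟨C', hC', h'⟩ := exists_decayWeight_translate_le hb hδ hδ1 z.2
  refine (hui.const_mul (C * C')).mono' (hu.mul
    ((continuous_spaceTimeWeight a b δ).comp (by fun_prop)).aestronglyMeasurable)
    (.of_forall fun y => ?_)
  rw [norm_mul, Real.norm_of_nonneg (spaceTimeWeight_pos _ _ _ _).le, Real.norm_eq_abs]
  calc |u y| * spaceTimeWeight a b δ (y - z)
      ≤ |u y| * ((C / (1 + ‖y.1‖ ^ a)) * (C' / (1 + ‖y.2‖ ^ b))) := by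
        refine mul_le_mul_of_nonneg_left ?_ (abs_nonneg _)
        exact mul_le_mul (h y.1) (h' y.2) (decayWeight_pos _ _).le (by positivity)
    _ = _ := by
        rw [Real.norm_eq_abs]
        field_simp

lemma integrable_decayWeight_smul_mul {F : Type*} [NormedAddCommGroup F] [NormedSpace ℝ F]
    [FiniteDimensional ℝ F] [MeasureSpace F] [BorelSpace F]
    [(volume : Measure F).IsAddHaarMeasure] {a δ : ℝ} (ha : (dim F : ℝ) < a)
    (hδ : 0 < δ) (p : F) :
    Integrable (fun q : F => decayWeight a (δ • q) * decayWeight a (δ • (p - q))) ∧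
    ∫ q : F, decayWeight a (δ • q) * decayWeight a (δ • (p - q))
      ≤ 2 ^ (a + 1) * (∫ q : F, decayWeight a q) * (δ ^ dim F)⁻¹ * decayWeight a (δ • p) := by
  simp_rw [smul_sub]
  refine ⟨(integrable_decayWeight_mul ha (δ • p)).comp_smul hδ.ne', ?_⟩
  rw [Measure.integral_comp_smul volume
    (fun q => decayWeight a q * decayWeight a (δ • p - q)) δ, smul_eq_mul,
    abs_of_pos (by positivity)]
  calc _ ≤ (δ ^ dim F)⁻¹ * (2 ^ (a + 1) * (∫ q : F, decayWeight a q) * decayWeight a (δ • p)) := by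
        gcongr; exact integral_decayWeight_mul_le ha _
    _ = _ := by ring

lemma exists_integral_spaceTimeWeight_mul_le {a b : ℝ} (ha : (dim E : ℝ) < a) (hb : 1 < b) :
    ∃ K : ℝ, 0 ≤ K ∧ ∀ δ : ℝ, 0 < δ → ∀ p : E × ℝ,
      Integrable (fun q => spaceTimeWeight a b δ q * spaceTimeWeight a b δ (p - q)) ∧
      ∫ q, spaceTimeWeight a b δ q * spaceTimeWeight a b δ (p - q)
        ≤ K * (δ ^ (dim E + 1))⁻¹ * spaceTimeWeight a b δ p := by
  refine ⟨(2 ^ (a + 1) * (∫ q : E, decayWeight a q)) * (2 ^ (b + 1) * (∫ q : ℝ, decayWeight b q)),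
    mul_nonneg (mul_nonneg (by positivity) (integral_nonneg fun _ => (decayWeight_pos _ _).le))
      (mul_nonneg (by positivity) (integral_nonneg fun _ => (decayWeight_pos _ _).le)),
    fun δ hδ p => ?_⟩
  obtain ⟨i1, h1⟩ := integrable_decayWeight_smul_mul ha hδ p.1
  obtain ⟨i2, h2⟩ := integrable_decayWeight_smul_mul (F := ℝ) (a := b) (by simpa using hb) hδ p.2
  have heq : (fun q => spaceTimeWeight a b δ q * spaceTimeWeight a b δ (p - q))
      = fun q : E × ℝ => (decayWeight a (δ • q.1) * decayWeight a (δ • (p.1 - q.1))) *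
          (decayWeight b (δ • q.2) * decayWeight b (δ • (p.2 - q.2))) := by
    funext q
    simp only [spaceTimeWeight, Prod.fst_sub, Prod.snd_sub, smul_eq_mul]
    ring
  rw [heq]
  refine ⟨i1.mul_prod i2, ?_⟩
  rw [Measure.volume_eq_prod, integral_prod_mul
    (fun x : E => decayWeight a (δ • x) * decayWeight a (δ • (p.1 - x)))
    (fun t : ℝ => decayWeight b (δ • t) * decayWeight b (δ • (p.2 - t)))]
  refine (mul_le_mul h1 h2 (integral_nonneg fun _ =>
    (mul_pos (decayWeight_pos _ _) (decayWeight_pos _ _)).le) ?_).trans_eq ?_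
  · exact (integral_nonneg fun _ =>
      (mul_pos (decayWeight_pos _ _) (decayWeight_pos _ _)).le).trans h1
  · simp only [spaceTimeWeight, smul_eq_mul, Module.finrank_self, pow_succ, mul_inv]
    ring

end SpaceTime

section Operator

open SchwartzMap Filter Topology

local notation "dim" => Module.finrank ℝ

variable {E : Type*} [NormedAddCommGroup E] [InnerProductSpace ℝ E]

/-- The integrand of the fractional Laplacian on space-time functions. -/
noncomputable def spaceDifference (a : ℝ) (f : E × ℝ → ℂ) (p : E × ℝ) (y : E) : ℂ :=
  (2 * f p - f (p.1 + y, p.2) - f (p.1 - y, p.2)) / ((‖y‖ ^ a : ℝ) : ℂ)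

/-- The integrand of the right Marchaud derivative on space-time functions. -/
noncomputable def timeDifference (b : ℝ) (f : E × ℝ → ℂ) (p : E × ℝ) (τ : ℝ) : ℂ :=
  (f p - f (p.1, p.2 + τ)) / ((τ ^ b : ℝ) : ℂ)

variable [FiniteDimensional ℝ E] [MeasurableSpace E] [BorelSpace E]

/-- The operator `c₁ ∂_t^α + c₂ (-Δ)^s` (with unnormalized integrals) on complex functions. -/
noncomputable def spaceTimeOperator (a b c₁ c₂ : ℝ) (f : E × ℝ → ℂ) (p : E × ℝ) : ℂ :=
  c₁ * (∫ τ in Ioi (0 : ℝ), timeDifference b f p τ) + c₂ * ∫ y, spaceDifference a f p y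

section Reproducing

variable {A : E → ℂ} {B : ℝ → ℂ} {CA CB MA MB a b : ℝ} {f : E × ℝ → ℂ}

lemma integrable_tensor_mul (hA : Continuous A) (hB : Continuous B)
    (hAb : ∀ x, ‖A x‖ ≤ CA) (hBb : ∀ t, ‖B t‖ ≤ CB) (hf : Integrable f) (z : E × ℝ) :
    Integrable fun q : E × ℝ => A (z.1 - q.1) * B (z.2 - q.2) * f q := by
  refine hf.bdd_mul (c := CA * CB) (by fun_prop) (.of_forall fun q => ?_)
  rw [norm_mul]
  exact mul_le_mul (hAb _) (hBb _) (norm_nonneg _) ((norm_nonneg _).trans (hAb 0))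

lemma integral_spaceDifference_of_reproducing (hA : Continuous A) (hB : Continuous B)
    (hAb : ∀ x, ‖A x‖ ≤ CA) (hBb : ∀ t, ‖B t‖ ≤ CB)
    (hAi : ∀ x, Integrable fun y => (2 * A x - A (x + y) - A (x - y)) / ((‖y‖ ^ a : ℝ) : ℂ))
    (hAM : ∀ x, ∫ y, ‖(2 * A x - A (x + y) - A (x - y)) / ((‖y‖ ^ a : ℝ) : ℂ)‖ ≤ MA)
    (hf : Integrable f)
    (hrep : ∀ z : E × ℝ, f z = ∫ q : E × ℝ, A (z.1 - q.1) * B (z.2 - q.2) * f q) (z : E × ℝ) :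
    Integrable (spaceDifference a f z) ∧
      Integrable (fun q : E × ℝ => ((∫ y, (2 * A (z.1 - q.1) - A (z.1 - q.1 + y)
        - A (z.1 - q.1 - y)) / ((‖y‖ ^ a : ℝ) : ℂ)) * B (z.2 - q.2)) * f q) ∧
      ∫ y, spaceDifference a f z y = ∫ q : E × ℝ, ((∫ y, (2 * A (z.1 - q.1) - A (z.1 - q.1 + y)
        - A (z.1 - q.1 - y)) / ((‖y‖ ^ a : ℝ) : ℂ)) * B (z.2 - q.2)) * f q := by
  have hi := integrable_tensor_mul hA hB hAb hBb hf
  have key := integral_kernel_mul_comm (ν := (volume : Measure (E × ℝ))) (μ := (volume : Measure E))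
    (K := fun p y => (2 * A p.1 - A (p.1 + y) - A (p.1 - y)) / ((‖y‖ ^ a : ℝ) : ℂ) * B p.2)
    (M := MA * CB) (by simp only [Function.uncurry_def]; fun_prop)
    (fun p => (hAi p.1).mul_const _) (fun p => by
      simp_rw [norm_mul]
      rw [integral_mul_const]
      exact mul_le_mul (hAM _) (hBb _) (norm_nonneg _)
        ((integral_nonneg fun _ => norm_nonneg _).trans (hAM 0))) hf z
  have heq : (fun y => ∫ q : E × ℝ, (2 * A (z - q).1 - A ((z - q).1 + y) - A ((z - q).1 - y))
      / ((‖y‖ ^ a : ℝ) : ℂ) * B (z - q).2 * f q) = spaceDifference a f z := by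
    funext y
    have hi2 : Integrable fun q : E × ℝ => 2 * (A (z.1 - q.1) * B (z.2 - q.2) * f q)
        - A (z.1 + y - q.1) * B (z.2 - q.2) * f q := ((hi z).const_mul 2).sub (hi (z.1 + y, z.2))
    rw [spaceDifference, hrep z, hrep (z.1 + y, z.2), hrep (z.1 - y, z.2), ← integral_const_mul,
      ← integral_sub ((hi z).const_mul 2) (hi (z.1 + y, z.2)),
      ← integral_sub hi2 (hi (z.1 - y, z.2)),
      ← integral_div]
    refine integral_congr_ae (.of_forall fun q => ?_)
    simp only [Prod.fst_sub, Prod.snd_sub]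
    rw [show z.1 + y - q.1 = z.1 - q.1 + y by abel, show z.1 - y - q.1 = z.1 - q.1 - y by abel]
    ring
  rw [heq] at key
  simpa only [Prod.fst_sub, Prod.snd_sub, integral_mul_const] using key

lemma integral_timeDifference_of_reproducing (hA : Continuous A) (hB : Continuous B)
    (hAb : ∀ x, ‖A x‖ ≤ CA) (hBb : ∀ t, ‖B t‖ ≤ CB)
    (hBi : ∀ t, IntegrableOn (fun τ => (B t - B (t + τ)) / ((τ ^ b : ℝ) : ℂ)) (Ioi 0))
    (hBM : ∀ t, ∫ τ in Ioi (0 : ℝ), ‖(B t - B (t + τ)) / ((τ ^ b : ℝ) : ℂ)‖ ≤ MB)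
    (hf : Integrable f)
    (hrep : ∀ z : E × ℝ, f z = ∫ q : E × ℝ, A (z.1 - q.1) * B (z.2 - q.2) * f q) (z : E × ℝ) :
    IntegrableOn (timeDifference b f z) (Ioi 0) ∧
      Integrable (fun q : E × ℝ => (A (z.1 - q.1) *
        ∫ τ in Ioi (0 : ℝ), (B (z.2 - q.2) - B (z.2 - q.2 + τ)) / ((τ ^ b : ℝ) : ℂ)) * f q) ∧
      ∫ τ in Ioi (0 : ℝ), timeDifference b f z τ = ∫ q : E × ℝ, (A (z.1 - q.1) *
        ∫ τ in Ioi (0 : ℝ), (B (z.2 - q.2) - B (z.2 - q.2 + τ)) / ((τ ^ b : ℝ) : ℂ)) * f q := by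
  have hi := integrable_tensor_mul hA hB hAb hBb hf
  have key := integral_kernel_mul_comm (ν := (volume : Measure (E × ℝ)))
    (μ := (volume : Measure ℝ).restrict (Ioi 0))
    (K := fun p τ => A p.1 * ((B p.2 - B (p.2 + τ)) / ((τ ^ b : ℝ) : ℂ)))
    (M := CA * MB) (by simp only [Function.uncurry_def]; fun_prop)
    (fun p => (hBi p.2).const_mul _) (fun p => by
      simp_rw [norm_mul]
      rw [integral_const_mul]
      exact mul_le_mul (hAb _) (hBM _) (integral_nonneg fun _ => norm_nonneg _)
        ((norm_nonneg _).trans (hAb 0))) hf z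
  have heq : (fun τ => ∫ q : E × ℝ, A (z - q).1 * ((B (z - q).2 - B ((z - q).2 + τ))
      / ((τ ^ b : ℝ) : ℂ)) * f q) = timeDifference b f z := by
    funext τ
    rw [timeDifference, hrep z, hrep (z.1, z.2 + τ), ← integral_sub (hi z) (hi (z.1, z.2 + τ)),
      ← integral_div]
    refine integral_congr_ae (.of_forall fun q => ?_)
    simp only [Prod.fst_sub, Prod.snd_sub]
    rw [show z.2 + τ - q.2 = z.2 - q.2 + τ by abel]
    ring
  rw [heq] at key
  simp only [Prod.fst_sub, Prod.snd_sub, integral_const_mul] at key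
  exact key

end Reproducing

/-- The remainder of `spaceTimeOperator` on the tensor product of `A` and `B` after subtracting
the symbol. -/
noncomputable def remainderKernel (a b c₁ c₂ : ℝ) (l σ : ℂ) (A : E → ℂ) (B : ℝ → ℂ)
    (p : E × ℝ) : ℂ :=
  c₂ * ((l * A p.1 - ∫ y, (2 * A p.1 - A (p.1 + y) - A (p.1 - y)) / ((‖y‖ ^ a : ℝ) : ℂ)) * B p.2)
  + c₁ * (A p.1 * (σ * B p.2 - ∫ τ in Ioi (0 : ℝ), (B p.2 - B (p.2 + τ)) / ((τ ^ b : ℝ) : ℂ)))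

lemma measurable_remainderKernel (a b c₁ c₂ : ℝ) (l σ : ℂ) {A : E → ℂ} {B : ℝ → ℂ}
    (hA : Continuous A) (hB : Continuous B) :
    Measurable (remainderKernel a b c₁ c₂ l σ A B) := by
  have h1 : Measurable fun x : E =>
      ∫ y, (2 * A x - A (x + y) - A (x - y)) / ((‖y‖ ^ a : ℝ) : ℂ) := by
    refine (StronglyMeasurable.integral_prod_right (f := fun x y : E =>
      (2 * A x - A (x + y) - A (x - y)) / ((‖y‖ ^ a : ℝ) : ℂ)) ?_).measurable
    refine Measurable.stronglyMeasurable ?_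
    simp only [Function.uncurry_def]
    fun_prop
  have h2 : Measurable fun t : ℝ =>
      ∫ τ in Ioi (0 : ℝ), (B t - B (t + τ)) / ((τ ^ b : ℝ) : ℂ) := by
    refine (StronglyMeasurable.integral_prod_right (f := fun t τ : ℝ =>
      (B t - B (t + τ)) / ((τ ^ b : ℝ) : ℂ)) ?_).measurable
    refine Measurable.stronglyMeasurable ?_
    simp only [Function.uncurry_def]
    fun_prop
  have hA' := hA.measurable.comp (measurable_fst : Measurable (Prod.fst : E × ℝ → E))
  have hB' := hB.measurable.comp (measurable_snd : Measurable (Prod.snd : E × ℝ → ℝ))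
  exact ((((hA'.const_mul l).sub (h1.comp measurable_fst)).mul hB').const_mul (c₂ : ℂ)).add
    ((hA'.mul ((hB'.const_mul σ).sub (h2.comp measurable_snd))).const_mul (c₁ : ℂ))

theorem exists_scale_annihilates [Nontrivial E] {u : E × ℝ → ℝ} (hu : AEStronglyMeasurable u)
    {a b s α : ℝ} (hs0 : 0 < s) (hs1 : s < 1) (hα0 : 0 < α) (hα1 : α < 1)
    (ha : a = dim E + 2 * s) (hb : b = 1 + α)
    (hui : Integrable fun p : E × ℝ => |u p| / ((1 + ‖p.1‖ ^ a) * (1 + |p.2| ^ b)))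
    (g : 𝓢(E, ℂ)) (h : 𝓢(ℝ, ℂ)) (ξ : E) (ρ c₁ c₂ : ℝ)
    (hm : (c₁ : ℂ) * timeSymbol b ρ + c₂ * spaceSymbol a ξ ≠ 0) :
    ∃ δ : ℝ, 0 < δ ∧ ∀ f : 𝓢(E × ℝ, ℂ),
      (∀ z : E × ℝ, f z = ∫ q : E × ℝ, modulatedDilation g ξ δ (z.1 - q.1) *
        modulatedDilation h ρ δ (z.2 - q.2) * f q) →
      (∀ z, Integrable (spaceDifference a f z)) ∧
      (∀ z, IntegrableOn (timeDifference b f z) (Ioi 0)) ∧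
      (∀ z, Integrable fun y => u y * spaceTimeOperator a b c₁ c₂ f (y - z)) ∧
      ((∀ z, ∫ y, u y * spaceTimeOperator a b c₁ c₂ f (y - z) = 0) → ∫ y, u y * f y = 0) := by
  have hda : (dim E : ℝ) < a := by linarith
  have ha0 : 0 ≤ a := (Nat.cast_nonneg _).trans hda.le
  have hb1 : 1 < b := by linarith
  have hb0 : 0 ≤ b := by linarith
  obtain ⟨Cs, hCs, hspace⟩ := exists_space_remainder_le g hs0 hs1 ha
  obtain ⟨Ct, hCt, htime⟩ := exists_time_remainder_le h hα0 hα1 hb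
  obtain ⟨K, hK, hconv⟩ := exists_integral_spaceTimeWeight_mul_le (E := E) hda hb1
  obtain ⟨Cg, hCg, hg⟩ := g.exists_norm_le_decayWeight a
  obtain ⟨Ch, hCh, hh⟩ := h.exists_norm_le_decayWeight b
  set m : ℂ := (c₁ : ℂ) * timeSymbol b ρ + c₂ * spaceSymbol a ξ with hmdef
  let Θ : ℝ → ℝ := fun δ => |c₂| * (Cs * (1 + ‖ξ‖)) * Ch * δ ^ s + |c₁| * Cg * Ct * δ ^ α
  obtain ⟨δ, hΘ, hδ, hδ1⟩ : ∃ δ, Θ δ * K < ‖m‖ ∧ 0 < δ ∧ δ ≤ 1 := by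
    have hlim : Tendsto (fun δ => Θ δ * K) (𝓝[>] 0) (𝓝 0) := by
      have hc : Continuous fun δ => Θ δ * K := by
        have h1 := Real.continuous_rpow_const hs0.le
        have h2 := Real.continuous_rpow_const hα0.le
        simp only [Θ]
        fun_prop
      have := (hc.tendsto 0).mono_left (nhdsWithin_le_nhds (s := Ioi 0))
      simpa [Θ, Real.zero_rpow hs0.ne', Real.zero_rpow hα0.ne'] using this
    have hev := (hlim.eventually (gt_mem_nhds (norm_pos_iff.2 hm))).and
      (Ioc_mem_nhdsGT (zero_lt_one (α := ℝ)))
    obtain ⟨δ, h1, h2⟩ := hev.exists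
    exact ⟨δ, h1, h2.1, h2.2⟩
  refine ⟨δ, hδ, fun f hrep => ?_⟩
  set A := modulatedDilation g ξ δ with hAdef
  set B := modulatedDilation h ρ δ with hBdef
  have hAc : Continuous A := continuous_modulatedDilation g.continuous ξ δ
  have hBc : Continuous B := continuous_modulatedDilation h.continuous ρ δ
  have hδd : 0 < δ ^ dim E := by positivity
  have hA : ∀ x, ‖A x‖ ≤ Cg * δ ^ dim E * decayWeight a (δ • x) := fun x => by
    rw [hAdef, norm_modulatedDilation _ _ hδ]
    calc _ ≤ δ ^ dim E * (Cg * decayWeight a (δ • x)) := by gcongr; exact hg _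
      _ = _ := by ring
  have hB : ∀ t, ‖B t‖ ≤ Ch * δ * decayWeight b (δ * t) := fun t => by
    rw [hBdef, norm_modulatedDilation _ _ hδ, Module.finrank_self, pow_one]
    calc _ ≤ δ * (Ch * decayWeight b (δ * t)) := by gcongr; exact hh _
      _ = _ := by ring
  have hAb : ∀ x, ‖A x‖ ≤ Cg * δ ^ dim E := fun x =>
    (hA x).trans (mul_le_of_le_one_right (by positivity) (decayWeight_le_one ha0 _))
  have hBb : ∀ t, ‖B t‖ ≤ Ch * δ := fun t =>
    (hB t).trans (mul_le_of_le_one_right (by positivity) (decayWeight_le_one hb0 _))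
  have hfi : Integrable f := f.integrable
  have hS := integral_spaceDifference_of_reproducing hAc hBc hAb hBb
    (fun x => (hspace ξ δ hδ hδ1 x).1) (fun x => (hspace ξ δ hδ hδ1 x).2.2) hfi hrep
  have hT := integral_timeDifference_of_reproducing hAc hBc hAb hBb
    (fun t => (htime ρ δ hδ hδ1 t).1) (fun t => (htime ρ δ hδ hδ1 t).2.2) hfi hrep
  let k : E × ℝ → ℂ := remainderKernel a b c₁ c₂ (spaceSymbol a ξ) (timeSymbol b ρ) A B
  have hkm : Measurable k := measurable_remainderKernel a b c₁ c₂ _ _ hAc hBc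
  let v : E × ℝ → ℝ := spaceTimeWeight a b δ
  have hv0 : ∀ z, 0 < v z := spaceTimeWeight_pos a b δ
  have hΘ0 : 0 ≤ Θ δ := by positivity
  let κ : ℝ := δ ^ (dim E + 1) * Θ δ
  have hκ : 0 ≤ κ := by positivity
  have hkv : ∀ z, ‖k z‖ ≤ κ * v z := fun z => by
    have w1 := decayWeight_pos a (δ • z.1)
    have w2 := decayWeight_pos b (δ * z.2)
    refine (norm_add_le _ _).trans ?_
    rw [norm_mul, norm_mul, norm_mul, norm_mul, Complex.norm_real, Complex.norm_real,
      Real.norm_eq_abs, Real.norm_eq_abs]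
    calc _ ≤ |c₂| * ((Cs * (1 + ‖ξ‖) * δ ^ dim E * δ ^ s * decayWeight a (δ • z.1))
            * (Ch * δ * decayWeight b (δ * z.2)))
          + |c₁| * ((Cg * δ ^ dim E * decayWeight a (δ • z.1))
            * (Ct * δ * δ ^ α * decayWeight b (δ * z.2))) := by
          gcongr
          · exact (hspace ξ δ hδ hδ1 z.1).2.1
          · exact hB _
          · exact hA _
          · exact (htime ρ δ hδ hδ1 z.2).2.1
      _ = _ := by
          simp only [κ, Θ, v, spaceTimeWeight]
          ring
  obtain ⟨C, hC, hfv⟩ := f.exists_norm_le_spaceTimeWeight ha0 hb0 hδ hδ1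
  have hkfi : ∀ z, Integrable fun q => k q * f (z - q) := fun z => by
    refine (((hconv δ hδ z).1).const_mul (κ * C)).mono' (Measurable.aestronglyMeasurable
      (hkm.mul (f.continuous.measurable.comp (measurable_const.sub measurable_id))))
      (.of_forall fun q => ?_)
    rw [norm_mul]
    calc ‖k q‖ * ‖f (z - q)‖ ≤ (κ * v q) * (C * v (z - q)) :=
          mul_le_mul (hkv _) (hfv _) (norm_nonneg _) (mul_nonneg hκ (hv0 _).le)
      _ = _ := by ring
  have hkfi' : ∀ z, Integrable fun q => k (z - q) * f q := fun z => by
    simpa using (hkfi z).comp_sub_left z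
  have hop : ∀ z, spaceTimeOperator a b c₁ c₂ f z = m * f z - ∫ q, k q * f (z - q) := fun z => by
    have h1 : ∫ q, k q * f (z - q) = ∫ q, k (z - q) * f q := by
      rw [← integral_sub_left_eq_self (fun q => k q * f (z - q)) volume z]
      simp
    rw [spaceTimeOperator, (hS z).2.2, (hT z).2.2, h1, hrep z, ← integral_const_mul,
      ← integral_const_mul, ← integral_const_mul, ← integral_add ((hT z).2.1.const_mul _)
      ((hS z).2.1.const_mul _), ← integral_sub
      ((integrable_tensor_mul hAc hBc hAb hBb hfi z).const_mul m) (hkfi' z)]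
    refine integral_congr_ae (.of_forall fun q => ?_)
    simp only [k, remainderKernel, hmdef, Prod.fst_sub, Prod.snd_sub]
    ring
  have huv := fun z => integrable_mul_spaceTimeWeight hu ha0 hb0 hδ hδ1 hui z
  refine ⟨fun z => (hS z).1, fun z => (hT z).1, fun z => ?_, fun hzero => ?_⟩
  · simp_rw [hop]
    have hmeas : Measurable fun p : E × ℝ => m * f p - ∫ q, k q * f (p - q) := by
      refine (f.continuous.measurable.const_mul m).sub ?_
      refine (StronglyMeasurable.integral_prod_right (f := fun p q : E × ℝ =>
        k q * f (p - q)) ?_).measurable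
      exact Measurable.stronglyMeasurable ((hkm.comp measurable_snd).mul
        (f.continuous.measurable.comp (measurable_fst.sub measurable_snd)))
    refine ((huv z).norm.const_mul (‖m‖ * C + κ * C * (K * (δ ^ (dim E + 1))⁻¹))).mono'
      ((Complex.continuous_ofReal.comp_aestronglyMeasurable hu).mul
      (hmeas.comp (measurable_id.sub_const z)).aestronglyMeasurable) (.of_forall fun y => ?_)
    have hb1 : ‖m * f (y - z) - ∫ q, k q * f (y - z - q)‖
        ≤ (‖m‖ * C + κ * C * (K * (δ ^ (dim E + 1))⁻¹)) * v (y - z) := by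
      refine (norm_sub_le _ _).trans ?_
      rw [add_mul (‖m‖ * C), norm_mul, mul_assoc ‖m‖]
      refine add_le_add (mul_le_mul_of_nonneg_left (hfv _) (norm_nonneg _)) ?_
      calc _ ≤ ∫ q, κ * C * (v q * v (y - z - q)) := by
            refine norm_integral_le_of_norm_le ((hconv δ hδ (y - z)).1.const_mul _)
              (.of_forall fun q => ?_)
            rw [norm_mul]
            calc ‖k q‖ * ‖f (y - z - q)‖ ≤ (κ * v q) * (C * v (y - z - q)) :=
                  mul_le_mul (hkv _) (hfv _) (norm_nonneg _) (mul_nonneg hκ (hv0 _).le)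
              _ = _ := by ring
        _ = κ * C * ∫ q, v q * v (y - z - q) := integral_const_mul _ _
        _ ≤ κ * C * (K * (δ ^ (dim E + 1))⁻¹ * v (y - z)) :=
            mul_le_mul_of_nonneg_left (hconv δ hδ (y - z)).2 (by positivity)
        _ = _ := by ring
    rw [norm_mul, norm_mul, Complex.norm_real, Real.norm_of_nonneg (hv0 (y - z)).le]
    calc _ ≤ ‖u y‖ * ((‖m‖ * C + κ * C * (K * (δ ^ (dim E + 1))⁻¹)) * v (y - z)) := by gcongr
      _ = _ := by ring
  · simp_rw [hop] at hzero
    refine integral_mul_eq_zero_of_convolution_small (v := v) (m := m) (κ := κ)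
      (K := K * (δ ^ (dim E + 1))⁻¹) hC hκ (by positivity) hu
      (continuous_spaceTimeWeight a b δ).measurable hv0 huv (fun p => (hconv δ hδ p).1)
      (fun p => (hconv δ hδ p).2) f.continuous.measurable hfv hkm hkv ?_ hzero
    have : κ * (K * (δ ^ (dim E + 1))⁻¹) = Θ δ * K := by
      simp only [κ]
      field_simp
    rwa [this]

end Operator

section Solutions

open SchwartzMap

lemma setIntegral_Ioi_comp_add {F : Type*} [NormedAddCommGroup F] [NormedSpace ℝ F]
    (φ : ℝ → F) (t : ℝ) : ∫ τ in Ioi t, φ τ = ∫ τ in Ioi (0 : ℝ), φ (t + τ) := by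
  have h := (measurePreserving_add_left (volume : Measure ℝ) t).setIntegral_preimage_emb
    (measurableEmbedding_addLeft t) φ (Ioi t)
  rw [← h]
  simp

variable {n : ℕ}

local notation "𝔼" => EuclideanSpace ℝ (Fin n)

lemma marchaudRight_comp_clm (L : ℂ →L[ℝ] ℝ) (f : 𝔼 × ℝ → ℂ) (α : ℝ) (z : 𝔼 × ℝ) (x : 𝔼) (t : ℝ)
    (hf : IntegrableOn (timeDifference (1 + α) f ((x, t) - z)) (Ioi 0)) :
    marchaudRight α (fun p => L (f (p - z))) x t
      = Calpha α * L (∫ τ in Ioi (0 : ℝ), timeDifference (1 + α) f ((x, t) - z) τ) := by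
  rw [marchaudRight, setIntegral_Ioi_comp_add, ← L.integral_comp_comm hf]
  congr 1
  refine integral_congr_ae (.of_forall fun τ => ?_)
  simp only [timeDifference]
  rw [add_sub_cancel_left, div_eq_inv_mul, div_eq_inv_mul, ← Complex.ofReal_inv,
    ← Complex.real_smul, map_smul, map_sub, smul_eq_mul,
    show ((x, t) - z : 𝔼 × ℝ).2 + τ = t + τ - z.2 by simp; ring]
  rfl

lemma fracLap_comp_clm (L : ℂ →L[ℝ] ℝ) (f : 𝔼 × ℝ → ℂ) (s : ℝ) (z : 𝔼 × ℝ) (x : 𝔼) (t : ℝ)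
    (hf : Integrable (spaceDifference (n + 2 * s) f ((x, t) - z))) :
    fracLap s (fun p => L (f (p - z))) x t
      = Cns n s / 2 * L (∫ y, spaceDifference (n + 2 * s) f ((x, t) - z) y) := by
  rw [fracLap, ← L.integral_comp_comm hf]
  congr 1
  refine integral_congr_ae (.of_forall fun y => ?_)
  simp only [spaceDifference]
  rw [div_eq_inv_mul, div_eq_inv_mul, ← Complex.ofReal_inv,
    ← Complex.real_smul, map_smul, map_sub, map_sub, smul_eq_mul,
    show (2 : ℂ) = ((2 : ℝ) : ℂ) by simp, ← Complex.real_smul, map_smul, smul_eq_mul,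
    show ((x, t) - z : 𝔼 × ℝ).1 + y = x + y - z.1 by simp; abel,
    show ((x, t) - z : 𝔼 × ℝ).1 - y = x - y - z.1 by simp; abel]
  rfl

lemma Calpha_pos {α : ℝ} (hα0 : 0 < α) (hα1 : α < 1) : 0 < Calpha α := by
  refine one_div_pos.2 (abs_pos.2 (Real.Gamma_ne_zero fun m hm => ?_))
  have h1 : (0 : ℝ) < m := by linarith
  have h2 : (m : ℝ) < 1 := by linarith
  have h3 : 0 < m := by exact_mod_cast h1
  have h4 : m < 1 := by exact_mod_cast h2
  omega

lemma Cns_pos (n : ℕ) {s : ℝ} (hs0 : 0 < s) (hs1 : s < 1) : 0 < Cns n s := by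
  have h1 := one_div_pos.1 (Calpha_pos hs0 hs1)
  have h2 : 0 < Real.Gamma ((n : ℝ) / 2 + s) := Real.Gamma_pos_of_pos (by positivity)
  unfold Cns
  positivity

/-- Near each nonzero frequency there is a scale such that a distributional solution annihilates
every Schwartz function reproduced by the corresponding frequency cutoff. -/
theorem exists_scale_integral_eq_zero (hn : 2 ≤ n) {α s : ℝ} (hα0 : 0 < α) (hα1 : α < 1)
    (hs0 : 0 < s) (hs1 : s < 1) {u : 𝔼 × ℝ → ℝ} (hu : AEStronglyMeasurable u)
    (hu_space : Integrable (fun p : 𝔼 × ℝ =>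
      |u p| / ((1 + ‖p.1‖ ^ ((n : ℝ) + 2 * s)) * (1 + |p.2| ^ (1 + α)))))
    (hu_sol : ∀ φ : 𝓢(𝔼 × ℝ, ℝ), ∫ t : ℝ, ∫ x : 𝔼,
        u (x, t) * (marchaudRight α (⇑φ) x t + fracLap s (⇑φ) x t) = 0)
    (g : 𝓢(𝔼, ℂ)) (h : 𝓢(ℝ, ℂ)) {p₀ : 𝔼 × ℝ} (hp₀ : p₀ ≠ 0) :
    ∃ δ : ℝ, 0 < δ ∧ ∀ f : 𝓢(𝔼 × ℝ, ℂ),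
      (∀ z : 𝔼 × ℝ, f z = ∫ q : 𝔼 × ℝ, modulatedDilation g p₀.1 δ (z.1 - q.1) *
        modulatedDilation h p₀.2 δ (z.2 - q.2) * f q) → ∫ y, u y * f y = 0 := by
  have : Nonempty (Fin n) := ⟨⟨0, by omega⟩⟩
  have hdim : Module.finrank ℝ 𝔼 = n := finrank_euclideanSpace_fin
  have hm : (Calpha α : ℂ) * timeSymbol (1 + α) p₀.2
      + ((Cns n s / 2 : ℝ) : ℂ) * spaceSymbol ((n : ℝ) + 2 * s) p₀.1 ≠ 0 := by
    intro h0
    have hre := congrArg Complex.re h0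
    rw [Complex.add_re, Complex.re_ofReal_mul, Complex.re_ofReal_mul, Complex.ofReal_re,
      Complex.zero_re] at hre
    have c1 := Calpha_pos hα0 hα1
    have c2 := Cns_pos n hs0 hs1
    have t0 := re_timeSymbol_nonneg (b := 1 + α) (by linarith) (by linarith) p₀.2
    have s0 := spaceSymbol_nonneg ((n : ℝ) + 2 * s) p₀.1
    by_cases hξ : p₀.1 = 0
    · have hρ : p₀.2 ≠ 0 := fun hρ => hp₀ (Prod.ext hξ hρ)
      have := re_timeSymbol_pos (b := 1 + α) (by linarith) (by linarith) hρ
      have := mul_pos c1 this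
      have := mul_nonneg (half_pos c2).le s0
      linarith
    · have := spaceSymbol_pos (a := (n : ℝ) + 2 * s) (by rw [hdim]; linarith)
        (by rw [hdim]; linarith) hξ
      have := mul_pos (half_pos c2) this
      have := mul_nonneg c1.le t0
      linarith
  obtain ⟨δ, hδ, H⟩ := exists_scale_annihilates hu hs0 hs1 hα0 hα1 (by rw [hdim]) rfl hu_space
    g h p₀.1 p₀.2 _ _ hm
  refine ⟨δ, hδ, fun f hf => ?_⟩
  obtain ⟨hS, hT, hi, hz⟩ := H f hf
  refine hz fun z => ?_
  have key : ∀ L : ℂ →L[ℝ] ℝ, L (∫ y, u y * spaceTimeOperator ((n : ℝ) + 2 * s) (1 + α)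
      (Calpha α) (Cns n s / 2) f (y - z)) = 0 := fun L => by
    have h1 := L.integrable_comp (hi z)
    rw [← L.integral_comp_comm (hi z), Measure.volume_eq_prod]
    rw [Measure.volume_eq_prod] at h1
    rw [integral_prod_symm _ h1]
    rw [← hu_sol ((f.compSubConstCLM ℝ z).postcompCLM L)]
    refine integral_congr_ae (.of_forall fun t => integral_congr_ae (.of_forall fun x => ?_))
    have e1 := marchaudRight_comp_clm L f α z x t (hT _)
    have e2 := fracLap_comp_clm L f s z x t (hS _)
    change _ = u (x, t) * (marchaudRight α (fun p => L (f (p - z))) x t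
      + fracLap s (fun p => L (f (p - z))) x t)
    simp only
    rw [e1, e2, spaceTimeOperator, ← Complex.real_smul, ← Complex.real_smul, ← Complex.real_smul,
      map_smul, map_add, map_smul, map_smul]
    rfl
  exact Complex.ext (key Complex.reCLM) (key Complex.imCLM)

end Solutions

section FrequencyCutoff

open SchwartzMap Complex
open scoped FourierTransform RealInnerProductSpace

local notation "dim" => Module.finrank ℝ

variable {E : Type*} [NormedAddCommGroup E] [InnerProductSpace ℝ E] [FiniteDimensional ℝ E]
  [MeasurableSpace E] [BorelSpace E]

variable (E) in
/-- There is a Schwartz function whose Fourier transform is `1` on the unit ball. -/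
lemma exists_schwartz_integral_cexp_mul_eq_one : ∃ g : 𝓢(E, ℂ), ∀ η : E, ‖η‖ ≤ 1 →
    ∫ x, cexp (I * (⟪η, x⟫ : ℝ)) * g x = 1 := by
  let β : ContDiffBump (0 : E) := ⟨1, 2, one_pos, one_lt_two⟩
  let φ : 𝓢(E, ℂ) := (β.hasCompactSupport.comp_left (g := ((↑) : ℝ → ℂ)) rfl).toSchwartzMap
    (Complex.ofRealCLM.contDiff.comp β.contDiff)
  refine ⟨𝓕 φ, fun η hη => ?_⟩
  let w : E := (2 * Real.pi)⁻¹ • η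
  have hpi : (1 : ℝ) ≤ 2 * Real.pi := by linarith [Real.pi_gt_three]
  have hw : φ w = 1 := by
    have : β w = 1 := β.one_of_mem_closedBall (by
      rw [mem_closedBall_zero_iff, norm_smul, norm_inv, Real.norm_of_nonneg (by positivity)]
      exact mul_le_one₀ (inv_le_one_of_one_le₀ hpi) (norm_nonneg _) hη)
    change ((β w : ℝ) : ℂ) = 1
    rw [this, ofReal_one]
  have hinv : 𝓕⁻ (𝓕 φ) w = 1 := by rw [FourierTransform.fourierInv_fourier_eq, hw]
  rw [fourierInv_coe, Real.fourierInv_eq'] at hinv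
  rw [← hinv]
  refine integral_congr_ae (.of_forall fun x => ?_)
  simp only [w, inner_smul_right, smul_eq_mul]
  rw [mul_inv_cancel_left₀ (by positivity), real_inner_comm, mul_comm I]

lemma integral_modulatedDilation_mul_cexp {g : E → ℂ}
    (hg : ∀ η : E, ‖η‖ ≤ 1 → ∫ x, cexp (I * (⟪η, x⟫ : ℝ)) * g x = 1) {δ : ℝ} (hδ : 0 < δ)
    {ξ₀ ξ : E} (hξ : ‖ξ - ξ₀‖ ≤ δ) :
    ∫ x, modulatedDilation g ξ₀ δ x * cexp (I * (⟪ξ, x⟫ : ℝ)) = 1 := by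
  have hη : ‖δ⁻¹ • (ξ - ξ₀)‖ ≤ 1 := by
    rw [norm_smul, norm_inv, Real.norm_of_nonneg hδ.le, inv_mul_le_iff₀ hδ, mul_one]
    exact hξ
  have h1 : ∀ x, modulatedDilation g ξ₀ δ x * cexp (I * (⟪ξ, x⟫ : ℝ)) = (δ ^ dim E : ℝ) *
      (cexp (I * (⟪δ⁻¹ • (ξ - ξ₀), δ • x⟫ : ℝ)) * g (δ • x)) := fun x => by
    rw [real_inner_smul_left, real_inner_smul_right, inv_mul_cancel_left₀ hδ.ne', inner_sub_left,
      modulatedDilation, show I * ((⟪ξ, x⟫ - ⟪ξ₀, x⟫ : ℝ) : ℂ) = I * (⟪ξ, x⟫ : ℝ) +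
        -(I * (⟪ξ₀, x⟫ : ℝ)) by push_cast; ring, Complex.exp_add]
    ring
  simp_rw [h1]
  rw [integral_const_mul, Measure.integral_comp_smul volume
    (fun x => cexp (I * (⟪δ⁻¹ • (ξ - ξ₀), x⟫ : ℝ)) * g x) δ, hg _ hη,
    abs_of_pos (by positivity), Complex.real_smul, mul_one, ← Complex.ofReal_mul,
    mul_inv_cancel₀ (by positivity), Complex.ofReal_one]

lemma integrable_modulatedDilation (g : 𝓢(E, ℂ)) (ξ : E) {δ : ℝ} (hδ : 0 < δ) :
    Integrable (modulatedDilation g ξ δ) := by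
  refine ((g.integrable.comp_smul hδ.ne').norm.const_mul (δ ^ dim E)).mono'
    (continuous_modulatedDilation g.continuous ξ δ).aestronglyMeasurable (.of_forall fun x => ?_)
  rw [norm_modulatedDilation _ _ hδ]

/-- The unnormalized Fourier transform on space-time. -/
noncomputable def spaceTimeFourier (ψ : E × ℝ → ℂ) (z : E × ℝ) : ℂ :=
  ∫ p : E × ℝ, cexp (-(I * ((⟪p.1, z.1⟫ + p.2 * z.2 : ℝ) : ℂ))) * ψ p

lemma spaceTimeFourier_eq_convolution {g : 𝓢(E, ℂ)} {h : 𝓢(ℝ, ℂ)}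
    (hg : ∀ η : E, ‖η‖ ≤ 1 → ∫ x, cexp (I * (⟪η, x⟫ : ℝ)) * g x = 1)
    (hh : ∀ η : ℝ, ‖η‖ ≤ 1 → ∫ x, cexp (I * (⟪η, x⟫ : ℝ)) * h x = 1) {δ : ℝ} (hδ : 0 < δ)
    {p₀ : E × ℝ} {ψ : E × ℝ → ℂ} (hψ : Integrable ψ)
    (hsupp : ∀ p, ψ p ≠ 0 → ‖p.1 - p₀.1‖ ≤ δ ∧ ‖p.2 - p₀.2‖ ≤ δ) (z : E × ℝ) :
    spaceTimeFourier ψ z = ∫ q : E × ℝ, modulatedDilation g p₀.1 δ (z.1 - q.1) *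
        modulatedDilation h p₀.2 δ (z.2 - q.2) * spaceTimeFourier ψ q := by
  set A := modulatedDilation g p₀.1 δ with hA
  set B := modulatedDilation h p₀.2 δ with hB
  have hG : Integrable (fun q : E × ℝ => A q.1 * B q.2) :=
    (integrable_modulatedDilation g p₀.1 hδ).mul_prod (integrable_modulatedDilation h p₀.2 hδ)
  have hsub : ∫ q : E × ℝ, A (z.1 - q.1) * B (z.2 - q.2) * spaceTimeFourier ψ q
      = ∫ q : E × ℝ, A q.1 * B q.2 * spaceTimeFourier ψ (z - q) := by
    rw [← integral_sub_left_eq_self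
      (fun q : E × ℝ => A q.1 * B q.2 * spaceTimeFourier ψ (z - q)) volume z]
    simp
  rw [hsub]
  let F : E × ℝ → E × ℝ → ℂ := fun q p => A q.1 * B q.2 *
    (cexp (-(I * ((⟪p.1, (z - q).1⟫ + p.2 * (z - q).2 : ℝ) : ℂ))) * ψ p)
  have hF : Integrable (Function.uncurry F) (volume.prod volume) := by
    have h0 := hG.mul_prod hψ
    refine h0.mono ?_ (.of_forall fun r => ?_)
    · refine AEStronglyMeasurable.mul hG.1.comp_fst (AEStronglyMeasurable.mul ?_ hψ.1.comp_snd)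
      exact Continuous.aestronglyMeasurable (by fun_prop)
    · simp only [Function.uncurry, F, norm_mul, norm_cexp_neg_I_mul, one_mul]
      exact le_rfl
  calc spaceTimeFourier ψ z = ∫ p, ∫ q, F q p := by
        refine integral_congr_ae (.of_forall fun p => ?_)
        by_cases hp : ψ p = 0
        · simp [F, hp]
        obtain ⟨hp1, hp2⟩ := hsupp p hp
        have e1 := integral_modulatedDilation_mul_cexp hg hδ hp1
        have e2 := integral_modulatedDilation_mul_cexp hh hδ hp2
        have e3 : ∀ q, F q p = (A q.1 * cexp (I * (⟪p.1, q.1⟫ : ℝ))) *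
            (B q.2 * cexp (I * (⟪p.2, q.2⟫ : ℝ))) *
            (cexp (-(I * ((⟪p.1, z.1⟫ + p.2 * z.2 : ℝ) : ℂ))) * ψ p) := fun q => by
          have : cexp (-(I * ((⟪p.1, (z - q).1⟫ + p.2 * (z - q).2 : ℝ) : ℂ)))
              = cexp (I * (⟪p.1, q.1⟫ : ℝ)) * cexp (I * (⟪p.2, q.2⟫ : ℝ)) *
                cexp (-(I * ((⟪p.1, z.1⟫ + p.2 * z.2 : ℝ) : ℂ))) := by
            rw [← Complex.exp_add, ← Complex.exp_add, Prod.fst_sub, Prod.snd_sub, inner_sub_right,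
              show (⟪p.2, q.2⟫ : ℝ) = p.2 * q.2 by simp [mul_comm]]
            congr 1
            push_cast
            ring
          simp only [F]
          rw [this]
          ring
        simp_rw [e3]
        rw [integral_mul_const, Measure.volume_eq_prod, integral_prod_mul
          (fun x => A x * cexp (I * (⟪p.1, x⟫ : ℝ))) (fun t => B t * cexp (I * (⟪p.2, t⟫ : ℝ))),
          hA, hB, e1, e2, one_mul, one_mul]
    _ = ∫ q, ∫ p, F q p := (integral_integral_swap hF).symm
    _ = _ := by
        refine integral_congr_ae (.of_forall fun q => ?_)
        simp only [F]
        rw [integral_const_mul]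
        rfl

lemma exists_schwartz_eq_spaceTimeFourier {ψ : E × ℝ → ℂ} (hψ : ContDiff ℝ (⊤ : ℕ∞) ψ)
    (hc : HasCompactSupport ψ) : ∃ f : 𝓢(E × ℝ, ℂ), ⇑f = spaceTimeFourier ψ := by
  let e : WithLp 2 (E × ℝ) ≃L[ℝ] E × ℝ := WithLp.prodContinuousLinearEquiv 2 ℝ E ℝ
  let φ : 𝓢(WithLp 2 (E × ℝ), ℂ) :=
    compCLMOfContinuousLinearEquiv ℝ e (hc.toSchwartzMap hψ)
  have hpi : (2 * Real.pi)⁻¹ ≠ 0 := by positivity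
  let d : (E × ℝ) ≃L[ℝ] WithLp 2 (E × ℝ) :=
    (ContinuousLinearEquiv.smulLeft (Units.mk0 _ hpi)).trans e.symm
  refine ⟨compCLMOfContinuousLinearEquiv ℝ d (𝓕 φ), funext fun z => ?_⟩
  rw [compCLMOfContinuousLinearEquiv_apply, Function.comp_apply, fourier_coe, Real.fourier_eq',
    spaceTimeFourier, ← (WithLp.volume_preserving_ofLp E ℝ).integral_comp
      (MeasurableEquiv.toLp 2 (E × ℝ)).symm.measurableEmbedding]
  refine integral_congr_ae (.of_forall fun w => ?_)
  have hd : d z = WithLp.toLp 2 ((2 * Real.pi)⁻¹ • z) := rfl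
  have hφ : φ w = ψ w.ofLp := rfl
  simp only [hd, hφ, WithLp.prod_inner_apply, Prod.smul_fst, Prod.smul_snd, inner_smul_right,
    smul_eq_mul]
  congr 2
  have : (-2 * Real.pi * ((2 * Real.pi)⁻¹ * ⟪w.ofLp.1, z.1⟫ + ⟪w.ofLp.2, (2 * Real.pi)⁻¹ * z.2⟫))
      = -(⟪w.ofLp.1, z.1⟫ + w.ofLp.2 * z.2) := by
    simp
    field_simp
    ring
  rw [this]
  push_cast
  ring

end FrequencyCutoff

section FourierSupport

open SchwartzMap
open scoped Manifold ContDiff RealInnerProductSpace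

variable {n : ℕ}

local notation "𝔼" => EuclideanSpace ℝ (Fin n)

lemma conj_fourierInv (ψ : 𝔼 × ℝ → ℂ) (x : 𝔼) (t : ℝ) :
    starRingEnd ℂ (fourierInv ψ x t) = (((2 * Real.pi) ^ (-(((n : ℝ) + 1) / 2)) : ℝ) : ℂ) *
      spaceTimeFourier (fun p => starRingEnd ℂ (ψ p)) (x, t) := by
  rw [fourierInv, map_mul, Complex.conj_ofReal, ← integral_conj, spaceTimeFourier]
  congr 1
  refine integral_congr_ae (.of_forall fun p => ?_)
  simp only [map_mul, ← Complex.exp_conj, map_add, Complex.conj_I, Complex.conj_ofReal]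
  push_cast
  ring_nf

lemma integrable_mul_schwartz {E : Type*} [NormedAddCommGroup E] [InnerProductSpace ℝ E]
    [FiniteDimensional ℝ E] [MeasurableSpace E] [BorelSpace E] {u : E × ℝ → ℝ}
    (hu : AEStronglyMeasurable u) {a b : ℝ} (ha : 0 ≤ a) (hb : 0 ≤ b)
    (hui : Integrable fun p : E × ℝ => |u p| / ((1 + ‖p.1‖ ^ a) * (1 + |p.2| ^ b)))
    (f : 𝓢(E × ℝ, ℂ)) : Integrable fun y => (u y : ℂ) * f y := by
  obtain ⟨C, -, hC⟩ := f.exists_norm_le_spaceTimeWeight ha hb one_pos le_rfl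
  have h := integrable_mul_spaceTimeWeight hu ha hb one_pos le_rfl hui 0
  refine (h.norm.const_mul C).mono'
    ((Complex.continuous_ofReal.comp_aestronglyMeasurable hu).mul
      f.continuous.aestronglyMeasurable) (.of_forall fun y => ?_)
  rw [norm_mul, norm_mul, Complex.norm_real, sub_zero,
    Real.norm_of_nonneg (spaceTimeWeight_pos _ _ _ _).le]
  calc ‖u y‖ * ‖f y‖ ≤ ‖u y‖ * (C * spaceTimeWeight a b 1 y) := by gcongr; exact hC y
    _ = _ := by ring

/-- A smooth compactly supported function is a finite sum of such functions, each supported in one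
of the sets of a given open cover. -/
lemma exists_sum_eq_of_tsupport_subset {V ι : Type*} [NormedAddCommGroup V] [NormedSpace ℝ V]
    [FiniteDimensional ℝ V] {ψ : V → ℂ} (hψ : ContDiff ℝ (⊤ : ℕ∞) ψ) (hc : HasCompactSupport ψ)
    {U : ι → Set V} (hU : ∀ i, IsOpen (U i)) (hcover : tsupport ψ ⊆ ⋃ i, U i) :
    ∃ (T : Finset ι) (χ : T → V → ℂ), ψ = ∑ i, χ i ∧ ∀ i, ContDiff ℝ (⊤ : ℕ∞) (χ i) ∧
      HasCompactSupport (χ i) ∧ Function.support (χ i) ⊆ U i := by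
  obtain ⟨T, hT⟩ := hc.isCompact.elim_finite_subcover U hU hcover
  obtain ⟨ρ, hρ⟩ := SmoothPartitionOfUnity.exists_isSubordinate 𝓘(ℝ, V) (isClosed_tsupport ψ)
    (fun i : T => U i) (fun i => hU i) (by simpa [iUnion_subtype] using hT)
  refine ⟨T, fun i x => (ρ i x : ℂ) * ψ x, funext fun x => ?_, fun i => ⟨?_, ?_, ?_⟩⟩
  · rw [Finset.sum_apply, ← Finset.sum_mul, ← Complex.ofReal_sum]
    by_cases hx : ψ x = 0
    · rw [hx, mul_zero]
    · have := ρ.sum_eq_one (subset_tsupport ψ hx)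
      rw [finsum_eq_sum_of_fintype] at this
      rw [this, Complex.ofReal_one, one_mul]
  · exact (Complex.ofRealCLM.contDiff.comp (ρ i).contMDiff.contDiff).mul hψ
  · exact hc.mul_left
  · intro x hx
    refine hρ i (subset_tsupport _ fun h => hx ?_)
    change (ρ i x : ℂ) * ψ x = 0
    rw [h, Complex.ofReal_zero, zero_mul]

lemma spaceTimeFourier_sum {E ι : Type*} [NormedAddCommGroup E] [InnerProductSpace ℝ E]
    [FiniteDimensional ℝ E] [MeasurableSpace E] [BorelSpace E] [Fintype ι] {χ : ι → E × ℝ → ℂ}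
    (hχ : ∀ i, Integrable (χ i)) (z : E × ℝ) :
    spaceTimeFourier (∑ i, χ i) z = ∑ i, spaceTimeFourier (χ i) z := by
  simp only [spaceTimeFourier, Finset.sum_apply, Finset.mul_sum]
  refine integral_finsetSum _ fun i _ => (hχ i).mono
    (AEStronglyMeasurable.mul (Continuous.aestronglyMeasurable (by fun_prop)) (hχ i).1)
    (.of_forall fun p => ?_)
  rw [norm_mul, norm_cexp_neg_I_mul, one_mul]

end FourierSupport

/-- the Fourier transform of a distributional solution
`u ∈ 𝓛_{2s,α}(ℝⁿ×ℝ)` of `∂_t^α u + (-Δ)^s u = 0` is supported at the origin: for every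
smooth compactly supported `ψ` whose support avoids `(0,0)`,
`∫_ℝ ∫_{ℝⁿ} u(x,t)·conj(𝓕⁻¹ψ(x,t)) dx dt = 0`. -/
theorem fourier_support_at_origin
    (n : ℕ) (hn : 2 ≤ n) (α s : ℝ) (hα0 : 0 < α) (hα1 : α < 1)
    (hs0 : 0 < s) (hs1 : s < 1)
    (u : EuclideanSpace ℝ (Fin n) × ℝ → ℝ)
    (hu_loc : LocallyIntegrable u)
    (hu_space : Integrable (fun p : EuclideanSpace ℝ (Fin n) × ℝ =>
      |u p| / ((1 + ‖p.1‖ ^ ((n : ℝ) + 2 * s)) * (1 + |p.2| ^ (1 + α)))))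
    (hu_sol : ∀ φ : SchwartzMap (EuclideanSpace ℝ (Fin n) × ℝ) ℝ,
      ∫ t : ℝ, ∫ x : EuclideanSpace ℝ (Fin n),
        u (x, t) * (marchaudRight α (⇑φ) x t + fracLap s (⇑φ) x t) = 0) :
    ∀ ψ : EuclideanSpace ℝ (Fin n) × ℝ → ℂ,
      ContDiff ℝ (⊤ : ℕ∞) ψ → HasCompactSupport ψ →
      (0 : EuclideanSpace ℝ (Fin n) × ℝ) ∉ tsupport ψ →
      ∫ t : ℝ, ∫ x : EuclideanSpace ℝ (Fin n),
        (u (x, t) : ℂ) * starRingEnd ℂ (fourierInv ψ x t) = 0 := by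
  intro ψ hψ hc h0
  have hu := hu_loc.aestronglyMeasurable
  have ha : 0 ≤ (n : ℝ) + 2 * s := by positivity
  have hb : 0 ≤ 1 + α := by positivity
  obtain ⟨g, hg⟩ := exists_schwartz_integral_cexp_mul_eq_one (EuclideanSpace ℝ (Fin n))
  obtain ⟨h, hh⟩ := exists_schwartz_integral_cexp_mul_eq_one ℝ
  choose δ hδ H using fun p : {p : EuclideanSpace ℝ (Fin n) × ℝ // p ≠ 0} =>
    exists_scale_integral_eq_zero hn hα0 hα1 hs0 hs1 hu hu_space hu_sol g h p.2
  let ψ' : EuclideanSpace ℝ (Fin n) × ℝ → ℂ := fun p => starRingEnd ℂ (ψ p)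
  have hψ' : ContDiff ℝ (⊤ : ℕ∞) ψ' := Complex.conjCLE.contDiff.comp hψ
  have hc' : HasCompactSupport ψ' := hc.comp_left (map_zero _)
  have hcover : tsupport ψ' ⊆ ⋃ p, Metric.ball p.1 (δ p) := fun p hp => by
    have hp0 : p ≠ 0 := by
      rintro rfl
      exact h0 (closure_mono (Function.support_comp_subset (map_zero (starRingEnd ℂ)) ψ) hp)
    exact mem_iUnion.2 ⟨⟨p, hp0⟩, Metric.mem_ball_self (hδ _)⟩
  obtain ⟨T, χ, hsum, hχ⟩ :=
    exists_sum_eq_of_tsupport_subset hψ' hc' (fun p => Metric.isOpen_ball) hcover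
  have hχi : ∀ i, Integrable (χ i) := fun i =>
    (hχ i).1.continuous.integrable_of_hasCompactSupport (hχ i).2.1
  choose f hf using fun i => exists_schwartz_eq_spaceTimeFourier (hχ i).1 (hχ i).2.1
  have hf0 : ∀ i, ∫ y, (u y : ℂ) * f i y = 0 := fun i => by
    refine H i (f i) fun z => ?_
    rw [hf i]
    refine spaceTimeFourier_eq_convolution hg hh (hδ i) (hχi i) (fun p hp => ?_) z
    have hp := mem_ball_iff_norm.1 ((hχ i).2.2 hp)
    exact ⟨(norm_fst_le (p - i.1.1)).trans hp.le, (norm_snd_le (p - i.1.1)).trans hp.le⟩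
  have hfi : ∀ i, Integrable fun y => (u y : ℂ) * f i y := fun i =>
    integrable_mul_schwartz hu ha hb hu_space (f i)
  have hψf : ∀ z, spaceTimeFourier ψ' z = ∑ i, f i z := fun z => by
    simp_rw [hf]
    rw [hsum, spaceTimeFourier_sum hχi]
  have hprod : ∫ y, ∑ i, (u y : ℂ) * f i y = 0 := by
    rw [integral_finsetSum _ fun i _ => hfi i]
    exact Finset.sum_eq_zero fun i _ => hf0 i
  have h_int : Integrable fun y => ∑ i, (u y : ℂ) * f i y :=
    integrable_finsetSum _ fun i _ => hfi i
  rw [Measure.volume_eq_prod] at hprod h_int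
  rw [integral_prod_symm _ h_int] at hprod
  simp_rw [conj_fourierInv, mul_left_comm (u _ : ℂ), integral_const_mul]
  refine mul_eq_zero_of_right _ ?_
  rw [← hprod]
  refine integral_congr_ae (.of_forall fun t => integral_congr_ae (.of_forall fun x => ?_))
  simp only
  rw [← Finset.mul_sum, ← hψf]
end

section
/- Let 0 < α < 1, let R > 0 and T > −R be real numbers, and let w : ℝ → ℝ be measurable, continuous on [−R, T], with w(τ) ≥ 0 for all τ ≤ −R. Assume that for every s ∈ (−R, T] the integral ∫_{−∞}^s (w(s) − w(τ))/(s−τ)^{1+α} dτ converges absolutely and equals 0. Then w(s) ≥ 0 for all s ∈ (−R, T]. -/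
open MeasureTheory Set

/-- maximum principle for the left Marchaud derivative. If `w` is
measurable, continuous on `[-R,T]`, nonnegative on `(-∞,-R]`, and
`∫_{-∞}^s (w(s)-w(τ))/(s-τ)^{1+α} dτ` converges absolutely and vanishes for every
`s ∈ (-R,T]`, then `w ≥ 0` on `(-R,T]`. -/
theorem marchaud_maximum_principle
    (α : ℝ) (hα0 : 0 < α) (hα1 : α < 1)
    (R T : ℝ) (hR : 0 < R) (hT : -R < T)
    (w : ℝ → ℝ) (hw_meas : Measurable w)
    (hw_cont : ContinuousOn w (Icc (-R) T))
    (hw_nonneg : ∀ τ : ℝ, τ ≤ -R → 0 ≤ w τ)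
    (hw_eq : ∀ s ∈ Ioc (-R) T,
      IntegrableOn (fun τ : ℝ => (w s - w τ) / (s - τ) ^ (1 + α)) (Iio s) ∧
      ∫ τ in Iio s, (w s - w τ) / (s - τ) ^ (1 + α) = 0) :
    ∀ s ∈ Ioc (-R) T, 0 ≤ w s := by
  by_contra! hneg
  obtain ⟨s, hs, hws⟩ := hneg
  obtain ⟨m, hm, hmin⟩ := isCompact_Icc.exists_isMinOn (nonempty_Icc.mpr hT.le) hw_cont
  have hwm : w m < 0 := (hmin (Ioc_subset_Icc_self hs)).trans_lt hws
  have hRm : -R < m := by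
    by_contra! h
    exact absurd (hw_nonneg m h) hwm.not_ge
  obtain ⟨hint, hzero⟩ := hw_eq m ⟨hRm, hm.2⟩
  have hle : ∀ τ < m, w m ≤ w τ := by
    intro τ hτ
    rcases le_total τ (-R) with h | h
    · exact hwm.le.trans (hw_nonneg τ h)
    · exact hmin ⟨h, hτ.le.trans hm.2⟩
  have hpos : 0 < ∫ τ in Iio m, -((w m - w τ) / (m - τ) ^ (1 + α)) := by
    refine (setIntegral_pos_iff_support_of_nonneg_ae ?_ hint.neg).mpr ?_
    rotate_left
    · refine lt_of_lt_of_le (b := volume (Iio (-R))) (by simp) (measure_mono fun τ hτ => ?_)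
      have hτm : τ < m := lt_trans hτ hRm
      have hw : w m - w τ < 0 := sub_neg.mpr (hwm.trans_le (hw_nonneg τ (le_of_lt hτ)))
      have hk : 0 < (m - τ) ^ (1 + α) := Real.rpow_pos_of_pos (sub_pos.mpr hτm) _
      exact ⟨(neg_pos.mpr (div_neg_of_neg_of_pos hw hk)).ne', hτm⟩
    · filter_upwards [ae_restrict_mem measurableSet_Iio] with τ hτ
      exact neg_nonneg.mpr (div_nonpos_of_nonpos_of_nonneg (sub_nonpos.mpr (hle τ hτ))
        (Real.rpow_nonneg (sub_nonneg.mpr (le_of_lt hτ)) _))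
  rw [integral_neg, hzero, neg_zero] at hpos
  exact lt_irrefl 0 hpos
end
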